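/- Let A be a unital prime AF-algebra, 𝔄 = ⊗_{n=−∞}^{∞} A the two-sided infinite (minimal) tensor product of copies of A, and α the shift automorphism of 𝔄. Then the α-invariant pure states of 𝔄 are weak*-dense in the set of α-invariant states of 𝔄. -/

import Mathlib

open scoped ComplexOrder

/-- A state on a C*-algebra: a positive linear functional of norm one. -/
def IsState {A : Type*} [CStarAlgebra A] (φ : A →L[ℂ] ℂ) : Prop :=
  (∀ x : A, 0 ≤ φ (star x * x)) ∧ ‖φ‖ = 1

/-- A pure state: an extreme point of the state space. -/
def IsPureState {A : Type*} [CStarAlgebra A] (φ : A →L[ℂ] ℂ) : Prop :=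
  IsState φ ∧ ∀ (ψ₁ ψ₂ : A →L[ℂ] ℂ) (t : ℝ), IsState ψ₁ → IsState ψ₂ →
    0 < t → t < 1 → φ = t • ψ₁ + (1 - t) • ψ₂ → ψ₁ = φ ∧ ψ₂ = φ

/-- A prime C*-algebra: any two nonzero closed two-sided ideals have nonzero intersection. -/
def IsPrimeCStar (A : Type*) [CStarAlgebra A] : Prop :=
  ∀ I J : TwoSidedIdeal A, IsClosed (I : Set A) → IsClosed (J : Set A) →
    I ≠ ⊥ → J ≠ ⊥ → I ⊓ J ≠ ⊥

/-- An AF-algebra: the norm closure of an increasing union of finite-dimensional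
C*-subalgebras. -/
def IsAF (A : Type*) [CStarAlgebra A] : Prop :=
  ∃ S : ℕ → StarSubalgebra ℂ A, Monotone S ∧ (∀ n, FiniteDimensional ℂ (S n)) ∧
    Dense (⋃ n, (S n : Set A))

/-- A model of the two-sided infinite *minimal* tensor product `⊗_{n=-∞}^∞ A` of copies of a
unital C*-algebra `A`, together with the shift automorphism.  It is presented by commuting
unital embeddings `e n : A → T`, `n ∈ ℤ`, with dense combined range; the existence of product
states and the fact that product states separate the positive cone single out the *minimal*
tensor product among all C*-algebras generated by commuting copies of `A`. -/
structure ShiftTensorModel (A : Type*) [CStarAlgebra A] (T : Type*) [CStarAlgebra T] where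
  e : ℤ → A →⋆ₐ[ℂ] T
  inj : ∀ n, Function.Injective (e n)
  commutes : ∀ m n : ℤ, m ≠ n → ∀ x y : A, e m x * e n y = e n y * e m x
  generating : (StarAlgebra.adjoin ℂ (⋃ n : ℤ, Set.range (e n))).topologicalClosure = ⊤
  shift : T ≃⋆ₐ[ℂ] T
  shift_apply : ∀ n x, shift (e n x) = e (n + 1) x
  prodState : ∀ φ : ℤ → (A →L[ℂ] ℂ), (∀ n, IsState (φ n)) →
    ∃ Φ : T →L[ℂ] ℂ, IsState Φ ∧ ∀ (l : List ℤ), l.Nodup → ∀ a : ℤ → A,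
      Φ ((l.map fun i => e i (a i)).prod) = (l.map fun i => φ i (a i)).prod
  minimality : ∀ w : T, (∃ y : T, w = star y * y) → w ≠ 0 →
    ∃ (φ : ℤ → (A →L[ℂ] ℂ)) (Φ : T →L[ℂ] ℂ), (∀ n, IsState (φ n)) ∧ IsState Φ ∧ Φ w ≠ 0 ∧
      ∀ (l : List ℤ), l.Nodup → ∀ a : ℤ → A,
        Φ ((l.map fun i => e i (a i)).prod) = (l.map fun i => φ i (a i)).prod

/-!
A prime AF-algebra has a state `ω` which is excised by projections `p m`, in the sense that `p m * a
* p m = ω a • p m` eventually, and whose vector states detect positivity. Both properties pass to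
the product state `Ω` with all factors equal to `ω`. By Hahn–Banach, a state is approximated on
finitely many local observables by a uniform mean of vector states of `Ω` given by local vectors `ξ
0, …, ξ (K - 1)`.

Put these vectors next to each other into a tile, behind a run of sites marked by a unit vector
orthogonal to the identity. The marks make the positions of the tiles recognizable: vectors that
belong to tilings with different cuts are orthogonal. Add up all tilings of `[a, b)` by tiles of two
consecutive lengths `R` and `R + 1`. Since these lengths are coprime, the renewal theorem shows that
the resulting vector states converge, as `[a, b)` exhausts `ℤ`, to a state that does not depend on
the cuts at `a` and `b` and is therefore translation invariant. Excising projections of a few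
tilings of a finite window compress every local observable almost to a scalar, which makes the limit
state pure. If the given state is translation invariant, the limit state is close to it, because a
window of fixed length at the origin lies inside one of the blocks `ξ k` with probability close to
one, and its position in the tile is uniformly distributed.

If `A` has no unit vector orthogonal to the identity in the GNS space of `ω`, then every state of
the tensor product is pure.
-/

/-! ### Positive functionals and states -/

section PositiveFunctional

open Filter Topology

variable {A : Type*} [CStarAlgebra A] {φ : A →L[ℂ] ℂ}

/-- Positivity of a functional, expressed on the squares `star x * x` since a `CStarAlgebra`
carries no order. -/
def IsPositiveFunctional (φ : A →L[ℂ] ℂ) : Prop := ∀ x : A, 0 ≤ φ (star x * x)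

/-- The squared seminorm of `x` in the GNS space of `φ`. -/
noncomputable def gnsNormSq (φ : A →L[ℂ] ℂ) (x : A) : ℝ := (φ (star x * x)).re

@[simp]
theorem gnsNormSq_one (φ : A →L[ℂ] ℂ) : gnsNormSq φ 1 = (φ 1).re := by simp [gnsNormSq]

theorem gnsNormSq_smul (φ : A →L[ℂ] ℂ) (c : ℂ) (x : A) :
    gnsNormSq φ (c • x) = ‖c‖ ^ 2 * gnsNormSq φ x := by
  rw [gnsNormSq, star_smul, smul_mul_smul_comm, map_smul, Complex.star_def, smul_eq_mul,
    Complex.conj_mul', gnsNormSq, ← Complex.ofReal_pow, Complex.re_ofReal_mul]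

theorem apply_star_sum_mul_sum {ι : Type*} (s : Finset ι) (φ : A →L[ℂ] ℂ) (a : A) (x : ι → A)
    (h : (s : Set ι).Pairwise fun i j => φ (star (x i) * (a * x j)) = 0) :
    φ (star (∑ i ∈ s, x i) * (a * ∑ i ∈ s, x i)) = ∑ i ∈ s, φ (star (x i) * (a * x i)) := by
  rw [star_sum, Finset.mul_sum, Finset.sum_mul_sum, map_sum]
  refine Finset.sum_congr rfl fun i hi => ?_
  rw [map_sum]
  exact Finset.sum_eq_single i (fun j hj hji => h hi hj hji.symm) fun hi' => absurd hi hi'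

namespace IsPositiveFunctional

section SpectralOrder

attribute [local instance] CStarAlgebra.spectralOrder CStarAlgebra.spectralOrderedRing

theorem apply_nonneg (h : IsPositiveFunctional φ) {x : A} (hx : 0 ≤ x) : 0 ≤ φ x := by
  obtain ⟨y, rfl⟩ := CStarAlgebra.nonneg_iff_eq_star_mul_self.mp hx
  exact h y

/-- A positive functional as a Mathlib `PositiveLinearMap` for the spectral order, which gives
access to the GNS inner product. -/
noncomputable def toPositiveLinearMap (h : IsPositiveFunctional φ) : A →ₚ[ℂ] ℂ :=
  PositiveLinearMap.mk₀ φ.toLinearMap fun _ => h.apply_nonneg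

theorem toPositiveLinearMap_apply (h : IsPositiveFunctional φ) (x : A) :
    h.toPositiveLinearMap x = φ x := rfl

theorem map_star (h : IsPositiveFunctional φ) (x : A) : φ (star x) = star (φ x) := by
  rw [← h.toPositiveLinearMap_apply, ← h.toPositiveLinearMap_apply]
  exact StarHomClass.map_star h.toPositiveLinearMap x

theorem norm_apply_star_mul_le (h : IsPositiveFunctional φ) (x y : A) :
    ‖φ (star x * y)‖ ≤ √(gnsNormSq φ x) * √(gnsNormSq φ y) := by
  have := norm_inner_le_norm (𝕜 := ℂ) (h.toPositiveLinearMap.toPreGNS x)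
    (h.toPositiveLinearMap.toPreGNS y)
  rwa [PositiveLinearMap.preGNS_inner_def, PositiveLinearMap.preGNS_norm_def,
    PositiveLinearMap.preGNS_norm_def] at this

theorem gnsNormSq_mul_le (h : IsPositiveFunctional φ) (x y : A) :
    gnsNormSq φ (x * y) ≤ ‖x‖ ^ 2 * gnsNormSq φ y := by
  have hconj : star y * star x * (x * y) ≤ ‖x‖ ^ 2 • star y * y := by
    rw [← mul_assoc, mul_assoc _ (star x), sq, ← CStarRing.norm_star_mul_self (x := x),
      smul_mul_assoc]
    exact CStarAlgebra.star_left_conjugate_le_norm_smul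
  have hφ := OrderHomClass.mono h.toPositiveLinearMap hconj
  rw [h.toPositiveLinearMap_apply, h.toPositiveLinearMap_apply, smul_mul_assoc,
    ← Complex.coe_smul, map_smul, Complex.le_def] at hφ
  simpa [gnsNormSq, ← Complex.ofReal_pow] using hφ.1

end SpectralOrder

theorem gnsNormSq_nonneg (h : IsPositiveFunctional φ) (x : A) : 0 ≤ gnsNormSq φ x :=
  (Complex.le_def.mp (h x)).1

theorem coe_gnsNormSq (h : IsPositiveFunctional φ) (x : A) :
    (gnsNormSq φ x : ℂ) = φ (star x * x) :=
  Complex.ext rfl (Complex.le_def.mp (h x)).2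

theorem norm_apply_star_mul_mul_le (h : IsPositiveFunctional φ) (a x y : A) :
    ‖φ (star x * (a * y))‖ ≤ ‖a‖ * √(gnsNormSq φ x) * √(gnsNormSq φ y) := by
  have ha : √(gnsNormSq φ (a * y)) ≤ ‖a‖ * √(gnsNormSq φ y) := by
    rw [← Real.sqrt_sq (norm_nonneg a), ← Real.sqrt_mul (by positivity)]
    exact Real.sqrt_le_sqrt (h.gnsNormSq_mul_le a y)
  calc ‖φ (star x * (a * y))‖ ≤ √(gnsNormSq φ x) * √(gnsNormSq φ (a * y)) :=
        h.norm_apply_star_mul_le x (a * y)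
    _ ≤ √(gnsNormSq φ x) * (‖a‖ * √(gnsNormSq φ y)) := by gcongr
    _ = ‖a‖ * √(gnsNormSq φ x) * √(gnsNormSq φ y) := by ring

theorem norm_apply_le (h : IsPositiveFunctional φ) (x : A) : ‖φ x‖ ≤ ‖x‖ * gnsNormSq φ 1 := by
  have hx := h.norm_apply_star_mul_mul_le x 1 1
  rwa [star_one, one_mul, mul_one, mul_assoc, Real.mul_self_sqrt (h.gnsNormSq_nonneg 1)] at hx

theorem gnsNormSq_add (h : IsPositiveFunctional φ) {x y : A} (hxy : φ (star x * y) = 0) :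
    gnsNormSq φ (x + y) = gnsNormSq φ x + gnsNormSq φ y := by
  have hyx : φ (star y * x) = 0 := by
    rw [← star_star (star y * x), h.map_star, star_mul, star_star, hxy, star_zero]
  simp only [gnsNormSq, star_add, add_mul, mul_add, map_add, hxy, hyx, add_zero, zero_add,
    Complex.add_re]

theorem norm_apply_star_add_mul_add_sub_le (h : IsPositiveFunctional φ) {x y : A}
    (hxy : φ (star x * y) = 0) (a : A) :
    ‖φ (star (x + y) * (a * (x + y))) - φ (star x * (a * x))‖ ≤
      2 * ‖a‖ * (√(gnsNormSq φ y) * √(gnsNormSq φ (x + y))) := by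
  have hsub : φ (star (x + y) * (a * (x + y))) - φ (star x * (a * x)) =
      φ (star x * (a * y)) + φ (star y * (a * (x + y))) := by
    rw [← map_sub, ← map_add, star_add]
    congr 1
    noncomm_ring
  have hle : √(gnsNormSq φ x) ≤ √(gnsNormSq φ (x + y)) :=
    Real.sqrt_le_sqrt (h.gnsNormSq_add hxy ▸ le_add_of_nonneg_right (h.gnsNormSq_nonneg y))
  calc ‖φ (star (x + y) * (a * (x + y))) - φ (star x * (a * x))‖
      ≤ ‖a‖ * √(gnsNormSq φ x) * √(gnsNormSq φ y) +
          ‖a‖ * √(gnsNormSq φ y) * √(gnsNormSq φ (x + y)) := by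
        rw [hsub]
        exact norm_add_le_of_le (h.norm_apply_star_mul_mul_le a x y)
          (h.norm_apply_star_mul_mul_le a y (x + y))
    _ ≤ ‖a‖ * √(gnsNormSq φ (x + y)) * √(gnsNormSq φ y) +
          ‖a‖ * √(gnsNormSq φ y) * √(gnsNormSq φ (x + y)) := by gcongr
    _ = 2 * ‖a‖ * (√(gnsNormSq φ y) * √(gnsNormSq φ (x + y))) := by ring

theorem re_apply_star_mul_realPart_mul (h : IsPositiveFunctional φ) (a y : A) :
    (φ (star y * ((realPart a : A) * y))).re = (φ (star y * (a * y))).re := by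
  have hre : star y * ((realPart a : A) * y) =
      ((1 / 2 : ℝ) : ℂ) • (star y * (a * y) + star (star y * (a * y))) := by
    rw [realPart_apply_coe, ← Complex.coe_smul]
    simp only [star_mul, star_star, mul_add, add_mul, smul_mul_assoc, mul_smul_comm, mul_assoc]
    norm_num
  rw [hre, map_smul, map_add, h.map_star, smul_eq_mul, Complex.re_ofReal_mul, Complex.add_re,
    Complex.star_def, Complex.conj_re]
  ring

end IsPositiveFunctional

theorem nontrivial_of_apply_ne_zero {x : A} (h : φ x ≠ 0) : Nontrivial A :=
  ⟨x, 0, fun hx => h (by rw [hx, map_zero])⟩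

theorem isState_iff : IsState φ ↔ IsPositiveFunctional φ ∧ φ 1 = 1 := by
  refine and_congr_right fun (h : IsPositiveFunctional φ) => ?_
  have hone : φ 1 = (gnsNormSq φ 1 : ℂ) := by rw [h.coe_gnsNormSq, star_one, one_mul]
  have hnorm : ‖φ‖ ≤ gnsNormSq φ 1 :=
    φ.opNorm_le_bound (h.gnsNormSq_nonneg 1) fun x => by
      rw [mul_comm]
      exact h.norm_apply_le x
  have hone_le (_ : Nontrivial A) : gnsNormSq φ 1 ≤ ‖φ‖ := by
    have hle := φ.le_opNorm 1
    rwa [hone, Complex.norm_of_nonneg (h.gnsNormSq_nonneg 1), norm_one, mul_one] at hle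
  constructor
  · intro hφ
    obtain ⟨x, hx⟩ := DFunLike.ne_iff.mp (show φ ≠ 0 from fun h0 => by simp [h0] at hφ)
    rw [hone, ← le_antisymm hnorm (hone_le (nontrivial_of_apply_ne_zero hx)), hφ,
      Complex.ofReal_one]
  · intro hφ
    have hA : Nontrivial A := nontrivial_of_apply_ne_zero (hφ ▸ one_ne_zero)
    rw [le_antisymm hnorm (hone_le hA), gnsNormSq_one, hφ, Complex.one_re]

namespace IsState

theorem isPositiveFunctional (h : IsState φ) : IsPositiveFunctional φ := h.1

theorem map_one (h : IsState φ) : φ 1 = 1 := (isState_iff.mp h).2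

theorem norm_apply_le (h : IsState φ) (x : A) : ‖φ x‖ ≤ ‖x‖ := by
  simpa [h.2] using φ.le_opNorm x

theorem gnsNormSq_one (h : IsState φ) : gnsNormSq φ 1 = 1 := by simp [h.map_one]

theorem nontrivial (h : IsState φ) : Nontrivial A :=
  nontrivial_of_apply_ne_zero (x := 1) (h.map_one ▸ one_ne_zero)

theorem apply_mul_of_apply_eq_one (h : IsState φ) {p : A} (hp : IsStarProjection p)
    (hφp : φ p = 1) (x : A) : φ (x * p) = φ x := by
  have hnull : gnsNormSq φ (1 - p) = 0 := by
    rw [gnsNormSq, hp.one_sub.isSelfAdjoint.star_eq, hp.one_sub.isIdempotentElem.eq, map_sub,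
      h.map_one, hφp, sub_self, Complex.zero_re]
  have hx := h.isPositiveFunctional.norm_apply_star_mul_le (star x) (1 - p)
  rw [hnull, Real.sqrt_zero, mul_zero, star_star, mul_sub, map_sub, mul_one] at hx
  exact (sub_eq_zero.mp (norm_le_zero_iff.mp hx)).symm

theorem apply_projection_mul_of_apply_eq_one (h : IsState φ) {p : A} (hp : IsStarProjection p)
    (hφp : φ p = 1) (x : A) : φ (p * x) = φ x := by
  have hx := h.apply_mul_of_apply_eq_one hp hφp (star x)
  rw [← hp.isSelfAdjoint.star_eq, ← star_mul, h.isPositiveFunctional.map_star,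
    h.isPositiveFunctional.map_star] at hx
  exact star_injective hx

end IsState

theorem exists_isState_of_eventually_isState {ι : Type*} {l : Filter ι} [l.NeBot]
    {φ : ι → A →L[ℂ] ℂ} (hφ : ∀ᶠ i in l, IsState (φ i)) :
    ∃ ψ : A →L[ℂ] ℂ, IsState ψ ∧ ∀ x z, Tendsto (φ · x) l (𝓝 z) → ψ x = z := by
  let U : Ultrafilter ι := .of l
  have hU : ∀ᶠ i in U, IsState (φ i) := Ultrafilter.of_le l hφ
  let Φ : ι → WeakDual ℂ A := fun i => StrongDual.toWeakDual (φ i)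
  have hball : WeakDual.toStrongDual ⁻¹' Metric.closedBall (0 : StrongDual ℂ A) 1 ∈ U.map Φ := by
    rw [Ultrafilter.mem_map]
    filter_upwards [hU] with i hi
    exact mem_closedBall_zero_iff.mpr hi.2.le
  obtain ⟨ψ, -, hψ⟩ := (WeakDual.isCompact_closedBall (𝕜 := ℂ) (E := A) 0 1).ultrafilter_le_nhds'
    (U.map Φ) hball
  have hlim (x : A) : Tendsto (φ · x) U (𝓝 (WeakDual.toStrongDual ψ x)) :=
    ((WeakDual.eval_continuous x).tendsto ψ).comp hψ
  refine ⟨WeakDual.toStrongDual ψ, isState_iff.mpr ⟨fun x => ?_, ?_⟩, fun x z hz =>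
    tendsto_nhds_unique (hlim x) (hz.mono_left (Ultrafilter.of_le l))⟩
  · exact ge_of_tendsto (hlim _) (hU.mono fun i hi => hi.isPositiveFunctional x)
  · exact tendsto_nhds_unique (hlim 1)
      (tendsto_const_nhds.congr' (hU.mono fun i hi => hi.map_one.symm))

end PositiveFunctional

/-! ### Prime C*-algebras -/

section Prime

variable {A : Type*} [CStarAlgebra A]

theorem eq_zero_of_mul_star_mul_self {z : A} (h : z * star z * z = 0) : z = 0 := by
  have hz : star (star z * z) * (star z * z) = 0 := by
    rw [star_mul, star_star, mul_assoc (star z), ← mul_assoc z, h, mul_zero]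
  rwa [CStarRing.star_mul_self_eq_zero_iff, CStarRing.star_mul_self_eq_zero_iff] at hz

/-- The two-sided ideal of the `x` with `x A s = 0` for every `s ∈ S`. -/
def leftAnnihilatorIdeal (S : Set A) : TwoSidedIdeal A :=
  TwoSidedIdeal.mk' {x | ∀ s ∈ S, ∀ c, x * c * s = 0}
    (by simp)
    (fun {x y} hx hy s hs c => by rw [add_mul, add_mul, hx s hs, hy s hs, add_zero])
    (fun {x} hx s hs c => by rw [neg_mul, neg_mul, hx s hs, neg_zero])
    (fun {x y} hy s hs c => by rw [mul_assoc x, mul_assoc x, hy s hs, mul_zero])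
    (fun {x y} hx s hs c => by rw [mul_assoc x]; exact hx s hs _)

theorem mem_leftAnnihilatorIdeal {S : Set A} {x : A} :
    x ∈ leftAnnihilatorIdeal S ↔ ∀ s ∈ S, ∀ c, x * c * s = 0 :=
  TwoSidedIdeal.mem_mk' ..

/-- The two-sided ideal of the `x` with `s A x = 0` for every `s ∈ S`. -/
def rightAnnihilatorIdeal (S : Set A) : TwoSidedIdeal A :=
  TwoSidedIdeal.mk' {x | ∀ s ∈ S, ∀ c, s * c * x = 0}
    (by simp)
    (fun {x y} hx hy s hs c => by rw [mul_add, hx s hs, hy s hs, add_zero])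
    (fun {x} hx s hs c => by rw [mul_neg, hx s hs, neg_zero])
    (fun {x y} hy s hs c => by rw [← mul_assoc, mul_assoc s]; exact hy s hs _)
    (fun {x y} hx s hs c => by rw [← mul_assoc, hx s hs, zero_mul])

theorem mem_rightAnnihilatorIdeal {S : Set A} {x : A} :
    x ∈ rightAnnihilatorIdeal S ↔ ∀ s ∈ S, ∀ c, s * c * x = 0 :=
  TwoSidedIdeal.mem_mk' ..

theorem isClosed_leftAnnihilatorIdeal (S : Set A) :
    IsClosed (leftAnnihilatorIdeal S : Set A) := by
  have : (leftAnnihilatorIdeal S : Set A) = ⋂ s ∈ S, ⋂ c, {x | x * c * s = 0} := by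
    ext x
    simp [mem_leftAnnihilatorIdeal]
  rw [this]
  exact isClosed_biInter fun s _ => isClosed_iInter fun c => isClosed_eq (by fun_prop) (by fun_prop)

theorem isClosed_rightAnnihilatorIdeal (S : Set A) :
    IsClosed (rightAnnihilatorIdeal S : Set A) := by
  have : (rightAnnihilatorIdeal S : Set A) = ⋂ s ∈ S, ⋂ c, {x | s * c * x = 0} := by
    ext x
    simp [mem_rightAnnihilatorIdeal]
  rw [this]
  exact isClosed_biInter fun s _ => isClosed_iInter fun c => isClosed_eq (by fun_prop) (by fun_prop)

theorem IsPrimeCStar.exists_mul_mul_ne_zero (hA : IsPrimeCStar A) {a b : A} (ha : a ≠ 0)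
    (hb : b ≠ 0) : ∃ c, a * c * b ≠ 0 := by
  by_contra! hab
  set I := leftAnnihilatorIdeal {b}
  set J := rightAnnihilatorIdeal (I : Set A)
  have haI : a ∈ I := mem_leftAnnihilatorIdeal.mpr (by simpa using hab)
  have hbJ : b ∈ J := mem_rightAnnihilatorIdeal.mpr fun x hx c =>
    mem_leftAnnihilatorIdeal.mp hx b rfl c
  refine hA I J (isClosed_leftAnnihilatorIdeal _) (isClosed_rightAnnihilatorIdeal _)
    (fun h => ha ?_) (fun h => hb ?_) (eq_bot_iff.mpr fun z hz => ?_)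
  · rwa [h, TwoSidedIdeal.mem_bot] at haI
  · rwa [h, TwoSidedIdeal.mem_bot] at hbJ
  · obtain ⟨hzI, hzJ⟩ : z ∈ I ∧ z ∈ J := hz
    exact (TwoSidedIdeal.mem_bot A).mpr
      (eq_zero_of_mul_star_mul_self (mem_rightAnnihilatorIdeal.mp hzJ z hzI (star z)))

end Prime

/-! ### Minimal projections in finite-dimensional star subalgebras -/

section MinimalProjection

variable {A : Type*} [CStarAlgebra A] {S : StarSubalgebra ℂ A} {p q h : A}

/-- A minimal (nonzero) projection of a star subalgebra, characterized by its scalar corner. -/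
structure IsMinimalProjection (S : StarSubalgebra ℂ A) (p : A) : Prop where
  mem : p ∈ S
  isStarProjection : IsStarProjection p
  ne_zero : p ≠ 0
  exists_smul : ∀ x ∈ S, ∃ c : ℂ, p * x * p = c • p

theorem mul_eq_left_of_mul_eq_right (hp : IsSelfAdjoint p) (hq : IsSelfAdjoint q)
    (hqp : q * p = p) : p * q = p := by
  rw [← hp.star_eq, ← hq.star_eq, ← star_mul, hqp]

theorem finite_spectrum_of_isIntegral [Nontrivial A] (hh : IsIntegral ℂ h) :
    (spectrum ℂ h).Finite := by
  obtain ⟨P, hP, hPh⟩ := hh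
  refine P.roots.toFinset.finite_toSet.subset fun μ hμ => ?_
  have hroot : P.eval μ ∈ spectrum ℂ (Polynomial.aeval h P) :=
    spectrum.subset_polynomial_aeval h P ⟨μ, hμ, rfl⟩
  rw [Polynomial.aeval_def, hPh, spectrum.zero_eq] at hroot
  simpa [hP.ne_zero] using hroot

theorem finite_real_spectrum_of_mem [FiniteDimensional ℂ S] (hh : h ∈ S) :
    (spectrum ℝ h).Finite := by
  nontriviality A
  have hint : IsIntegral ℂ h := (Algebra.IsIntegral.isIntegral (⟨h, hh⟩ : S)).map S.subtype
  rw [← spectrum.preimage_algebraMap ℂ]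
  exact (finite_spectrum_of_isIntegral hint).preimage
    (FaithfulSMul.algebraMap_injective ℝ ℂ).injOn

theorem isClosed_of_finiteDimensional (S : StarSubalgebra ℂ A) [FiniteDimensional ℂ S] :
    IsClosed (S : Set A) :=
  have : FiniteDimensional ℂ S.toSubalgebra.toSubmodule := ‹FiniteDimensional ℂ S›
  S.toSubalgebra.toSubmodule.closed_of_finiteDimensional

/-- The spectral projection of `h` at the point `μ`; a genuine projection when `μ` is isolated in
the spectrum of a self-adjoint `h`. -/
noncomputable def spectralProjection (h : A) (μ : ℝ) : A :=
  cfc (fun x : ℝ => if x = μ then 1 else 0) h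

theorem isStarProjection_spectralProjection (hfin : (spectrum ℝ h).Finite) (μ : ℝ) :
    IsStarProjection (spectralProjection h μ) where
  isSelfAdjoint := cfc_predicate _ h
  isIdempotentElem := by
    rw [IsIdempotentElem, spectralProjection,
      ← cfc_mul _ _ h (hfin.continuousOn _) (hfin.continuousOn _)]
    exact cfc_congr fun x _ => by by_cases hx : x = μ <;> simp [hx]

theorem mul_spectralProjection (hfin : (spectrum ℝ h).Finite) (hh : IsSelfAdjoint h) (μ : ℝ) :
    h * spectralProjection h μ = μ • spectralProjection h μ := by
  have hcont (f : ℝ → ℝ) : ContinuousOn f (spectrum ℝ h) := hfin.continuousOn f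
  rw [spectralProjection, ← cfc_smul _ _ h (hcont _)]
  nth_rw 1 [← cfc_id ℝ h]
  rw [← cfc_mul _ _ h (hcont _) (hcont _)]
  refine cfc_congr fun x _ => ?_
  by_cases hx : x = μ <;> simp [hx]

theorem spectralProjection_ne_zero (hfin : (spectrum ℝ h).Finite) (hh : IsSelfAdjoint h) {μ : ℝ}
    (hμ : μ ∈ spectrum ℝ h) : spectralProjection h μ ≠ 0 := by
  intro hzero
  have : Nontrivial A := (subsingleton_or_nontrivial A).resolve_left fun _ => by
    simp [spectrum.of_subsingleton] at hμ
  have hone : (1 : ℝ) ∈ spectrum ℝ (spectralProjection h μ) := by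
    rw [spectralProjection, cfc_map_spectrum _ h hh (hfin.continuousOn _)]
    exact ⟨μ, hμ, if_pos rfl⟩
  simp [hzero] at hone

theorem exists_mem_spectrum_ne_zero (hh : IsSelfAdjoint h) (hne : h ≠ 0) :
    ∃ μ ∈ spectrum ℝ h, μ ≠ 0 := by
  by_contra! hzero
  exact hne <| by rw [← cfc_id ℝ h, cfc_congr (f := id) (g := fun _ => 0) hzero, cfc_const_zero]

theorem exists_isStarProjection_of_forall_ne_smul [FiniteDimensional ℂ S] (hS : h ∈ S)
    (hh : IsSelfAdjoint h) (hq : IsSelfAdjoint q) (hqh : q * h = h) (hne : ∀ c : ℂ, h ≠ c • q) :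
    ∃ p ∈ S, IsStarProjection p ∧ q * p = p ∧ p ≠ 0 ∧ p ≠ q := by
  have : IsClosed (S : Set A) := isClosed_of_finiteDimensional S
  have hfin := finite_real_spectrum_of_mem hS
  obtain ⟨μ, hμ, hμ0⟩ := exists_mem_spectrum_ne_zero hh (by simpa using hne 0)
  have hmul := mul_spectralProjection hfin hh μ
  refine ⟨spectralProjection h μ, cfc_mem (𝕜' := ℂ) _ hS,
    isStarProjection_spectralProjection hfin μ, ?_, spectralProjection_ne_zero hfin hh hμ, ?_⟩
  · rw [← inv_smul_smul₀ hμ0 (spectralProjection h μ), ← hmul, mul_smul_comm, ← mul_assoc, hqh]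
  · intro heq
    rw [heq, mul_eq_left_of_mul_eq_right hh hq hqh] at hmul
    exact hne μ (by rw [hmul, Complex.coe_smul])

theorem realPart_mem (S : StarSubalgebra ℂ A) {x : A} (hx : x ∈ S) : (realPart x : A) ∈ S := by
  rw [realPart_apply_coe, ← Complex.coe_smul]
  exact S.smul_mem (add_mem hx (star_mem hx)) _

theorem imaginaryPart_mem (S : StarSubalgebra ℂ A) {x : A} (hx : x ∈ S) :
    (imaginaryPart x : A) ∈ S := by
  rw [imaginaryPart_apply_coe, ← Complex.coe_smul]
  exact S.smul_mem (S.smul_mem (sub_mem hx (star_mem hx)) _) _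

theorem exists_mul_mul_eq_smul_of_isSelfAdjoint
    (hsa : ∀ x ∈ S, IsSelfAdjoint x → ∃ c : ℂ, q * x * q = c • q) {x : A} (hx : x ∈ S) :
    ∃ c : ℂ, q * x * q = c • q := by
  obtain ⟨c, hc⟩ := hsa _ (realPart_mem S hx) (realPart x).2
  obtain ⟨d, hd⟩ := hsa _ (imaginaryPart_mem S hx) (imaginaryPart x).2
  refine ⟨c + Complex.I * d, ?_⟩
  conv_lhs => rw [← realPart_add_I_smul_imaginaryPart x]
  rw [mul_add, add_mul, hc, mul_smul_comm, smul_mul_assoc, hd, add_smul, mul_smul]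

theorem exists_isStarProjection_mul_ne_zero [FiniteDimensional ℂ S] {y : A} (hqS : q ∈ S)
    (hq : IsStarProjection q) (hyq : y * q ≠ 0) (hmin : ¬∀ x ∈ S, ∃ c : ℂ, q * x * q = c • q) :
    ∃ r ∈ S, IsStarProjection r ∧ q * r = r ∧ r ≠ q ∧ y * r ≠ 0 := by
  obtain ⟨h, hS, hh, hne⟩ : ∃ h ∈ S, IsSelfAdjoint h ∧ ∀ c : ℂ, q * h * q ≠ c • q := by
    by_contra! hall
    exact hmin fun x => exists_mul_mul_eq_smul_of_isSelfAdjoint hall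
  obtain ⟨p, hpS, hp, hqp, hp0, hpq⟩ := exists_isStarProjection_of_forall_ne_smul
    (mul_mem (mul_mem hqS hS) hqS) (by simpa [hq.isSelfAdjoint.star_eq] using hh.conjugate q)
    hq.isSelfAdjoint (by rw [← mul_assoc, ← mul_assoc, hq.isIdempotentElem.eq]) hne
  by_cases hyp : y * p = 0
  · exact ⟨q - p, sub_mem hqS hpS, hp.sub_of_mul_eq_right hq hqp,
      by rw [mul_sub, hq.isIdempotentElem.eq, hqp], by simpa using hp0,
      by rwa [mul_sub, hyp, sub_zero]⟩
  · exact ⟨p, hpS, hp, hqp, hpq, hyp⟩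

/-- The corner `p S p` as a linear subspace. -/
noncomputable def corner (S : StarSubalgebra ℂ A) (p : A) : Submodule ℂ A :=
  S.toSubalgebra.toSubmodule.map (LinearMap.mulLeftRight ℂ (p, p))

theorem mem_corner {y : A} : y ∈ corner S p ↔ ∃ x ∈ S, p * x * p = y := by simp [corner]

instance [FiniteDimensional ℂ S] : FiniteDimensional ℂ (corner S p) := by
  have : FiniteDimensional ℂ S.toSubalgebra.toSubmodule := ‹FiniteDimensional ℂ S›
  unfold corner
  infer_instance

theorem corner_lt_corner (hpS : p ∈ S) (hp : IsIdempotentElem p) (hqS : q ∈ S)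
    (hq : IsIdempotentElem q) (hqp : q * p = p) (hpq : p * q = p) (hne : p ≠ q) :
    corner S p < corner S q := by
  refine lt_of_le_of_ne (fun z hz => ?_) fun heq => hne ?_
  · obtain ⟨x, hx, rfl⟩ := mem_corner.mp hz
    refine mem_corner.mpr ⟨p * x * p, mul_mem (mul_mem hpS hx) hpS, ?_⟩
    rw [← mul_assoc, ← mul_assoc, hqp, mul_assoc _ p q, hpq]
  · have hmem : q ∈ corner S p := heq ▸ mem_corner.mpr ⟨q, hqS, by rw [hq.eq, hq.eq]⟩
    obtain ⟨x, -, hx⟩ := mem_corner.mp hmem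
    rw [← hqp, ← hx, mul_assoc _ p p, hp.eq]

theorem exists_isMinimalProjection [FiniteDimensional ℂ S] {y : A} (hqS : q ∈ S)
    (hq : IsStarProjection q) (hyq : y * q ≠ 0) :
    ∃ p, IsMinimalProjection S p ∧ q * p = p ∧ y * p ≠ 0 := by
  induction hn : Module.finrank ℂ (corner S q) using Nat.strong_induction_on
    generalizing q with
  | _ n ih =>
    by_cases hmin : ∀ x ∈ S, ∃ c : ℂ, q * x * q = c • q
    · exact ⟨q, ⟨hqS, hq, right_ne_zero_of_mul hyq, hmin⟩, hq.isIdempotentElem, hyq⟩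
    obtain ⟨r, hrS, hr, hqr, hrq, hyr⟩ := exists_isStarProjection_mul_ne_zero hqS hq hyq hmin
    have hlt : corner S r < corner S q := corner_lt_corner hrS hr.isIdempotentElem hqS
      hq.isIdempotentElem hqr
      (mul_eq_left_of_mul_eq_right hr.isSelfAdjoint hq.isSelfAdjoint hqr) hrq
    obtain ⟨p, hp, hrp, hyp⟩ := ih _ (hn ▸ Submodule.finrank_lt_finrank_of_lt hlt) hrS hr hyr rfl
    exact ⟨p, hp, by rw [← hrp, ← mul_assoc, hqr], hyp⟩

end MinimalProjection

/-! ### Faithful sequences of minimal projections -/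

section FaithfulSequence

variable {A : Type*} [CStarAlgebra A]

/-- The subspace of the elements of `B` annihilating the left ideal `S p`. -/
def leftAnnihilator (B S : StarSubalgebra ℂ A) (p : A) : Submodule ℂ A where
  carrier := {b | b ∈ B ∧ ∀ x ∈ S, b * x * p = 0}
  zero_mem' := ⟨zero_mem _, by simp⟩
  add_mem' := fun ha hb => ⟨add_mem ha.1 hb.1, fun x hx => by
    rw [add_mul, add_mul, ha.2 x hx, hb.2 x hx, add_zero]⟩
  smul_mem' := fun c b hb => ⟨B.smul_mem hb.1 c, fun x hx => by
    rw [smul_mul_assoc, smul_mul_assoc, hb.2 x hx, smul_zero]⟩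

theorem mem_leftAnnihilator {B S : StarSubalgebra ℂ A} {p b : A} :
    b ∈ leftAnnihilator B S p ↔ b ∈ B ∧ ∀ x ∈ S, b * x * p = 0 := Iff.rfl

instance (B S : StarSubalgebra ℂ A) (p : A) [FiniteDimensional ℂ B] :
    FiniteDimensional ℂ (leftAnnihilator B S p) :=
  have : FiniteDimensional ℂ B.toSubalgebra.toSubmodule := ‹FiniteDimensional ℂ B›
  Submodule.finiteDimensional_of_le (S₂ := B.toSubalgebra.toSubmodule) fun _ hx => hx.1

theorem leftAnnihilator_le_leftAnnihilator {B S S' : StarSubalgebra ℂ A} {p p' : A} (hBS : B ≤ S)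
    (hSS' : S ≤ S') (hp : IsMinimalProjection S p) (hp' : p' ≠ 0) (hpp' : p * p' = p') :
    leftAnnihilator B S' p' ≤ leftAnnihilator B S p := by
  rintro b ⟨hb, hann⟩
  refine ⟨hb, fun s hs => ?_⟩
  have hbs : b * s ∈ S := mul_mem (hBS hb) hs
  obtain ⟨c, hc⟩ := hp.exists_smul (star (b * s) * (b * s)) (mul_mem (star_mem hbs) hbs)
  have hcp' : c • p' = 0 :=
    calc c • p' = p * (star (b * s) * (b * s)) * p * p' := by rw [hc, smul_mul_assoc, hpp']
      _ = p * (star (b * s) * (b * s * p')) := by simp only [mul_assoc, hpp']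
      _ = 0 := by rw [hann s (hSS' hs), mul_zero, mul_zero]
  rw [(smul_eq_zero_iff_left hp').mp hcp', zero_smul] at hc
  rw [← CStarRing.star_mul_self_eq_zero_iff, star_mul, hp.isStarProjection.isSelfAdjoint.star_eq]
  simpa only [mul_assoc] using hc

variable {S : ℕ → StarSubalgebra ℂ A} (hdense : Dense (⋃ n, (S n : Set A)))
  (hprime : IsPrimeCStar A)
include hdense hprime

theorem exists_mul_mul_ne_zero_of_dense {b p : A} (hb : b ≠ 0) (hp : p ≠ 0) :
    ∃ l, ∃ x ∈ S l, b * x * p ≠ 0 := by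
  have hopen : IsOpen {x | b * x * p ≠ 0} := isOpen_ne_fun (by fun_prop) (by fun_prop)
  obtain ⟨x, hx, hxS⟩ :=
    hdense.inter_open_nonempty _ hopen (hprime.exists_mul_mul_ne_zero hb hp)
  obtain ⟨l, hl⟩ := Set.mem_iUnion.mp hxS
  exact ⟨l, x, hl, hx⟩

variable (hS : Monotone S) (hfin : ∀ n, FiniteDimensional ℂ (S n))
include hS hfin

theorem exists_leftAnnihilator_eq_bot_of_le {k m : ℕ} (hkm : k ≤ m) {p : A}
    (hp : IsMinimalProjection (S m) p) :
    ∃ m' ≥ m, ∃ p', IsMinimalProjection (S m') p' ∧ p * p' = p' ∧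
      leftAnnihilator (S k) (S m') p' = ⊥ := by
  induction hn : Module.finrank ℂ (leftAnnihilator (S k) (S m) p) using Nat.strong_induction_on
    generalizing m p with
  | _ n ih =>
    by_cases hbot : leftAnnihilator (S k) (S m) p = ⊥
    · exact ⟨m, le_rfl, p, hp, hp.isStarProjection.isIdempotentElem, hbot⟩
    obtain ⟨b, hb, hb0⟩ := Submodule.exists_mem_ne_zero_of_ne_bot hbot
    obtain ⟨l, x, hx, hbxp⟩ :=
      exists_mul_mul_ne_zero_of_dense hdense hprime hb0 hp.ne_zero
    have hmono : S m ≤ S (max l m) := hS (le_max_right l m)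
    obtain ⟨p', hp', hpp', hbxp'⟩ :=
      exists_isMinimalProjection (hmono hp.mem) hp.isStarProjection hbxp
    have hlt : leftAnnihilator (S k) (S (max l m)) p' < leftAnnihilator (S k) (S m) p :=
      lt_of_le_of_ne (leftAnnihilator_le_leftAnnihilator (hS hkm) hmono hp hp'.ne_zero hpp')
        fun heq => hbxp' ((heq ▸ hb).2 x (hS (le_max_left l m) hx))
    obtain ⟨m', hm', p'', hp'', hp'p'', hbot''⟩ :=
      ih _ (hn ▸ Submodule.finrank_lt_finrank_of_lt hlt) (hkm.trans (le_max_right l m)) hp' rfl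
    exact ⟨m', (le_max_right l m).trans hm', p'', hp'', by rw [← hp'p'', ← mul_assoc, hpp'],
      hbot''⟩

theorem exists_leftAnnihilator_eq_bot (k m : ℕ) {p : A} (hp : IsMinimalProjection (S m) p) :
    ∃ m' ≥ k, ∃ p', IsMinimalProjection (S m') p' ∧ p * p' = p' ∧
      leftAnnihilator (S k) (S m') p' = ⊥ := by
  obtain ⟨q, hq, hpq, -⟩ := exists_isMinimalProjection (hS (le_max_right k m) hp.mem)
    hp.isStarProjection (y := 1) (by simpa using hp.ne_zero)
  obtain ⟨m', hm', p', hp', hqp', hbot⟩ :=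
    exists_leftAnnihilator_eq_bot_of_le hdense hprime hS hfin (le_max_left k m) hq
  exact ⟨m', (le_max_left k m).trans hm', p', hp', by rw [← hqp', ← mul_assoc, hpq], hbot⟩

theorem exists_faithful_sequence [Nontrivial A] : ∃ (m : ℕ → ℕ) (p : ℕ → A),
    (∀ j, j ≤ m j) ∧ (∀ j, IsMinimalProjection (S (m j)) (p j)) ∧
    (∀ j, p j * p (j + 1) = p (j + 1)) ∧ ∀ j, leftAnnihilator (S j) (S (m j)) (p j) = ⊥ := by
  let X := {x : ℕ × A // IsMinimalProjection (S x.1) x.2}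
  have hnext (k : ℕ) (x : X) : ∃ x' : X, k ≤ x'.1.1 ∧ x.1.2 * x'.1.2 = x'.1.2 ∧
      leftAnnihilator (S k) (S x'.1.1) x'.1.2 = ⊥ := by
    obtain ⟨m', hm', p', hp', hpp', hbot⟩ :=
      exists_leftAnnihilator_eq_bot hdense hprime hS hfin k x.1.1 x.2
    exact ⟨⟨(m', p'), hp'⟩, hm', hpp', hbot⟩
  choose next hle hmul hbot using hnext
  obtain ⟨p₀, hp₀, -⟩ := exists_isMinimalProjection (one_mem (S 0)) (.one A) (y := 1) (by simp)
  let F (j : ℕ) : X := Nat.rec (next 0 ⟨(0, p₀), hp₀⟩) (fun j x => next (j + 1) x) j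
  have hF : ∀ j, ∃ x, F j = next j x
    | 0 => ⟨_, rfl⟩
    | j + 1 => ⟨F j, rfl⟩
  refine ⟨fun j => (F j).1.1, fun j => (F j).1.2, fun j => ?_, fun j => (F j).2,
    fun j => hmul (j + 1) (F j), fun j => ?_⟩
  · obtain ⟨x, hx⟩ := hF j
    beta_reduce
    exact hx ▸ hle j x
  · obtain ⟨x, hx⟩ := hF j
    beta_reduce
    exact hx ▸ hbot j x

end FaithfulSequence

/-! ### Excised states -/

/-- A state excised by a sequence of projections of a dense star subalgebra, and detecting
positivity: an element with positive values in all vector states of `ω` has positive value in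
every state. -/
structure ExcisedState (A : Type*) [CStarAlgebra A] where
  D : StarSubalgebra ℂ A
  dense : Dense (D : Set A)
  ω : A →L[ℂ] ℂ
  isState : IsState ω
  p : ℕ → A
  p_mem : ∀ m, p m ∈ D
  isStarProjection : ∀ m, IsStarProjection (p m)
  ω_p : ∀ m, ω (p m) = 1
  excises : ∀ a ∈ D, ∀ᶠ m in Filter.atTop, p m * a * p m = ω a • p m
  detects : ∀ a, (∀ y ∈ D, 0 ≤ (ω (star y * (a * y))).re) →
    ∀ φ : A →L[ℂ] ℂ, IsState φ → 0 ≤ (φ a).re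

section Excision

open Filter

variable {A : Type*} [CStarAlgebra A] {ω : A →L[ℂ] ℂ}

theorem exists_functional_of_eventually_eq_smul {ι : Type*} {l : Filter ι} [l.NeBot]
    (D : Submodule ℂ A) {p : ι → A} (hp : ∀ j, IsStarProjection (p j)) (hp0 : ∀ j, p j ≠ 0)
    (hD : ∀ a ∈ D, ∃ c : ℂ, ∀ᶠ j in l, p j * a * p j = c • p j) :
    ∃ ω : A →L[ℂ] ℂ, ∀ a ∈ D, ∀ᶠ j in l, p j * a * p j = ω a • p j := by
  choose c hc using fun a : D => hD a a.2
  have hunique (a : D) (d : ℂ) (hd : ∀ᶠ j in l, p j * a * p j = d • p j) : c a = d := by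
    obtain ⟨j, hj, hjd⟩ := ((hc a).and hd).exists
    exact smul_left_injective ℂ (hp0 j) (hj.symm.trans hjd)
  let f : D →ₗ[ℂ] ℂ :=
    { toFun := c
      map_add' := fun a b => hunique _ _ <| by
        filter_upwards [hc a, hc b] with j ha hb
        rw [add_smul, ← ha, ← hb, ← add_mul, ← mul_add, Submodule.coe_add]
      map_smul' := fun r a => hunique _ _ <| by
        filter_upwards [hc a] with j ha
        rw [smul_eq_mul, mul_smul, RingHom.id_apply, ← ha, ← smul_mul_assoc, ← mul_smul_comm,
          Submodule.coe_smul] }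
  have hbound (a : D) : ‖f a‖ ≤ 1 * ‖a‖ := by
    obtain ⟨j, hj⟩ := (hc a).exists
    refine le_of_mul_le_mul_right ?_ (norm_pos_iff.mpr (hp0 j))
    calc ‖c a‖ * ‖p j‖ = ‖p j * a * p j‖ := by rw [hj, norm_smul]
      _ ≤ ‖p j‖ * ‖(a : A)‖ * ‖p j‖ := norm_mul₃_le
      _ ≤ 1 * ‖a‖ * ‖p j‖ := by gcongr; exacts [(hp j).norm_le, le_rfl]
  obtain ⟨ω, hω, -⟩ := exists_extension_norm_eq D (f.mkContinuous 1 hbound)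
  refine ⟨ω, fun a ha => ?_⟩
  rw [show ω a = c ⟨a, ha⟩ from hω ⟨a, ha⟩]
  exact hc ⟨a, ha⟩

section SpectralOrder

attribute [local instance] CStarAlgebra.spectralOrder CStarAlgebra.spectralOrderedRing

theorem nonneg_of_smul_nonneg {p : A} {c : ℂ} (hp : IsIdempotentElem p) (hp0 : p ≠ 0)
    (hc : 0 ≤ c • p) : 0 ≤ c := by
  refine spectrum_nonneg_of_nonneg hc (spectrum.mem_iff.mpr fun hunit => hp0 ?_)
  rw [← hunit.mul_right_eq_zero, sub_mul, Algebra.algebraMap_eq_smul_one, smul_one_mul,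
    smul_mul_assoc, hp.eq, sub_self]

theorem isState_of_eventually_eq_smul {ι : Type*} {l : Filter ι} [l.NeBot] {D : StarSubalgebra ℂ A}
    (hdense : Dense (D : Set A)) {p : ι → A} (hp : ∀ j, IsStarProjection (p j))
    (hp0 : ∀ j, p j ≠ 0) (hω : ∀ a ∈ D, ∀ᶠ j in l, p j * a * p j = ω a • p j) : IsState ω := by
  refine isState_iff.mpr ⟨fun x => ?_, ?_⟩
  · have hclosed : IsClosed {x : A | 0 ≤ ω (star x * x)} :=
      isClosed_le continuous_const (by fun_prop)
    refine hclosed.closure_subset_iff.mpr (fun x hx => ?_) (hdense x)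
    obtain ⟨j, hj⟩ := (hω _ (mul_mem (star_mem hx) hx)).exists
    refine nonneg_of_smul_nonneg (hp j).isIdempotentElem (hp0 j) ?_
    rw [← hj]
    exact (hp j).isSelfAdjoint.conjugate_nonneg (star_mul_self_nonneg x)
  · obtain ⟨j, hj⟩ := (hω 1 (one_mem D)).exists
    rw [mul_one, (hp j).isIdempotentElem.eq] at hj
    exact smul_left_injective ℂ (hp0 j) (hj.symm.trans (one_smul ℂ (p j)).symm)

theorem IsMinimalProjection.mul_eq_zero_of_gnsNormSq_eq_zero {S : StarSubalgebra ℂ A} {p z : A}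
    (hp : IsMinimalProjection S p) (hω : IsState ω) (hωp : ω p = 1) (hz : z ∈ S)
    (hnull : gnsNormSq ω z = 0) : z * p = 0 := by
  obtain ⟨c, hc⟩ := hp.exists_smul (star z * z) (mul_mem (star_mem hz) hz)
  have hc0 : c = 0 :=
    calc c = ω (c • p) := by rw [map_smul, hωp, smul_eq_mul, mul_one]
      _ = ω (star z * z) := by
        rw [← hc, hω.apply_mul_of_apply_eq_one hp.isStarProjection hωp,
          hω.apply_projection_mul_of_apply_eq_one hp.isStarProjection hωp]
      _ = 0 := by rw [← hω.isPositiveFunctional.coe_gnsNormSq, hnull, Complex.ofReal_zero]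
  rw [hc0, zero_smul] at hc
  rw [← CStarRing.star_mul_self_eq_zero_iff, star_mul, hp.isStarProjection.isSelfAdjoint.star_eq]
  simpa only [mul_assoc] using hc

theorem negPart_mem {B : StarSubalgebra ℂ A} [IsClosed (B : Set A)] {h : A} (hh : h ∈ B) :
    h⁻ ∈ B := by
  rw [CFC.negPart_def, cfcₙ_eq_cfc]
  exact cfc_mem (𝕜' := ℂ) _ hh

/-- The negative part `n` of `h` satisfies `n h n = -n³`, so the vectors `n x` on which `h` is
bounded below by `δ > 0` are null for `ω`, and faithfulness of `p` on `B` forces `n = 0`. -/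
theorem nonneg_of_leftAnnihilator_eq_bot {B S : StarSubalgebra ℂ A} [FiniteDimensional ℂ B]
    (hBS : B ≤ S) {p : A} (hp : IsMinimalProjection S p) (hbot : leftAnnihilator B S p = ⊥)
    (hω : IsState ω) (hωp : ω p = 1) {h : A} (hhB : h ∈ B) (hh : IsSelfAdjoint h) {δ : ℝ}
    (hδ : 0 < δ) (hhδ : ∀ y ∈ S, δ * gnsNormSq ω y ≤ (ω (star y * (h * y))).re) : 0 ≤ h := by
  have : IsClosed (B : Set A) := isClosed_of_finiteDimensional B
  have hnB : h⁻ ∈ B := negPart_mem hhB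
  have hn : 0 ≤ h⁻ := CFC.negPart_nonneg h
  have hcube : h⁻ * h * h⁻ = -(h⁻ * h⁻ * h⁻) := by
    nth_rw 2 [← CFC.posPart_sub_negPart h hh]
    rw [mul_sub, CFC.negPart_mul_posPart, zero_sub, neg_mul]
  refine (CFC.negPart_eq_zero_iff h hh).mp ((Submodule.eq_bot_iff _).mp hbot _
    (mem_leftAnnihilator.mpr ⟨hnB, fun x hx => ?_⟩))
  have hnxS : h⁻ * x ∈ S := mul_mem (hBS hnB) hx
  have hneg : (ω (star (h⁻ * x) * (h * (h⁻ * x)))).re ≤ 0 := by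
    have hpos : 0 ≤ star x * (h⁻ * h⁻ * h⁻) * x :=
      star_left_conjugate_nonneg (hn.isSelfAdjoint.conjugate_nonneg hn) x
    have heq : star (h⁻ * x) * (h * (h⁻ * x)) = -(star x * (h⁻ * h⁻ * h⁻) * x) := by
      rw [star_mul, hn.isSelfAdjoint.star_eq, ← neg_mul, ← mul_neg, ← hcube]
      simp only [mul_assoc]
    rw [heq, map_neg, Complex.neg_re, neg_nonpos]
    exact (Complex.le_def.mp (hω.isPositiveFunctional.apply_nonneg hpos)).1
  refine hp.mul_eq_zero_of_gnsNormSq_eq_zero hω hωp hnxS (le_antisymm ?_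
    (hω.isPositiveFunctional.gnsNormSq_nonneg _))
  exact nonpos_of_mul_nonpos_right ((hhδ _ hnxS).trans hneg) hδ

theorem re_nonneg_of_leftAnnihilator_eq_bot {S : ℕ → StarSubalgebra ℂ A} (hS : Monotone S)
    (hfin : ∀ n, FiniteDimensional ℂ (S n)) (hdense : Dense (⋃ n, (S n : Set A))) {m : ℕ → ℕ}
    (hm : ∀ j, j ≤ m j) {p : ℕ → A} (hp : ∀ j, IsMinimalProjection (S (m j)) (p j))
    (hbot : ∀ j, leftAnnihilator (S j) (S (m j)) (p j) = ⊥) (hω : IsState ω)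
    (hωp : ∀ j, ω (p j) = 1) {a : A} (ha : ∀ j, ∀ y ∈ S j, 0 ≤ (ω (star y * (a * y))).re)
    {φ : A →L[ℂ] ℂ} (hφ : IsState φ) : 0 ≤ (φ a).re := by
  refine le_of_forall_pos_le_add fun ε hε => ?_
  have hδ : 0 < ε / 3 := by positivity
  set δ := ε / 3 with hδε
  obtain ⟨b, hb, hab⟩ := hdense.exists_dist_lt a hδ
  obtain ⟨k, hk⟩ := Set.mem_iUnion.mp hb
  have hba : ‖b - a‖ ≤ δ := by rw [← dist_eq_norm, dist_comm]; exact hab.le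
  let h : A := (realPart b : A) + ((2 * δ : ℝ) : ℂ) • 1
  have hhS : h ∈ S k := add_mem (realPart_mem _ hk) ((S k).smul_mem (one_mem _) _)
  have hh : IsSelfAdjoint h := (realPart b).2.add (by simp [IsSelfAdjoint])
  have hre {ψ : A →L[ℂ] ℂ} (hψ : IsPositiveFunctional ψ) (y : A) :
      (ψ (star y * (h * y))).re = (ψ (star y * (a * y))).re + (ψ (star y * ((b - a) * y))).re
        + 2 * δ * gnsNormSq ψ y := by
    have hb : star y * (b * y) = star y * (a * y) + star y * ((b - a) * y) := by
      rw [← mul_add, ← add_mul, add_sub_cancel]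
    rw [add_mul, mul_add, map_add, Complex.add_re, hψ.re_apply_star_mul_realPart_mul, hb, map_add,
      Complex.add_re, smul_one_mul, mul_smul_comm, map_smul, smul_eq_mul, Complex.re_ofReal_mul,
      gnsNormSq]
  have hhδ (y : A) (hy : y ∈ S (m k)) : δ * gnsNormSq ω y ≤ (ω (star y * (h * y))).re := by
    have hω' := hω.isPositiveFunctional
    have hdiff := (abs_le.mp (Complex.abs_re_le_norm (ω (star y * ((b - a) * y))))).1
    have hnorm := hω'.norm_apply_star_mul_mul_le (b - a) y y
    rw [mul_assoc, Real.mul_self_sqrt (hω'.gnsNormSq_nonneg y)] at hnorm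
    have hmul := mul_le_mul_of_nonneg_right hba (hω'.gnsNormSq_nonneg y)
    have hay := ha (m k) y hy
    rw [hre hω']
    linarith
  have hnonneg : 0 ≤ h := nonneg_of_leftAnnihilator_eq_bot (hS (hm k)) (hp k) (hbot k) hω
    (hωp k) hhS hh hδ hhδ
  have hφh := (Complex.le_def.mp (hφ.isPositiveFunctional.apply_nonneg hnonneg)).1
  have hφ1 := hre hφ.isPositiveFunctional 1
  simp only [star_one, one_mul, mul_one, hφ.gnsNormSq_one] at hφ1
  have hφba := (Complex.re_le_norm (φ (b - a))).trans ((hφ.norm_apply_le _).trans hba)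
  rw [Complex.zero_re] at hφh
  linarith

end SpectralOrder

theorem mul_eq_right_of_le_of_forall_succ {p : ℕ → A} (hp : ∀ j, IsIdempotentElem (p j))
    (hsucc : ∀ j, p j * p (j + 1) = p (j + 1)) {j k : ℕ} (hjk : j ≤ k) : p j * p k = p k := by
  induction k, hjk using Nat.le_induction with
  | base => exact hp j
  | succ k _ ih => rw [← hsucc k, ← mul_assoc, ih]

theorem exists_excisedState [Nontrivial A] (hprime : IsPrimeCStar A) (hAF : IsAF A) :
    Nonempty (ExcisedState A) := by
  obtain ⟨S, hS, hfin, hdense⟩ := hAF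
  obtain ⟨m, p, hm, hp, hsucc, hbot⟩ := exists_faithful_sequence hdense hprime hS hfin
  let D : StarSubalgebra ℂ A := ⨆ n, S n
  have hD : (D : Set A) = ⋃ n, (S n : Set A) :=
    StarSubalgebra.coe_iSup_of_directed hS.directed_le
  have hSD (n : ℕ) : S n ≤ D := le_iSup S n
  have hproj (j : ℕ) : IsStarProjection (p j) := (hp j).isStarProjection
  have hleft {j k : ℕ} (hjk : j ≤ k) : p j * p k = p k :=
    mul_eq_right_of_le_of_forall_succ (fun j => (hproj j).isIdempotentElem) hsucc hjk
  have hright {j k : ℕ} (hjk : j ≤ k) : p k * p j = p k :=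
    mul_eq_left_of_mul_eq_right (hproj k).isSelfAdjoint (hproj j).isSelfAdjoint (hleft hjk)
  have hscalar (a : A) (ha : a ∈ D) : ∃ c : ℂ, ∀ᶠ j in atTop, p j * a * p j = c • p j := by
    obtain ⟨n, hn⟩ := Set.mem_iUnion.mp (hD ▸ SetLike.mem_coe.mpr ha)
    obtain ⟨c, hc⟩ := (hp n).exists_smul a (hS (hm n) hn)
    refine ⟨c, ?_⟩
    filter_upwards [eventually_ge_atTop n] with j hj
    calc p j * a * p j = p j * (p n * a * p n) * p j := by
          rw [← mul_assoc, ← mul_assoc, hright hj, mul_assoc _ (p n), hleft hj]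
      _ = c • p j := by
          rw [hc, mul_smul_comm, smul_mul_assoc, hright hj, (hproj j).isIdempotentElem.eq]
  obtain ⟨ω, hω⟩ := exists_functional_of_eventually_eq_smul D.toSubalgebra.toSubmodule hproj
    (fun j => (hp j).ne_zero) hscalar
  have hstate : IsState ω :=
    isState_of_eventually_eq_smul (hD ▸ hdense) hproj (fun j => (hp j).ne_zero) hω
  have hωp (j : ℕ) : ω (p j) = 1 := by
    obtain ⟨k, hk, hjk⟩ := ((hω _ (hSD _ (hp j).mem)).and (eventually_ge_atTop j)).exists
    rw [hright hjk, (hproj k).isIdempotentElem.eq] at hk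
    exact smul_left_injective ℂ (hp k).ne_zero (hk.symm.trans (one_smul ℂ (p k)).symm)
  exact ⟨⟨D, hD ▸ hdense, ω, hstate, p, fun j => hSD _ (hp j).mem, hproj, hωp, hω,
    fun a ha φ hφ => re_nonneg_of_leftAnnihilator_eq_bot hS hfin hdense hm hp hbot hstate hωp
      (fun j y hy => ha y (hSD j hy)) hφ⟩⟩

end Excision

/-! ### Local algebras and product states of the infinite tensor product -/

namespace ShiftTensorModel

variable {A : Type*} [CStarAlgebra A] {T : Type*} [CStarAlgebra T] (M : ShiftTensorModel A T)

theorem commute_e {i j : ℤ} (h : i ≠ j) (x y : A) : Commute (M.e i x) (M.e j y) :=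
  M.commutes i j h x y

/-- The elementary tensor with entries `a i` at the sites `i ∈ J` and `1` elsewhere. -/
def elementaryTensor (J : Finset ℤ) (a : ℤ → A) : T :=
  J.noncommProd (fun i => M.e i (a i)) fun _ _ _ _ h => M.commute_e h _ _

@[simp]
theorem elementaryTensor_empty (a : ℤ → A) : M.elementaryTensor ∅ a = 1 := rfl

variable {J K : Finset ℤ} {i : ℤ}

theorem elementaryTensor_insert (hi : i ∉ J) (a : ℤ → A) :
    M.elementaryTensor (insert i J) a = M.e i (a i) * M.elementaryTensor J a :=
  Finset.noncommProd_insert_of_notMem J i _ _ hi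

theorem elementaryTensor_insert' (hi : i ∉ J) (a : ℤ → A) :
    M.elementaryTensor (insert i J) a = M.elementaryTensor J a * M.e i (a i) :=
  Finset.noncommProd_insert_of_notMem' J i _ _ hi

theorem elementaryTensor_singleton (i : ℤ) (a : ℤ → A) :
    M.elementaryTensor {i} a = M.e i (a i) := by
  rw [← insert_empty_eq, elementaryTensor_insert _ (by simp), elementaryTensor_empty, mul_one]

theorem elementaryTensor_congr {a b : ℤ → A} (h : ∀ i ∈ J, a i = b i) :
    M.elementaryTensor J a = M.elementaryTensor J b :=
  Finset.noncommProd_congr rfl (fun i hi => by rw [h i hi]) _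

theorem elementaryTensor_mul (J : Finset ℤ) (a b : ℤ → A) :
    M.elementaryTensor J (fun i => a i * b i) =
      M.elementaryTensor J a * M.elementaryTensor J b := by
  have hdistrib := Finset.noncommProd_mul_distrib (s := J) (fun i => M.e i (a i))
    (fun i => M.e i (b i)) (fun _ _ _ _ h => M.commute_e h _ _)
    (fun _ _ _ _ h => M.commute_e h _ _) (fun _ _ _ _ h => M.commute_e h _ _)
  rw [elementaryTensor, elementaryTensor, elementaryTensor, ← hdistrib]
  exact Finset.noncommProd_congr rfl (fun i _ => map_mul (M.e i) _ _) _

theorem elementaryTensor_one (J : Finset ℤ) : M.elementaryTensor J (fun _ => 1) = 1 := by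
  induction J using Finset.induction_on with
  | empty => simp
  | insert i J hi ih => rw [elementaryTensor_insert _ hi, ih, map_one, one_mul]

theorem elementaryTensor_union (h : Disjoint J K) (a : ℤ → A) :
    M.elementaryTensor (J ∪ K) a = M.elementaryTensor J a * M.elementaryTensor K a :=
  Finset.noncommProd_union_of_disjoint h _ _

theorem elementaryTensor_extend (h : J ⊆ K) (a : ℤ → A) :
    M.elementaryTensor K (fun i => if i ∈ J then a i else 1) = M.elementaryTensor J a := by
  rw [← Finset.union_sdiff_of_subset h, elementaryTensor_union _ Finset.disjoint_sdiff,
    M.elementaryTensor_congr (b := a) (J := J) fun i hi => if_pos hi,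
    M.elementaryTensor_congr (b := fun _ => 1) (J := K \ J) fun i hi =>
      if_neg (Finset.mem_sdiff.mp hi).2,
    elementaryTensor_one, mul_one]

theorem commute_e_elementaryTensor (hi : i ∉ J) (x : A) (a : ℤ → A) :
    Commute (M.e i x) (M.elementaryTensor J a) :=
  Finset.noncommProd_commute _ _ _ _ fun _ hj => M.commute_e (by rintro rfl; exact hi hj) _ _

theorem commute_elementaryTensor (h : Disjoint J K) (a b : ℤ → A) :
    Commute (M.elementaryTensor J a) (M.elementaryTensor K b) :=
  Finset.noncommProd_commute _ _ _ _ fun _ hj =>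
    (M.commute_e_elementaryTensor (Finset.disjoint_right.mp h hj) _ _).symm

theorem star_elementaryTensor (J : Finset ℤ) (a : ℤ → A) :
    star (M.elementaryTensor J a) = M.elementaryTensor J (fun i => star (a i)) := by
  induction J using Finset.induction_on with
  | empty => simp
  | insert i J hi ih =>
    rw [elementaryTensor_insert _ hi, elementaryTensor_insert' _ hi, star_mul, ih, map_star]

theorem elementaryTensor_smul (J : Finset ℤ) (c : ℤ → ℂ) (a : ℤ → A) :
    M.elementaryTensor J (fun i => c i • a i) = (∏ i ∈ J, c i) • M.elementaryTensor J a := by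
  induction J using Finset.induction_on with
  | empty => simp
  | insert i J hi ih =>
    rw [elementaryTensor_insert _ hi, elementaryTensor_insert _ hi, ih, Finset.prod_insert hi,
      map_smul, smul_mul_smul_comm]

theorem elementaryTensor_toFinset {l : List ℤ} (hl : l.Nodup) (a : ℤ → A) :
    M.elementaryTensor l.toFinset a = (l.map fun i => M.e i (a i)).prod :=
  Finset.noncommProd_toFinset l _ _ hl

/-- `Φ` is the product state with factors `φ i`, expressed through `elementaryTensor`. -/
structure IsProductState (φ : ℤ → (A →L[ℂ] ℂ)) (Φ : T →L[ℂ] ℂ) : Prop where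
  isState_factor : ∀ i, IsState (φ i)
  isState : IsState Φ
  apply_elementaryTensor : ∀ J a, Φ (M.elementaryTensor J a) = ∏ i ∈ J, φ i (a i)

theorem isProductState_of_forall_list {φ : ℤ → (A →L[ℂ] ℂ)} {Φ : T →L[ℂ] ℂ}
    (hφ : ∀ i, IsState (φ i)) (hΦ : IsState Φ) (h : ∀ (l : List ℤ), l.Nodup → ∀ a : ℤ → A,
      Φ ((l.map fun i => M.e i (a i)).prod) = (l.map fun i => φ i (a i)).prod) :
    M.IsProductState φ Φ := by
  refine ⟨hφ, hΦ, fun J a => ?_⟩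
  have hJ := h J.toList J.nodup_toList a
  rwa [← M.elementaryTensor_toFinset J.nodup_toList, Finset.toList_toFinset,
    Finset.prod_map_toList] at hJ

theorem exists_isProductState {φ : ℤ → (A →L[ℂ] ℂ)} (h : ∀ i, IsState (φ i)) :
    ∃ Φ, M.IsProductState φ Φ := by
  obtain ⟨Φ, hΦ, hlist⟩ := M.prodState φ h
  exact ⟨Φ, M.isProductState_of_forall_list h hΦ hlist⟩

variable (D : StarSubalgebra ℂ A)

/-- The algebra generated by the copies of `D` at the sites in `S`. -/
def localAlgebra (S : Set ℤ) : StarSubalgebra ℂ T :=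
  StarAlgebra.adjoin ℂ (⋃ i ∈ S, M.e i '' D)

variable {D} {S S' : Set ℤ}

theorem localAlgebra_mono (h : S ⊆ S') : M.localAlgebra D S ≤ M.localAlgebra D S' :=
  StarAlgebra.adjoin_mono (Set.biUnion_mono h fun _ _ => le_rfl)

theorem e_mem_localAlgebra (hi : i ∈ S) {a : A} (ha : a ∈ D) : M.e i a ∈ M.localAlgebra D S :=
  StarAlgebra.subset_adjoin _ _ (Set.mem_biUnion hi ⟨a, ha, rfl⟩)

theorem elementaryTensor_mem_localAlgebra (hJ : ↑J ⊆ S) {a : ℤ → A} (ha : ∀ i ∈ J, a i ∈ D) :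
    M.elementaryTensor J a ∈ M.localAlgebra D S := by
  induction J using Finset.induction_on with
  | empty => exact one_mem _
  | insert i J hi ih =>
    rw [elementaryTensor_insert _ hi]
    rw [Finset.coe_insert, Set.insert_subset_iff] at hJ
    exact mul_mem (M.e_mem_localAlgebra hJ.1 (ha i (Finset.mem_insert_self _ _)))
      (ih hJ.2 fun j hj => ha j (Finset.mem_insert_of_mem hj))

variable (D) in
/-- The elementary tensors supported in `S` with entries in `D`; they span the local algebra. -/
def elementaryTensors (S : Set ℤ) : Set T :=
  {x | ∃ (J : Finset ℤ) (a : ℤ → A), ↑J ⊆ S ∧ (∀ i, a i ∈ D) ∧ x = M.elementaryTensor J a}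

theorem mul_mem_elementaryTensors {x y : T} (hx : x ∈ M.elementaryTensors D S)
    (hy : y ∈ M.elementaryTensors D S) : x * y ∈ M.elementaryTensors D S := by
  obtain ⟨J, a, hJ, ha, rfl⟩ := hx
  obtain ⟨K, b, hK, hb, rfl⟩ := hy
  refine ⟨J ∪ K, fun i => (if i ∈ J then a i else 1) * (if i ∈ K then b i else 1), by simp [hJ, hK],
    fun i => ?_, ?_⟩
  · refine mul_mem ?_ ?_ <;> split_ifs
    exacts [ha i, one_mem _, hb i, one_mem _]
  · rw [elementaryTensor_mul, elementaryTensor_extend _ Finset.subset_union_left,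
      elementaryTensor_extend _ Finset.subset_union_right]

theorem star_mem_span_elementaryTensors {x : T}
    (hx : x ∈ Submodule.span ℂ (M.elementaryTensors D S)) :
    star x ∈ Submodule.span ℂ (M.elementaryTensors D S) := by
  induction hx using Submodule.span_induction with
  | mem x hx =>
    obtain ⟨J, a, hJ, ha, rfl⟩ := hx
    exact Submodule.subset_span ⟨J, _, hJ, fun i => star_mem (ha i), M.star_elementaryTensor J a⟩
  | zero => simp
  | add x y _ _ hx hy => rw [star_add]; exact add_mem hx hy
  | smul c x _ hx => rw [star_smul]; exact Submodule.smul_mem _ _ hx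

theorem mem_span_elementaryTensors {x : T} (hx : x ∈ M.localAlgebra D S) :
    x ∈ Submodule.span ℂ (M.elementaryTensors D S) := by
  set X := M.elementaryTensors D S
  have hmul : Submodule.span ℂ X * Submodule.span ℂ X ≤ Submodule.span ℂ X := by
    rw [Submodule.span_mul_span]
    exact Submodule.span_mono
      (Set.mul_subset_iff.mpr fun x hx y hy => M.mul_mem_elementaryTensors hx hy)
  have hone : (1 : T) ∈ Submodule.span ℂ X :=
    Submodule.subset_span ⟨∅, fun _ => 1, by simp, fun _ => one_mem _, by simp⟩
  induction hx using StarAlgebra.adjoin_induction with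
  | mem x hx =>
    obtain ⟨i, hi, a, ha, rfl⟩ := Set.mem_iUnion₂.mp hx
    exact Submodule.subset_span ⟨{i}, fun _ => a, by simpa using hi, fun _ => ha,
      by rw [elementaryTensor_singleton]⟩
  | algebraMap r => rw [Algebra.algebraMap_eq_smul_one]; exact Submodule.smul_mem _ _ hone
  | add x y _ _ hx hy => exact add_mem hx hy
  | mul x y _ _ hx hy => exact hmul (Submodule.mul_mem_mul hx hy)
  | star x _ hx => exact M.star_mem_span_elementaryTensors hx

theorem localAlgebra_induction {P : T → Prop}
    (tensor : ∀ (J : Finset ℤ) (a : ℤ → A), ↑J ⊆ S → (∀ i, a i ∈ D) → P (M.elementaryTensor J a))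
    (add : ∀ x y, P x → P y → P (x + y)) (smul : ∀ (c : ℂ) x, P x → P (c • x)) {x : T}
    (hx : x ∈ M.localAlgebra D S) : P x := by
  have hspan := M.mem_span_elementaryTensors hx
  clear hx
  induction hspan using Submodule.span_induction with
  | mem x hx =>
    obtain ⟨J, a, hJ, ha, rfl⟩ := hx
    exact tensor J a hJ ha
  | zero =>
    have hzero := smul 0 _ (tensor ∅ (fun _ => 1) (by simp) fun _ => one_mem _)
    rwa [zero_smul] at hzero
  | add x y _ _ hx hy => exact add _ _ hx hy
  | smul c x _ hx => exact smul _ _ hx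

theorem commute_of_mem_localAlgebra (h : Disjoint S S') {x y : T} (hx : x ∈ M.localAlgebra D S)
    (hy : y ∈ M.localAlgebra D S') : Commute x y := by
  refine M.localAlgebra_induction (P := Commute x) (fun J a hJ _ => ?_)
    (fun _ _ => Commute.add_right) (fun c _ hy => hy.smul_right c) hy
  refine M.localAlgebra_induction (P := (Commute · (M.elementaryTensor J a))) (fun K b hK _ => ?_)
    (fun _ _ => Commute.add_left) (fun c _ hx => hx.smul_left c) hx
  exact M.commute_elementaryTensor (Finset.disjoint_coe.mp (h.mono hK hJ)) _ _

theorem exists_mem_localAlgebra_Ico {x : T} (hx : x ∈ M.localAlgebra D S) :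
    ∃ N : ℕ, x ∈ M.localAlgebra D (Set.Ico (-N : ℤ) N) := by
  refine M.localAlgebra_induction (P := fun x => ∃ N : ℕ, x ∈ M.localAlgebra D (Set.Ico (-N : ℤ) N))
    (fun J a _ ha => ?_) ?_ ?_ hx
  · have hJ (i : ℤ) (hi : i ∈ J) : i.natAbs ≤ ∑ i ∈ J, i.natAbs :=
      Finset.single_le_sum (f := Int.natAbs) (fun _ _ => Nat.zero_le _) hi
    refine ⟨∑ i ∈ J, i.natAbs + 1, M.elementaryTensor_mem_localAlgebra (fun i hi => ?_)
      fun i _ => ha i⟩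
    have hi' := hJ i hi
    constructor <;> omega
  · rintro x y ⟨N, hx⟩ ⟨K, hy⟩
    refine ⟨max N K, add_mem (M.localAlgebra_mono ?_ hx) (M.localAlgebra_mono ?_ hy)⟩ <;>
      apply Set.Ico_subset_Ico <;> push_cast <;> omega
  · rintro c x ⟨N, hx⟩
    exact ⟨N, (M.localAlgebra D _).smul_mem hx c⟩

theorem continuous_e (i : ℤ) : Continuous (M.e i) :=
  AddMonoidHomClass.continuous_of_bound (M.e i) 1 fun a => by
    simpa using NonUnitalStarAlgHom.norm_apply_le (M.e i) a

theorem dense_localAlgebra_univ (hD : Dense (D : Set A)) :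
    Dense (M.localAlgebra D Set.univ : Set T) := by
  have hgen : StarAlgebra.adjoin ℂ (⋃ n : ℤ, Set.range (M.e n)) ≤
      (M.localAlgebra D Set.univ).topologicalClosure := by
    refine StarAlgebra.adjoin_le (Set.iUnion_subset fun n => ?_)
    rintro _ ⟨a, rfl⟩
    refine closure_mono ?_ (image_closure_subset_closure_image (M.continuous_e n) ⟨a, hD a, rfl⟩)
    rintro _ ⟨d, hd, rfl⟩
    exact M.e_mem_localAlgebra (Set.mem_univ n) hd
  have htop := StarSubalgebra.topologicalClosure_minimal hgen
    (StarSubalgebra.isClosed_topologicalClosure _)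
  rw [M.generating] at htop
  exact fun x => htop (StarSubalgebra.mem_top (x := x))

/-- The translation by `c` sites. -/
noncomputable def translate (c : ℤ) : T ≃⋆ₐ[ℂ] T := M.shift ^ c

theorem translate_one (x : T) : M.translate 1 x = M.shift x := by simp [translate]

theorem translate_zero (x : T) : M.translate 0 x = x := by simp [translate]

theorem translate_add (c d : ℤ) (x : T) :
    M.translate (c + d) x = M.translate c (M.translate d x) := by
  simp [translate, zpow_add]

theorem translate_e (c i : ℤ) (a : A) : M.translate c (M.e i a) = M.e (i + c) a := by
  have hneg (i : ℤ) : M.translate (-1) (M.e i a) = M.e (i - 1) a := by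
    nth_rw 1 [← sub_add_cancel i 1]
    rw [← M.shift_apply, ← translate_one, ← translate_add, neg_add_cancel, translate_zero]
  induction c using Int.induction_on generalizing i with
  | zero => rw [translate_zero, add_zero]
  | succ c ih =>
    rw [translate_add, translate_one, M.shift_apply, ih, show i + 1 + c = i + (c + 1) by ring]
  | pred c ih =>
    rw [sub_eq_add_neg, translate_add, hneg, ih, show i - 1 + -c = i + (-c + -1 : ℤ) by ring]

theorem translate_elementaryTensor (c : ℤ) (J : Finset ℤ) (a : ℤ → A) :
    M.translate c (M.elementaryTensor J a) =
      M.elementaryTensor (J.map (addRightEmbedding c)) fun i => a (i - c) := by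
  induction J using Finset.induction_on with
  | empty => simp
  | insert i J hi ih =>
    rw [elementaryTensor_insert _ hi, Finset.map_insert,
      elementaryTensor_insert _ (by simpa using hi), map_mul, ih, translate_e]
    simp

theorem translate_mem_localAlgebra (c : ℤ) (h : ∀ i ∈ S, i + c ∈ S') {x : T}
    (hx : x ∈ M.localAlgebra D S) : M.translate c x ∈ M.localAlgebra D S' := by
  have hle : M.localAlgebra D S ≤ (M.localAlgebra D S').comap (M.translate c : T →⋆ₐ[ℂ] T) := by
    refine StarAlgebra.adjoin_le (Set.iUnion₂_subset fun i hi => ?_)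
    rintro _ ⟨a, ha, rfl⟩
    change M.translate c (M.e i a) ∈ M.localAlgebra D S'
    rw [translate_e]
    exact M.e_mem_localAlgebra (h i hi) ha
  exact hle hx

theorem continuous_translate (c : ℤ) : Continuous (M.translate c) :=
  AddMonoidHomClass.continuous_of_bound (M.translate c) 1 fun a => by
    simpa using NonUnitalStarAlgHom.norm_apply_le (M.translate c) a

namespace IsProductState

variable {M} {φ : ℤ → (A →L[ℂ] ℂ)} {Φ : T →L[ℂ] ℂ}

theorem apply_mul (hΦ : M.IsProductState φ Φ) (h : Disjoint S S') {x y : T}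
    (hx : x ∈ M.localAlgebra D S) (hy : y ∈ M.localAlgebra D S') : Φ (x * y) = Φ x * Φ y := by
  refine M.localAlgebra_induction (P := fun y => Φ (x * y) = Φ x * Φ y) (fun K b hK _ => ?_)
    (fun y z hy hz => by rw [mul_add, map_add, hy, hz, map_add, mul_add])
    (fun c y hy => by rw [mul_smul_comm, map_smul, hy, map_smul, mul_smul_comm]) hy
  refine M.localAlgebra_induction
    (P := fun x => Φ (x * M.elementaryTensor K b) = Φ x * Φ (M.elementaryTensor K b))
    (fun J a hJ _ => ?_)
    (fun x z hx hz => by rw [add_mul, map_add, hx, hz, map_add, add_mul])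
    (fun c x hx => by rw [smul_mul_assoc, map_smul, hx, map_smul, smul_mul_assoc]) hx
  have hJK : Disjoint J K := Finset.disjoint_coe.mp (h.mono hJ hK)
  rw [M.elementaryTensor_congr (J := J) (b := fun i => if i ∈ J then a i else b i)
      fun i hi => (if_pos hi).symm,
    M.elementaryTensor_congr (J := K) (b := fun i => if i ∈ J then a i else b i)
      fun i hi => (if_neg (Finset.disjoint_right.mp hJK hi)).symm,
    ← M.elementaryTensor_union hJK, hΦ.apply_elementaryTensor, hΦ.apply_elementaryTensor,
    hΦ.apply_elementaryTensor, Finset.prod_union hJK]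

theorem apply_e (hΦ : M.IsProductState φ Φ) (i : ℤ) (a : A) : Φ (M.e i a) = φ i a := by
  rw [← M.elementaryTensor_singleton i (fun _ => a), hΦ.apply_elementaryTensor,
    Finset.prod_singleton]

theorem apply_translate {ω : A →L[ℂ] ℂ} {Ω : T →L[ℂ] ℂ} (hΩ : M.IsProductState (fun _ => ω) Ω)
    (c : ℤ) (x : T) : Ω (M.translate c x) = Ω x := by
  have hcont := M.continuous_translate c
  have heq : Set.EqOn (fun x => Ω (M.translate c x)) Ω (M.localAlgebra ⊤ Set.univ) := fun _ =>
    M.localAlgebra_induction (P := fun x => Ω (M.translate c x) = Ω x)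
      (fun J a _ _ => by
        rw [translate_elementaryTensor, hΩ.apply_elementaryTensor, hΩ.apply_elementaryTensor,
          Finset.prod_map]
        simp)
      (fun x y hx hy => by rw [map_add, map_add, hx, hy, map_add])
      (fun r x hx => by rw [map_smul, map_smul, hx, map_smul])
  exact congrFun (Continuous.ext_on (M.dense_localAlgebra_univ (D := ⊤) (by simp)) (by fun_prop)
    Ω.continuous heq) x

end IsProductState

end ShiftTensorModel

/-! ### The tensor power of an excised state -/

namespace ShiftTensorModel

variable {A : Type*} [CStarAlgebra A] {T : Type*} [CStarAlgebra T] {M : ShiftTensorModel A T}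
  {D : StarSubalgebra ℂ A}

theorem e_eq_elementaryTensor_insert (k : ℤ) (J : Finset ℤ) (x : A) :
    M.e k x = M.elementaryTensor (insert k J) (Function.update 1 k x) := by
  have hextend := M.elementaryTensor_extend (J := {k}) (K := insert k J) (by simp)
    (Function.update 1 k x)
  rw [elementaryTensor_singleton, Function.update_self] at hextend
  rw [← hextend]
  refine M.elementaryTensor_congr fun i _ => ?_
  by_cases hi : i = k
  · subst hi; simp
  · simp [hi]

/-- Slicing: a local observable, seen as a function of the factor at `k` only. -/
theorem exists_slice {φ : ℤ → (A →L[ℂ] ℂ)} (k : ℤ) {u : T}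
    (hu : u ∈ M.localAlgebra D Set.univ) :
    ∃ b : A, ∀ (ρ : A →L[ℂ] ℂ) (Φ : T →L[ℂ] ℂ), M.IsProductState (Function.update φ k ρ) Φ →
      ∀ x z, Φ (M.e k x * (u * M.e k z)) = ρ (x * (b * z)) := by
  refine M.localAlgebra_induction (P := fun u => ∃ b : A, ∀ (ρ : A →L[ℂ] ℂ) (Φ : T →L[ℂ] ℂ),
    M.IsProductState (Function.update φ k ρ) Φ →
      ∀ x z, Φ (M.e k x * (u * M.e k z)) = ρ (x * (b * z))) ?_ ?_ ?_ hu
  · intro J a _ _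
    let a' : ℤ → A := fun i => if i ∈ J then a i else 1
    refine ⟨(∏ i ∈ J.erase k, φ i (a i)) • a' k, fun ρ Φ hΦ x z => ?_⟩
    have herase : (insert k J).erase k = J.erase k := by ext; simp
    have hother : ∀ i ∈ J.erase k, Function.update φ k ρ i
        (Function.update (1 : ℤ → A) k x i * (a' i * Function.update (1 : ℤ → A) k z i)) =
          φ i (a i) := fun i hi => by
      rw [Finset.mem_erase] at hi
      simp [hi.1, hi.2, a']
    rw [← M.elementaryTensor_extend (Finset.subset_insert k J) a,
      e_eq_elementaryTensor_insert k J x, e_eq_elementaryTensor_insert k J z,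
      ← elementaryTensor_mul, ← elementaryTensor_mul, hΦ.apply_elementaryTensor,
      ← Finset.mul_prod_erase _ _ (Finset.mem_insert_self k J), herase,
      Finset.prod_congr rfl hother]
    simp only [Function.update_self, smul_mul_assoc, mul_smul_comm, map_smul, smul_eq_mul]
    exact mul_comm _ _
  · rintro u v ⟨b, hb⟩ ⟨c, hc⟩
    refine ⟨b + c, fun ρ Φ hΦ x z => ?_⟩
    simp only [add_mul, mul_add, map_add, hb ρ Φ hΦ, hc ρ Φ hΦ]
  · rintro r u ⟨b, hb⟩
    refine ⟨r • b, fun ρ Φ hΦ x z => ?_⟩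
    simp only [smul_mul_assoc, mul_smul_comm, map_smul, hb ρ Φ hΦ]

theorem IsProductState.apply_eq {φ φ' : ℤ → (A →L[ℂ] ℂ)} {Φ Φ' : T →L[ℂ] ℂ}
    (hΦ : M.IsProductState φ Φ) (hΦ' : M.IsProductState φ' Φ') {S : Set ℤ}
    (h : ∀ i ∈ S, φ i = φ' i) {x : T} (hx : x ∈ M.localAlgebra D S) : Φ x = Φ' x := by
  refine M.localAlgebra_induction (P := fun x => Φ x = Φ' x) (fun J a hJ _ => ?_)
    (fun x y hx hy => by rw [map_add, map_add, hx, hy])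
    (fun c x hx => by rw [map_smul, map_smul, hx]) hx
  rw [hΦ.apply_elementaryTensor, hΦ'.apply_elementaryTensor]
  exact Finset.prod_congr rfl fun i hi => by rw [h i (hJ hi)]

section Detection

variable {E : ExcisedState A} {Ω : T →L[ℂ] ℂ} {J : Finset ℤ} {t : T} {φ : ℤ → (A →L[ℂ] ℂ)}
  {Φ : T →L[ℂ] ℂ}

/-- The factors different from `ω` are introduced one at a time; each replacement is an instance
of the one-site detection property applied to a slice. -/
theorem re_apply_nonneg_of_forall_notMem (hΩ : M.IsProductState (fun _ => E.ω) Ω)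
    (ht : t ∈ M.localAlgebra E.D (J : Set ℤ))
    (hpos : ∀ y ∈ M.localAlgebra E.D (J : Set ℤ), 0 ≤ (Ω (star y * (t * y))).re)
    {K : Finset ℤ} (hKJ : K ⊆ J) (hΦ : M.IsProductState φ Φ) (hφ : ∀ i ∉ K, φ i = E.ω)
    {y : T} (hy : y ∈ M.localAlgebra E.D (J : Set ℤ)) : 0 ≤ (Φ (star y * (t * y))).re := by
  have hyty {y : T} (hy : y ∈ M.localAlgebra E.D (J : Set ℤ)) :
      star y * (t * y) ∈ M.localAlgebra E.D J := mul_mem (star_mem hy) (mul_mem ht hy)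
  induction K using Finset.induction_on generalizing φ Φ y with
  | empty =>
    rw [hΦ.apply_eq hΩ (fun i _ => hφ i (Finset.notMem_empty i)) (hyty hy)]
    exact hpos y hy
  | insert k K hk ih =>
    have hreplace (i : ℤ) : IsState (Function.update φ k E.ω i) := by
      by_cases hi : i = k
      · subst hi; simpa using E.isState
      · simpa [hi] using hΦ.isState_factor i
    have hreplaced : ∀ i ∉ K, Function.update φ k E.ω i = E.ω := fun i hi => by
      by_cases hik : i = k
      · subst hik; simp
      · simpa [hik] using hφ i (by simp [hik, hi])
    obtain ⟨Φ₀, hΦ₀⟩ := M.exists_isProductState hreplace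
    obtain ⟨b, hb⟩ := exists_slice (φ := φ) k (M.localAlgebra_mono (Set.subset_univ _) (hyty hy))
    have hslice := hb (φ k) Φ (by simpa using hΦ) 1 1
    simp only [map_one, one_mul, mul_one] at hslice
    rw [hslice]
    refine E.detects b (fun x hx => ?_) _ (hΦ.isState_factor k)
    have hyx := mul_mem hy (M.e_mem_localAlgebra (i := k) (hKJ (Finset.mem_insert_self k K)) hx)
    have hpos' := ih ((Finset.subset_insert k K).trans hKJ) hΦ₀ hreplaced hyx
    rw [← hb _ _ hΦ₀]
    simpa only [star_mul, map_star, mul_assoc] using hpos'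

theorem re_apply_nonneg_of_isProductState (hΩ : M.IsProductState (fun _ => E.ω) Ω)
    (ht : t ∈ M.localAlgebra E.D (J : Set ℤ))
    (hpos : ∀ y ∈ M.localAlgebra E.D (J : Set ℤ), 0 ≤ (Ω (star y * (t * y))).re)
    (hΦ : M.IsProductState φ Φ) {y : T} (hy : y ∈ M.localAlgebra E.D (J : Set ℤ)) :
    0 ≤ (Φ (star y * (t * y))).re := by
  have hstate (i : ℤ) : IsState (if i ∈ J then φ i else E.ω) := by
    split_ifs
    exacts [hΦ.isState_factor i, E.isState]
  obtain ⟨Φ', hΦ'⟩ := M.exists_isProductState hstate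
  rw [hΦ.apply_eq hΦ' (fun i hi => (if_pos (Finset.mem_coe.mp hi)).symm)
    (mul_mem (star_mem hy) (mul_mem ht hy))]
  exact re_apply_nonneg_of_forall_notMem hΩ ht hpos le_rfl hΦ' (fun i hi => if_neg hi) hy

section SpectralOrder

attribute [local instance] CStarAlgebra.spectralOrder CStarAlgebra.spectralOrderedRing

variable (M) in
theorem eq_zero_of_forall_isProductState {w : T} (hw : 0 ≤ w)
    (h : ∀ φ Φ, M.IsProductState φ Φ → Φ w = 0) : w = 0 := by
  by_contra hw0
  obtain ⟨φ, Φ, hφ, hΦ, hΦw, hlist⟩ :=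
    M.minimality w (CStarAlgebra.nonneg_iff_eq_star_mul_self.mp hw) hw0
  exact hΦw (h φ Φ (M.isProductState_of_forall_list hφ hΦ hlist))

/-- The negative part `n` of the real part `h` of `t` satisfies `n h n = -n³`, so that every
product state vanishes on `n³`. -/
theorem re_apply_nonneg (hΩ : M.IsProductState (fun _ => E.ω) Ω)
    (ht : t ∈ M.localAlgebra E.D (J : Set ℤ))
    (hpos : ∀ y ∈ M.localAlgebra E.D (J : Set ℤ), 0 ≤ (Ω (star y * (t * y))).re)
    {φ : T →L[ℂ] ℂ} (hφ : IsState φ) : 0 ≤ (φ t).re := by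
  set h : T := (realPart t : T)
  have hh : IsSelfAdjoint h := (realPart t).2
  set B := (M.localAlgebra E.D (J : Set ℤ)).topologicalClosure
  have : IsClosed (B : Set T) := StarSubalgebra.isClosed_topologicalClosure _
  have hnB : h⁻ ∈ B :=
    negPart_mem ((M.localAlgebra E.D (J : Set ℤ)).le_topologicalClosure (realPart_mem _ ht))
  have hn : 0 ≤ h⁻ := CFC.negPart_nonneg h
  have hcube : h⁻ * (h * h⁻) = -(h⁻ * h⁻ * h⁻) := by
    nth_rw 2 [← CFC.posPart_sub_negPart h hh]
    rw [sub_mul, CFC.posPart_mul_negPart, zero_sub, mul_neg, mul_assoc]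
  have hcube_nonneg : 0 ≤ h⁻ * h⁻ * h⁻ := hn.isSelfAdjoint.conjugate_nonneg hn
  have hcube_zero : h⁻ * h⁻ * h⁻ = 0 := by
    refine M.eq_zero_of_forall_isProductState hcube_nonneg fun ψ Ψ hΨ => ?_
    have hclosed : IsClosed {y : T | 0 ≤ (Ψ (star y * (h * y))).re} :=
      isClosed_le continuous_const (by fun_prop)
    have hB : 0 ≤ (Ψ (star h⁻ * (h * h⁻))).re := by
      refine closure_minimal (fun y hy => ?_) hclosed hnB
      rw [Set.mem_ofPred_eq, hΨ.isState.isPositiveFunctional.re_apply_star_mul_realPart_mul]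
      exact re_apply_nonneg_of_isProductState hΩ ht hpos hΨ hy
    rw [hn.isSelfAdjoint.star_eq, hcube, map_neg, Complex.neg_re, neg_nonneg] at hB
    have hΨn := Complex.le_def.mp (hΨ.isState.isPositiveFunctional.apply_nonneg hcube_nonneg)
    exact Complex.ext (le_antisymm hB hΨn.1) hΨn.2.symm
  have hsq_zero : h⁻ * h⁻ = 0 := by
    rw [← CStarRing.star_mul_self_eq_zero_iff, star_mul, hn.isSelfAdjoint.star_eq, ← mul_assoc,
      hcube_zero, zero_mul]
  have hn_zero : h⁻ = 0 := by
    rwa [← CStarRing.star_mul_self_eq_zero_iff, hn.isSelfAdjoint.star_eq]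
  have hre := hφ.isPositiveFunctional.re_apply_star_mul_realPart_mul t 1
  simp only [star_one, one_mul, mul_one] at hre
  rw [← hre]
  exact (Complex.le_def.mp (hφ.isPositiveFunctional.apply_nonneg
    ((CFC.negPart_eq_zero_iff h hh).mp hn_zero))).1

end SpectralOrder

end Detection

end ShiftTensorModel

/-- A C*-algebra with local subalgebras indexed by sets of sites, a translation action, and a
translation invariant product state `Ω` that is excised by local projections and whose local
vector states determine positivity. -/
structure LocalSystem (T : Type*) [CStarAlgebra T] where
  localAlgebra : Set ℤ → StarSubalgebra ℂ T
  Ω : T →L[ℂ] ℂ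
  translate : ℤ → T ≃⋆ₐ[ℂ] T
  excisor : Finset ℤ → ℕ → T
  mono : ∀ {S S' : Set ℤ}, S ⊆ S' → localAlgebra S ≤ localAlgebra S'
  isState : IsState Ω
  commute : ∀ {S S' : Set ℤ}, Disjoint S S' → ∀ {x y : T}, x ∈ localAlgebra S →
    y ∈ localAlgebra S' → Commute x y
  Ω_mul : ∀ {S S' : Set ℤ}, Disjoint S S' → ∀ {x y : T}, x ∈ localAlgebra S →
    y ∈ localAlgebra S' → Ω (x * y) = Ω x * Ω y
  translate_zero : ∀ x, translate 0 x = x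
  translate_add : ∀ c d x, translate (c + d) x = translate c (translate d x)
  translate_mem : ∀ {S S' : Set ℤ} (c : ℤ), (∀ i ∈ S, i + c ∈ S') → ∀ {x}, x ∈ localAlgebra S →
    translate c x ∈ localAlgebra S'
  Ω_translate : ∀ c x, Ω (translate c x) = Ω x
  excisor_mem : ∀ (J : Finset ℤ) m, excisor J m ∈ localAlgebra (J : Set ℤ)
  isSelfAdjoint_excisor : ∀ J m, IsSelfAdjoint (excisor J m)
  excisor_mul : ∀ {J J' : Finset ℤ}, J ⊆ J' → ∀ m, excisor J m * excisor J' m = excisor J' m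
  Ω_excisor : ∀ J m, Ω (excisor J m) = 1
  excises : ∀ {J : Finset ℤ} {x : T}, x ∈ localAlgebra (J : Set ℤ) →
    ∀ᶠ m in Filter.atTop, excisor J m * x * excisor J m = Ω x • excisor J m
  detects : ∀ {J : Finset ℤ} {t : T}, t ∈ localAlgebra (J : Set ℤ) →
    (∀ y ∈ localAlgebra (J : Set ℤ), 0 ≤ (Ω (star y * (t * y))).re) →
    ∀ φ : T →L[ℂ] ℂ, IsState φ → 0 ≤ (φ t).re
  dense : Dense (localAlgebra Set.univ : Set T)
  exists_mem_Ico : ∀ {x : T}, x ∈ localAlgebra Set.univ →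
    ∃ N : ℕ, x ∈ localAlgebra (Set.Ico (-N : ℤ) N)

/-- A translation covariant family of one-site elements that are normalized and orthogonal to
the identity in the product state. -/
structure LocalSystem.Marker {T : Type*} [CStarAlgebra T] (L : LocalSystem T) where
  v : ℤ → T
  v_mem : ∀ u, v u ∈ L.localAlgebra {u}
  translate_v : ∀ c u, L.translate c (v u) = v (u + c)
  Ω_v : ∀ u, L.Ω (v u) = 0
  gnsNormSq_v : ∀ u, gnsNormSq L.Ω (v u) = 1

namespace ShiftTensorModel

variable {A : Type*} [CStarAlgebra A] {T : Type*} [CStarAlgebra T] (M : ShiftTensorModel A T)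
  {E : ExcisedState A} {Ω : T →L[ℂ] ℂ}

theorem eventually_excise (hΩ : M.IsProductState (fun _ => E.ω) Ω) {J : Finset ℤ} {x : T}
    (hx : x ∈ M.localAlgebra E.D (J : Set ℤ)) :
    ∀ᶠ m in Filter.atTop,
      M.elementaryTensor J (fun _ => E.p m) * x * M.elementaryTensor J (fun _ => E.p m) =
        Ω x • M.elementaryTensor J (fun _ => E.p m) := by
  refine M.localAlgebra_induction (P := fun x => ∀ᶠ m in Filter.atTop,
    M.elementaryTensor J (fun _ => E.p m) * x * M.elementaryTensor J (fun _ => E.p m) =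
      Ω x • M.elementaryTensor J (fun _ => E.p m)) ?_ ?_ ?_ hx
  · intro K a hK ha
    have hone_site : ∀ᶠ m in Filter.atTop, ∀ i ∈ J, E.p m * a i * E.p m = E.ω (a i) • E.p m :=
      (Filter.eventually_all_finset J).mpr fun i _ => E.excises _ (ha i)
    filter_upwards [hone_site] with m hm
    rw [← M.elementaryTensor_extend (Finset.coe_subset.mp hK), ← M.elementaryTensor_mul,
      ← M.elementaryTensor_mul, hΩ.apply_elementaryTensor, ← M.elementaryTensor_smul]
    refine M.elementaryTensor_congr fun i hi => ?_
    split_ifs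
    · exact hm i hi
    · rw [mul_one, (E.isStarProjection m).isIdempotentElem.eq, E.isState.map_one, one_smul]
  · intro x y hx hy
    filter_upwards [hx, hy] with m hmx hmy
    rw [mul_add, add_mul, hmx, hmy, map_add, add_smul]
  · intro c x hx
    filter_upwards [hx] with m hm
    rw [mul_smul_comm, smul_mul_assoc, hm, map_smul, smul_smul, smul_eq_mul]

/-- The local system generated by the tensor power `Ω` of an excised state. -/
noncomputable def localSystem (hΩ : M.IsProductState (fun _ => E.ω) Ω) : LocalSystem T where
  localAlgebra := M.localAlgebra E.D
  Ω := Ω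
  translate := M.translate
  excisor J m := M.elementaryTensor J fun _ => E.p m
  mono := M.localAlgebra_mono
  isState := hΩ.isState
  commute h _ _ := M.commute_of_mem_localAlgebra h
  Ω_mul h _ _ := hΩ.apply_mul h
  translate_zero := M.translate_zero
  translate_add := M.translate_add
  translate_mem c h _ := M.translate_mem_localAlgebra c h
  Ω_translate := hΩ.apply_translate
  excisor_mem J m := M.elementaryTensor_mem_localAlgebra le_rfl fun _ _ => E.p_mem m
  isSelfAdjoint_excisor J m := by
    rw [IsSelfAdjoint, M.star_elementaryTensor, (E.isStarProjection m).isSelfAdjoint.star_eq]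
  excisor_mul {J J'} h m := by
    rw [← M.elementaryTensor_extend h, ← M.elementaryTensor_mul]
    refine M.elementaryTensor_congr fun i _ => ?_
    split_ifs
    exacts [(E.isStarProjection m).isIdempotentElem.eq, one_mul _]
  Ω_excisor J m := by
    rw [hΩ.apply_elementaryTensor, E.ω_p, Finset.prod_const_one]
  excises := M.eventually_excise hΩ
  detects ht h _ := re_apply_nonneg hΩ ht h
  dense := M.dense_localAlgebra_univ E.dense
  exists_mem_Ico := M.exists_mem_localAlgebra_Ico

/-- The marker given by a vector of `A` orthogonal to the identity. -/
noncomputable def marker (hΩ : M.IsProductState (fun _ => E.ω) Ω) {v : A} (hv : v ∈ E.D)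
    (hv0 : E.ω v = 0) (hv1 : gnsNormSq E.ω v = 1) : (M.localSystem hΩ).Marker where
  v u := M.e u v
  v_mem u := M.e_mem_localAlgebra (Set.mem_singleton u) hv
  translate_v c u := M.translate_e c u v
  Ω_v u := (hΩ.apply_e u v).trans hv0
  gnsNormSq_v u := by
    rw [gnsNormSq, ← map_star, ← map_mul]
    exact (congrArg Complex.re (hΩ.apply_e u _)).trans hv1

end ShiftTensorModel

/-! ### The degenerate case of a one-dimensional GNS space -/

section Degenerate

variable {A : Type*} [CStarAlgebra A] {T : Type*} [CStarAlgebra T] (M : ShiftTensorModel A T)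
  {E : ExcisedState A}

theorem ExcisedState.gnsNormSq_sub_apply_smul_one
    (h : ∀ v ∈ E.D, E.ω v = 0 → gnsNormSq E.ω v ≠ 1) {a : A} (ha : a ∈ E.D) :
    gnsNormSq E.ω (a - E.ω a • 1) = 0 := by
  set b := a - E.ω a • (1 : A) with hb
  have hbD : b ∈ E.D := sub_mem ha (E.D.smul_mem (one_mem _) _)
  have hb0 : E.ω b = 0 := by simp [hb, E.isState.map_one]
  by_contra hne
  refine h ((((√(gnsNormSq E.ω b))⁻¹ : ℝ) : ℂ) • b) (E.D.smul_mem hbD _)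
    (by rw [map_smul, hb0, smul_zero]) ?_
  rw [gnsNormSq_smul, Complex.norm_real, Real.norm_eq_abs, sq_abs, inv_pow,
    Real.sq_sqrt (E.isState.isPositiveFunctional.gnsNormSq_nonneg b), inv_mul_cancel₀ hne]

theorem IsPositiveFunctional.apply_mul_eq_zero {φ : A →L[ℂ] ℂ} (hφ : IsPositiveFunctional φ)
    {b : A} (hb : gnsNormSq φ (star b) = 0) (y : A) : φ (b * y) = 0 := by
  have hle := hφ.norm_apply_star_mul_le (star b) y
  rwa [hb, Real.sqrt_zero, zero_mul, star_star, norm_le_zero_iff] at hle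

include M in
theorem ExcisedState.eq_apply_smul_one (h : ∀ v ∈ E.D, E.ω v = 0 → gnsNormSq E.ω v ≠ 1) {a : A}
    (ha : a ∈ E.D) : a = E.ω a • 1 := by
  set b := a - E.ω a • (1 : A) with hb
  have hbD : b ∈ E.D := sub_mem ha (E.D.smul_mem (one_mem _) _)
  have hstar : star b = star a - E.ω (star a) • 1 := by
    rw [hb, star_sub, star_smul, star_one, E.isState.isPositiveFunctional.map_star]
  have hnull : ∀ y ∈ E.D, gnsNormSq E.ω (b * y) = 0 := fun y hy => by
    have hby := E.isState.isPositiveFunctional.apply_mul_eq_zero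
      (hstar ▸ gnsNormSq_sub_apply_smul_one h (star_mem ha)) y
    simpa [hby] using gnsNormSq_sub_apply_smul_one h (mul_mem hbD hy)
  have hstate {ρ : A →L[ℂ] ℂ} (hρ : IsState ρ) : gnsNormSq ρ b = 0 := by
    have hneg := E.detects (-(star b * b)) (fun y hy => by
      have heq : star y * (-(star b * b) * y) = -(star (b * y) * (b * y)) := by
        simp only [star_mul, neg_mul, mul_neg, mul_assoc]
      rw [heq, map_neg, Complex.neg_re]
      exact (neg_eq_zero.mpr (hnull y hy)).ge) ρ hρ
    rw [map_neg, Complex.neg_re, neg_nonneg] at hneg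
    exact le_antisymm hneg (hρ.isPositiveFunctional.gnsNormSq_nonneg b)
  suffices hb0 : M.e 0 (star b * b) = 0 by
    rw [map_mul, map_star, CStarRing.star_mul_self_eq_zero_iff] at hb0
    exact sub_eq_zero.mp (M.inj 0 (hb0.trans (map_zero _).symm))
  let := CStarAlgebra.spectralOrder T
  let := CStarAlgebra.spectralOrderedRing T
  rw [map_mul, map_star]
  refine M.eq_zero_of_forall_isProductState (star_mul_self_nonneg _) fun ρ Φ hΦ => ?_
  rw [← map_star, ← map_mul, hΦ.apply_e, ← (hΦ.isState_factor 0).isPositiveFunctional.coe_gnsNormSq,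
    hstate (hΦ.isState_factor 0), Complex.ofReal_zero]

include M in
theorem isPureState_of_trivial (h : ∀ v ∈ E.D, E.ω v = 0 → gnsNormSq E.ω v ≠ 1)
    {φ : T →L[ℂ] ℂ} (hφ : IsState φ) : IsPureState φ := by
  have hscalar (x : T) (hx : x ∈ M.localAlgebra E.D Set.univ) : ∃ c : ℂ, x = c • 1 := by
    refine M.localAlgebra_induction (P := fun x => ∃ c : ℂ, x = c • 1) (fun J a _ ha => ?_) ?_ ?_ hx
    · refine ⟨∏ i ∈ J, E.ω (a i), ?_⟩
      rw [← M.elementaryTensor_one J, ← M.elementaryTensor_smul]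
      exact M.elementaryTensor_congr fun i _ => ExcisedState.eq_apply_smul_one M h (ha i)
    · rintro x y ⟨c, rfl⟩ ⟨d, rfl⟩
      exact ⟨c + d, (add_smul c d 1).symm⟩
    · rintro r x ⟨c, rfl⟩
      exact ⟨r * c, (mul_smul r c 1).symm⟩
  have hunique (ψ : T →L[ℂ] ℂ) (hψ : IsState ψ) : ψ = φ := by
    refine DFunLike.coe_injective (Continuous.ext_on (M.dense_localAlgebra_univ E.dense)
      ψ.continuous φ.continuous fun x hx => ?_)
    obtain ⟨c, rfl⟩ := hscalar x hx
    rw [map_smul, map_smul, hψ.map_one, hφ.map_one]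
  exact ⟨hφ, fun ψ₁ ψ₂ _ hψ₁ hψ₂ _ _ _ => ⟨hunique _ hψ₁, hunique _ hψ₂⟩⟩

end Degenerate

/-! ### Uniform means of vector states -/

section UniformMeans

open Filter Topology

variable {E : Type*} [NormedAddCommGroup E] [NormedSpace ℝ E] {V : Set E}

/-- The arithmetic means of finite nonempty families, possibly with repetitions, in `V`. -/
def uniformMeans (V : Set E) : Set E :=
  {p | ∃ l : Multiset E, l ≠ 0 ∧ (∀ x ∈ l, x ∈ V) ∧ p = (l.card : ℝ)⁻¹ • l.sum}

theorem subset_uniformMeans (V : Set E) : V ⊆ uniformMeans V := fun x hx =>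
  ⟨{x}, Multiset.singleton_ne_zero x, by simpa using hx, by simp⟩

theorem rational_combination_mem_uniformMeans {f g : E} (hf : f ∈ uniformMeans V)
    (hg : g ∈ uniformMeans V) {p N : ℕ} (hN : N ≠ 0) (hpN : p ≤ N) :
    (1 - (p : ℝ) / N) • f + ((p : ℝ) / N) • g ∈ uniformMeans V := by
  obtain ⟨l, hl, hlV, rfl⟩ := hf
  obtain ⟨k, hk, hkV, rfl⟩ := hg
  obtain ⟨q, rfl⟩ := Nat.exists_eq_add_of_le hpN
  have hl0 : l.card ≠ 0 := Multiset.card_eq_zero.not.mpr hl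
  have hk0 : k.card ≠ 0 := Multiset.card_eq_zero.not.mpr hk
  have hcard : ((q * k.card) • l + (p * l.card) • k).card = (p + q) * (l.card * k.card) := by
    simp only [Multiset.card_add, Multiset.card_nsmul]
    ring
  refine ⟨(q * k.card) • l + (p * l.card) • k, ?_, fun x hx => ?_, ?_⟩
  · rw [Ne, ← Multiset.card_eq_zero, hcard]
    positivity
  · rcases Multiset.mem_add.mp hx with hx | hx
    exacts [hlV x (Multiset.mem_of_mem_nsmul hx), hkV x (Multiset.mem_of_mem_nsmul hx)]
  · have hNR : (p : ℝ) + q ≠ 0 := by exact_mod_cast hN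
    rw [hcard, Multiset.sum_add, Multiset.sum_nsmul, Multiset.sum_nsmul, smul_add]
    simp only [← Nat.cast_smul_eq_nsmul ℝ, smul_smul]
    push_cast
    congr 2 <;> field_simp
    ring

theorem convex_closure_uniformMeans (V : Set E) : Convex ℝ (closure (uniformMeans V)) := by
  rw [convex_iff_forall_pos]
  intro f hf g hg s t _ ht hst
  have hmeans : ∀ f ∈ uniformMeans V, ∀ g ∈ uniformMeans V,
      s • f + t • g ∈ closure (uniformMeans V) := by
    intro f hf g hg
    have hfloor : Tendsto (fun N : ℕ => (⌊t * N⌋₊ : ℝ) / N) atTop (𝓝 t) :=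
      (tendsto_nat_floor_mul_div_atTop ht.le).comp tendsto_natCast_atTop_atTop
    rw [eq_sub_of_add_eq hst]
    refine mem_closure_of_tendsto
      (((hfloor.const_sub 1).smul_const f).add (hfloor.smul_const g)) ?_
    filter_upwards [eventually_ne_atTop 0] with N hN
    refine rational_combination_mem_uniformMeans hf hg hN (Nat.floor_le_of_le ?_)
    exact mul_le_of_le_one_left (Nat.cast_nonneg N) (by linarith)
  have := map_mem_closure₂ (f := fun f g : E => s • f + t • g) (by fun_prop) hf hg hmeans
  rwa [closure_closure] at this

theorem exists_mean_near {p : E} (hp : p ∈ closure (uniformMeans V)) {ε : ℝ} (hε : 0 < ε)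
    (K₀ : ℕ) : ∃ K : ℕ, K₀ ≤ K ∧ 0 < K ∧ ∃ f : Fin K → E, (∀ k, f k ∈ V) ∧
      ‖(K : ℝ)⁻¹ • ∑ k, f k - p‖ < ε := by
  obtain ⟨_, ⟨l, hl, hlV, rfl⟩, hdist⟩ := Metric.mem_closure_iff.mp hp ε hε
  have hl0 : 0 < l.card := Multiset.card_pos.mpr hl
  obtain ⟨r, hr⟩ := Quot.exists_rep ((K₀ + 1) • l)
  replace hr : (r : Multiset E) = (K₀ + 1) • l := hr
  have hlen : r.length = (K₀ + 1) * l.card := by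
    rw [← Multiset.coe_card, hr, Multiset.card_nsmul]
  have hsum : ∑ k, r.get k = ((K₀ + 1 : ℕ) : ℝ) • l.sum := by
    rw [Nat.cast_smul_eq_nsmul, ← Multiset.sum_nsmul, ← hr, Multiset.sum_coe]
    simp
  refine ⟨r.length, by rw [hlen]; nlinarith, by rw [hlen]; positivity, r.get, fun k => ?_, ?_⟩
  · refine hlV _ (Multiset.mem_of_mem_nsmul (n := K₀ + 1) ?_)
    rw [← hr]
    exact Multiset.mem_coe.mpr (r.get_mem k)
  · have hcoeff : (((K₀ + 1) * l.card : ℕ) : ℝ)⁻¹ * ((K₀ + 1 : ℕ) : ℝ) = (l.card : ℝ)⁻¹ := by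
      push_cast
      field_simp
    rwa [hsum, hlen, smul_smul, hcoeff, ← dist_eq_norm, dist_comm]

end UniformMeans

theorem IsPositiveFunctional.re_apply_nonneg_of_normalized {A : Type*} [CStarAlgebra A]
    {φ : A →L[ℂ] ℂ} (hφ : IsPositiveFunctional φ) {S : Submodule ℂ A} {t : A}
    (h : ∀ y ∈ S, gnsNormSq φ y = 1 → 0 ≤ (φ (star y * (t * y))).re) {y : A} (hy : y ∈ S) :
    0 ≤ (φ (star y * (t * y))).re := by
  have hn := hφ.gnsNormSq_nonneg y
  rcases hn.eq_or_lt with h0 | hpos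
  · have hzero := hφ.norm_apply_star_mul_le y (t * y)
    rw [← h0, Real.sqrt_zero, zero_mul] at hzero
    rw [norm_le_zero_iff.mp hzero, Complex.zero_re]
  · set r : ℝ := (√(gnsNormSq φ y))⁻¹ with hr
    have hr0 : 0 < r * r := mul_self_pos.mpr (inv_ne_zero (Real.sqrt_ne_zero'.mpr hpos))
    have hry : gnsNormSq φ ((r : ℂ) • y) = 1 := by
      rw [gnsNormSq_smul, Complex.norm_real, Real.norm_eq_abs, sq_abs, hr, inv_pow,
        Real.sq_sqrt hn, inv_mul_cancel₀ hpos.ne']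
    have hscale : φ (star ((r : ℂ) • y) * (t * ((r : ℂ) • y))) =
        ((r * r : ℝ) : ℂ) * φ (star y * (t * y)) := by
      simp [star_smul, mul_assoc]
    have hnonneg := h _ (S.smul_mem (r : ℂ) hy) hry
    rw [hscale, Complex.re_ofReal_mul] at hnonneg
    exact nonneg_of_mul_nonneg_right hnonneg hr0

namespace LocalSystem

variable {T : Type*} [CStarAlgebra T] (L : LocalSystem T) {ι : Type*} {J : Finset ℤ}
  {x : ι → T} {φ : T →L[ℂ] ℂ}

/-- The elements localized in `J` that represent unit vectors in the GNS space of `Ω`. -/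
def unitVectors (J : Finset ℤ) : Set T :=
  {ξ | ξ ∈ L.localAlgebra (J : Set ℤ) ∧ gnsNormSq L.Ω ξ = 1}

/-- A separating functional `f` would turn into a local observable `t = u - ∑ᵢ f(eᵢ) xᵢ` that is
positive in all local vector states but not in `φ`. -/
theorem mem_closure_uniformMeans_unitVectors [Fintype ι]
    (hx : ∀ i, x i ∈ L.localAlgebra (J : Set ℤ))
    (hφ : IsState φ) :
    (fun i => φ (x i)) ∈
      closure (uniformMeans ((fun ξ i => L.Ω (star ξ * (x i * ξ))) '' L.unitVectors J)) := by
  classical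
  set V := (fun ξ i => L.Ω (star ξ * (x i * ξ))) '' L.unitVectors J
  by_contra hn
  obtain ⟨f, u, hf, hu⟩ := RCLike.geometric_hahn_banach_closed_point (𝕜 := ℂ)
    (convex_closure_uniformMeans V) isClosed_closure hn
  have hcoord (g : ι → ℂ) : f g = ∑ i, f (Pi.single i 1) * g i := by
    conv_lhs => rw [← Finset.univ_sum_single g, map_sum]
    refine Finset.sum_congr rfl fun i _ => ?_
    rw [mul_comm, ← smul_eq_mul, ← map_smul, ← Pi.single_smul', smul_eq_mul, mul_one]
  set t : T := (u : ℂ) • 1 - ∑ i, f (Pi.single i 1) • x i with ht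
  have htJ : t ∈ L.localAlgebra (J : Set ℤ) := sub_mem
    ((L.localAlgebra _).smul_mem (one_mem _) _)
    (sum_mem fun i _ => (L.localAlgebra _).smul_mem (hx i) _)
  have hval (ρ : T →L[ℂ] ℂ) (y : T) : ρ (star y * (t * y)) =
      u * ρ (star y * y) - f fun i => ρ (star y * (x i * y)) := by
    rw [hcoord, ht]
    simp only [sub_mul, mul_sub, Finset.sum_mul, Finset.mul_sum, smul_mul_assoc, mul_smul_comm,
      one_mul, map_sub, map_sum, map_smul, smul_eq_mul]
  have hpos : ∀ y ∈ L.localAlgebra (J : Set ℤ), 0 ≤ (L.Ω (star y * (t * y))).re := fun y hy =>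
    L.isState.isPositiveFunctional.re_apply_nonneg_of_normalized
      (S := (L.localAlgebra (J : Set ℤ)).toSubalgebra.toSubmodule) (fun ξ hξ hξ1 => by
        have hfξ := hf _ (subset_closure (subset_uniformMeans V ⟨ξ, ⟨hξ, hξ1⟩, rfl⟩))
        rw [hval, ← L.isState.isPositiveFunctional.coe_gnsNormSq, hξ1, Complex.ofReal_one, mul_one,
          Complex.sub_re, Complex.ofReal_re]
        exact (sub_pos.mpr hfξ).le) hy
  have hφt := L.detects htJ hpos φ hφ
  have hφval := hval φ 1
  simp only [star_one, one_mul, mul_one, hφ.map_one] at hφval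
  rw [hφval, Complex.sub_re, Complex.ofReal_re, sub_nonneg] at hφt
  exact hu.not_ge hφt

theorem exists_average [Finite ι] (hx : ∀ i, x i ∈ L.localAlgebra (J : Set ℤ)) (hφ : IsState φ)
    {ε : ℝ} (hε : 0 < ε) (K₀ : ℕ) : ∃ K : ℕ, K₀ ≤ K ∧ 0 < K ∧ ∃ ξ : ℕ → T,
      (∀ k, ξ k ∈ L.unitVectors J) ∧
      ∀ i, ‖∑ k ∈ Finset.range K, L.Ω (star (ξ k) * (x i * ξ k)) - K * φ (x i)‖ ≤ K * ε := by
  have := Fintype.ofFinite ι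
  obtain ⟨K, hK, hK0, f, hf, hdist⟩ :=
    exists_mean_near (L.mem_closure_uniformMeans_unitVectors hx hφ) hε K₀
  choose ξ hξ hξf using hf
  refine ⟨K, hK, hK0, fun k => if h : k < K then ξ ⟨k, h⟩ else 1, fun k => ?_, fun i => ?_⟩
  · dsimp only
    split_ifs
    exacts [hξ _, ⟨one_mem _, L.isState.gnsNormSq_one⟩]
  · have hmean : ‖(K : ℝ)⁻¹ • ∑ k, L.Ω (star (ξ k) * (x i * ξ k)) - φ (x i)‖ < ε := by
      simpa only [← hξf, Pi.sub_apply, Pi.smul_apply, Finset.sum_apply] using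
        (norm_le_pi_norm _ i).trans_lt hdist
    have hK' : (K : ℂ) ≠ 0 := Nat.cast_ne_zero.mpr hK0.ne'
    simp only [Finset.sum_range, Fin.is_lt, dite_true]
    calc ‖∑ k, L.Ω (star (ξ k) * (x i * ξ k)) - K * φ (x i)‖
        = ‖(K : ℂ) * ((K : ℝ)⁻¹ • ∑ k, L.Ω (star (ξ k) * (x i * ξ k)) - φ (x i))‖ := by
          rw [mul_sub, Complex.real_smul, Complex.ofReal_inv, Complex.ofReal_natCast,
            mul_inv_cancel_left₀ hK']
      _ ≤ K * ε := by
          rw [norm_mul, Complex.norm_natCast]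
          gcongr

end LocalSystem

/-! ### A criterion for purity -/

section Pure

variable {T : Type*} [CStarAlgebra T] {ι : Type*} [Fintype ι] {P : ι → T} {ψ ρ : T →L[ℂ] ℂ}
  {a : T} {ε : ℝ}

/-- A finite family of orthogonal projections on which `ψ` is concentrated and that compresses
`a` to a diagonal matrix with entries `ε`-close to `ψ a`. -/
structure Diagonalizes (P : ι → T) (ψ : T →L[ℂ] ℂ) (a : T) (ε : ℝ) : Prop where
  isStarProjection : ∀ s, IsStarProjection (P s)
  mul_ne : ∀ s s', s ≠ s' → P s * P s' = 0
  total : ψ (∑ s, P s) = 1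
  off_diag : ∀ s s', s ≠ s' → P s * (a * P s') = 0
  diag : ∀ s, ∃ c : ℂ, P s * (a * P s) = c • P s ∧ ‖c - ψ a‖ ≤ ε

theorem sum_mul_mul_sum_of_offDiag_eq_zero {b : T} (hb : ∀ s s', s ≠ s' → P s * (b * P s') = 0) :
    (∑ s, P s) * (b * ∑ s, P s) = ∑ s, P s * (b * P s) := by
  rw [Finset.sum_mul]
  refine Finset.sum_congr rfl fun s _ => ?_
  rw [Finset.mul_sum, Finset.mul_sum]
  exact Finset.sum_eq_single s (fun s' _ hs => hb s s' hs.symm) (by simp)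

theorem IsPositiveFunctional.coe_gnsNormSq_of_isStarProjection (hρ : IsPositiveFunctional ρ)
    {p : T} (hp : IsStarProjection p) : (gnsNormSq ρ p : ℂ) = ρ p := by
  rw [hρ.coe_gnsNormSq, hp.isSelfAdjoint.star_eq, hp.isIdempotentElem.eq]

namespace Diagonalizes

theorem isStarProjection_sum (h : Diagonalizes P ψ a ε) : IsStarProjection (∑ s, P s) where
  isIdempotentElem := by
    have hsum := sum_mul_mul_sum_of_offDiag_eq_zero (P := P) (b := 1)
      fun s s' hs => by rw [one_mul, h.mul_ne s s' hs]
    simpa only [IsIdempotentElem, one_mul, fun s => (h.isStarProjection s).isIdempotentElem.eq]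
      using hsum
  isSelfAdjoint := isSelfAdjoint_sum _ fun s _ => (h.isStarProjection s).isSelfAdjoint

theorem norm_sub_le (h : Diagonalizes P ψ a ε) (hρ : IsState ρ) (hρP : ρ (∑ s, P s) = 1) :
    ‖ρ a - ψ a‖ ≤ ε := by
  choose c hc hcε using h.diag
  have hQ := h.isStarProjection_sum
  have hρa : ρ a = ∑ s, c s * ρ (P s) := by
    rw [← hρ.apply_mul_of_apply_eq_one hQ hρP a,
      ← hρ.apply_projection_mul_of_apply_eq_one hQ hρP (a * _),
      sum_mul_mul_sum_of_offDiag_eq_zero h.off_diag, map_sum]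
    exact Finset.sum_congr rfl fun s _ => by rw [hc, map_smul, smul_eq_mul]
  have hsum : ∑ s, ρ (P s) = 1 := by rw [← map_sum, hρP]
  have hnorm (s : ι) : ρ (P s) = gnsNormSq ρ (P s) :=
    (hρ.isPositiveFunctional.coe_gnsNormSq_of_isStarProjection (h.isStarProjection s)).symm
  have hsum_norm : ∑ s, gnsNormSq ρ (P s) = 1 := by
    simp only [hnorm] at hsum
    exact_mod_cast hsum
  have hnn (s : ι) : 0 ≤ gnsNormSq ρ (P s) := hρ.isPositiveFunctional.gnsNormSq_nonneg _
  have hdiff : ρ a - ψ a = ∑ s, (c s - ψ a) * ρ (P s) := by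
    simp only [sub_mul, Finset.sum_sub_distrib, ← Finset.mul_sum, hsum, mul_one, hρa]
  calc ‖ρ a - ψ a‖ ≤ ∑ s, ‖(c s - ψ a) * ρ (P s)‖ := hdiff ▸ norm_sum_le _ _
    _ ≤ ∑ s, ε * gnsNormSq ρ (P s) := by
        refine Finset.sum_le_sum fun s _ => ?_
        rw [norm_mul, hnorm, Complex.norm_real, Real.norm_of_nonneg (hnn s)]
        exact mul_le_mul_of_nonneg_right (hcε s) (hnn s)
    _ = ε := by rw [← Finset.mul_sum, hsum_norm, mul_one]

end Diagonalizes

theorem IsState.exists_real_apply_eq_le_one (hρ : IsState ρ) {p : T} (hp : IsStarProjection p) :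
    ∃ r : ℝ, ρ p = r ∧ r ≤ 1 := by
  have hpos := hρ.isPositiveFunctional
  have hnn := hpos.gnsNormSq_nonneg (1 - p)
  have hsub : (gnsNormSq ρ (1 - p) : ℂ) = ((1 - gnsNormSq ρ p : ℝ) : ℂ) := by
    rw [hpos.coe_gnsNormSq_of_isStarProjection hp.one_sub, map_sub, hρ.map_one, Complex.ofReal_sub,
      Complex.ofReal_one, hpos.coe_gnsNormSq_of_isStarProjection hp]
  rw [Complex.ofReal_inj] at hsub
  exact ⟨_, (hpos.coe_gnsNormSq_of_isStarProjection hp).symm, by linarith⟩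

theorem IsState.apply_eq_one_of_convex_combination {ψ₁ ψ₂ : T →L[ℂ] ℂ} (h₁ : IsState ψ₁)
    (h₂ : IsState ψ₂) {t : ℝ} (ht0 : 0 < t) (ht1 : t < 1) {p : T} (hp : IsStarProjection p)
    (h : (t • ψ₁ + (1 - t) • ψ₂) p = 1) : ψ₁ p = 1 ∧ ψ₂ p = 1 := by
  obtain ⟨r, hr, hr1⟩ := h₁.exists_real_apply_eq_le_one hp
  obtain ⟨s, hs, hs1⟩ := h₂.exists_real_apply_eq_le_one hp
  simp only [add_apply, smul_apply, hr, hs,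
    Complex.real_smul] at h
  replace h : t * r + (1 - t) * s = 1 := by exact_mod_cast h
  rw [hr, hs]
  norm_cast
  constructor <;> nlinarith

theorem isPureState_of_diagonalizes (hψ : IsState ψ) {W : Set T} (hW : Dense W)
    (h : ∀ a ∈ W, ∀ ε > 0, ∃ P : ι → T, Diagonalizes P ψ a ε) : IsPureState ψ := by
  refine ⟨hψ, fun ψ₁ ψ₂ t h₁ h₂ ht0 ht1 hψt => ?_⟩
  have hunique (ρ : T →L[ℂ] ℂ) (hρ : IsState ρ)
      (hρP : ∀ a ε (P : ι → T), Diagonalizes P ψ a ε → ρ (∑ s, P s) = 1) : ρ = ψ := by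
    refine DFunLike.coe_injective (Continuous.ext_on hW ρ.continuous ψ.continuous fun a ha => ?_)
    rw [← sub_eq_zero, ← norm_le_zero_iff]
    refine le_of_forall_pos_le_add fun ε hε => ?_
    obtain ⟨P, hPa⟩ := h a ha ε hε
    rw [zero_add]
    exact hPa.norm_sub_le hρ (hρP a ε P hPa)
  have hone (a : T) (ε : ℝ) (P : ι → T) (hP : Diagonalizes P ψ a ε) :=
    h₁.apply_eq_one_of_convex_combination h₂ ht0 ht1 hP.isStarProjection_sum (hψt ▸ hP.total)
  exact ⟨hunique ψ₁ h₁ fun a ε P hP => (hone a ε P hP).1,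
    hunique ψ₂ h₂ fun a ε P hP => (hone a ε P hP).2⟩

end Pure

/-! ### A renewal theorem -/

section Renewal

open Filter Topology

/-- The renewal sequence whose inter-arrival times are `R` and `R + 1` with equal probability. -/
structure IsRenewal (R : ℕ) (w : ℤ → ℝ) : Prop where
  neg : ∀ k < 0, w k = 0
  zero : w 0 = 1
  step : ∀ k, 0 < k → w k = (w (k - R) + w (k - R - 1)) / 2

namespace IsRenewal

variable {R : ℕ} {w : ℤ → ℝ}

/-- The probability that a renewal occurs in a window of length `R`, with weight `1 / 2` for the
additional site, does not change when the window moves. -/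
theorem sum_eq_one (h : IsRenewal R w) (hR : 0 < R) (k : ℕ) :
    ∑ j ∈ Finset.range R, w (k - j) + w (k - R) / 2 = 1 := by
  obtain ⟨r, rfl⟩ := Nat.exists_eq_add_one.mpr hR
  induction k with
  | zero =>
    rw [Finset.sum_range_succ', Finset.sum_eq_zero fun j _ => h.neg _ (by lia),
      h.neg (((0 : ℕ) : ℤ) - ((r + 1 : ℕ) : ℤ)) (by lia)]
    simp [h.zero]
  | succ k ih =>
    rw [Finset.sum_range_succ] at ih
    rw [Finset.sum_range_succ', h.step _ (by lia)]
    push_cast at ih ⊢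
    simp only [add_sub_add_right_eq_sub, sub_zero, sub_sub] at ih ⊢
    linarith

end IsRenewal

/-- A quadratic Lyapunov function for the renewal recursion. -/
noncomputable def renewalEnergy (R : ℕ) (w : ℤ → ℝ) (k : ℕ) : ℝ :=
  ∑ j ∈ Finset.range R, w (k - j) ^ 2 + w (k - R) ^ 2 / 2

theorem renewalEnergy_nonneg (R : ℕ) (w : ℤ → ℝ) (k : ℕ) : 0 ≤ renewalEnergy R w k :=
  add_nonneg (Finset.sum_nonneg fun _ _ => sq_nonneg _) (by positivity)

namespace IsRenewal

variable {r : ℕ} {w : ℤ → ℝ}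

theorem renewalEnergy_succ (h : IsRenewal (r + 1) w) (k : ℕ) :
    renewalEnergy (r + 1) w (k + 1) =
      renewalEnergy (r + 1) w k - (w (k - r) - w (k - r - 1)) ^ 2 / 4 := by
  have hshift (j : ℕ) : (k : ℤ) + 1 - (j + 1) = k - j := by ring
  have hfirst : (k : ℤ) + 1 - 0 - (r + 1) = k - r := by ring
  have hsecond : (k : ℤ) - (r + 1) = k - r - 1 := by ring
  rw [renewalEnergy, renewalEnergy, Finset.sum_range_succ', Finset.sum_range_succ,
    h.step _ (by lia)]
  push_cast
  simp only [hshift, hfirst, hsecond]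
  ring

theorem tendsto_sub (h : IsRenewal (r + 1) w) :
    Tendsto (fun k : ℤ => w (k + 1) - w k) atTop (𝓝 0) := by
  have hanti : Antitone (renewalEnergy (r + 1) w) := antitone_nat_of_succ_le fun k => by
    rw [h.renewalEnergy_succ]
    linarith [sq_nonneg (w (k - r) - w (k - r - 1))]
  have hlim := tendsto_atTop_ciInf hanti
    ⟨0, Set.forall_mem_range.mpr (renewalEnergy_nonneg (r + 1) w)⟩
  have hsq : Tendsto (fun k : ℕ => (w (k - r) - w (k - r - 1)) ^ 2) atTop (𝓝 0) := by
    have hdiff := (hlim.sub (hlim.comp (tendsto_add_atTop_nat 1))).const_mul 4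
    rw [sub_self, mul_zero] at hdiff
    refine hdiff.congr fun k => ?_
    rw [Function.comp, h.renewalEnergy_succ]
    ring
  have hnat : Tendsto (fun k : ℕ => w (k - r) - w (k - r - 1)) atTop (𝓝 0) := by
    rw [tendsto_zero_iff_abs_tendsto_zero]
    simpa only [Function.comp_def, Real.sqrt_sq_eq_abs, Real.sqrt_zero] using hsq.sqrt
  have hint : Tendsto (fun k : ℤ => w (k - r) - w (k - r - 1)) atTop (𝓝 0) := by
    rwa [← Nat.map_cast_int_atTop, tendsto_map'_iff]
  refine (hint.comp (tendsto_atTop_add_const_right _ ((r : ℤ) + 1) tendsto_id)).congr fun k => ?_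
  simp only [Function.comp_apply, id_eq]
  ring_nf

theorem tendsto_sub_nat (h : IsRenewal (r + 1) w) (j : ℕ) :
    Tendsto (fun k : ℤ => w k - w (k - j)) atTop (𝓝 0) := by
  induction j with
  | zero => simp
  | succ j ih =>
    have hstep := h.tendsto_sub.comp (tendsto_atTop_add_const_right atTop (-(j : ℤ) - 1) tendsto_id)
    have hsum := ih.add hstep
    rw [add_zero] at hsum
    refine hsum.congr fun k => ?_
    have h₁ : k + (-(j : ℤ) - 1) + 1 = k - j := by ring
    have h₂ : k + (-(j : ℤ) - 1) = k - (j + 1 : ℕ) := by push_cast; ring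
    simp only [Function.comp_apply, id_eq]
    rw [h₁, h₂, sub_add_sub_cancel]

theorem tendsto {R : ℕ} (h : IsRenewal R w) (hR : 0 < R) :
    Tendsto w atTop (𝓝 (1 / (R + 1 / 2))) := by
  have hsub (j : ℕ) : Tendsto (fun k : ℤ => w k - w (k - j)) atTop (𝓝 0) := by
    obtain ⟨r, rfl⟩ := Nat.exists_eq_add_one.mpr hR
    exact h.tendsto_sub_nat j
  have hlim : Tendsto (fun k : ℤ => 1 + (∑ j ∈ Finset.range R, (w k - w (k - j)) +
      (w k - w (k - R)) / 2)) atTop (𝓝 (1 + (∑ j ∈ Finset.range R, 0 + 0 / 2))) :=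
    ((tendsto_finsetSum _ fun j _ => hsub j).add ((hsub R).div_const 2)).const_add 1
  simp only [Finset.sum_const_zero, zero_div, add_zero] at hlim
  refine (hlim.div_const ((R : ℝ) + 1 / 2)).congr' ?_
  filter_upwards [eventually_ge_atTop 0] with k hk
  lift k to ℕ using hk
  have hsum := h.sum_eq_one hR k
  rw [Finset.sum_sub_distrib, Finset.sum_const, Finset.card_range, nsmul_eq_mul]
  field_simp
  linarith

end IsRenewal

end Renewal

/-! ### Products of local elements -/

namespace LocalSystem

variable {T : Type*} [CStarAlgebra T] {L : LocalSystem T}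

theorem gnsNormSq_mul {S S' : Set ℤ} (h : Disjoint S S') {x y : T} (hx : x ∈ L.localAlgebra S)
    (hy : y ∈ L.localAlgebra S') :
    gnsNormSq L.Ω (x * y) = gnsNormSq L.Ω x * gnsNormSq L.Ω y := by
  have hxx := mul_mem (star_mem hx) hx
  have hcomm : Commute (star y) (star x * x) := L.commute h.symm (star_mem hy) hxx
  have hmul : star (x * y) * (x * y) = (star x * x) * (star y * y) := by
    rw [star_mul, ← mul_assoc (star x * x), ← hcomm.eq]
    noncomm_ring
  have hpos := L.isState.isPositiveFunctional
  rw [← Complex.ofReal_inj, Complex.ofReal_mul, hpos.coe_gnsNormSq, hpos.coe_gnsNormSq,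
    hpos.coe_gnsNormSq, hmul, L.Ω_mul h hxx (mul_mem (star_mem hy) hy)]

theorem gnsNormSq_translate (c : ℤ) (x : T) :
    gnsNormSq L.Ω (L.translate c x) = gnsNormSq L.Ω x := by
  rw [gnsNormSq, ← map_star, ← map_mul, L.Ω_translate, gnsNormSq]

theorem mem_localAlgebra_compl {x : T} {a b u : ℤ} (hx : x ∈ L.localAlgebra (Set.Ico a b))
    (hu : u < a ∨ b ≤ u) : x ∈ L.localAlgebra {u}ᶜ := by
  refine L.mono (fun i hi => ?_) hx
  rw [Set.mem_Ico] at hi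
  rw [Set.mem_compl_singleton_iff]
  lia

theorem mem_localAlgebra_Ico_of_le {x : T} {a b a' b' : ℤ} (hx : x ∈ L.localAlgebra (Set.Ico a b))
    (ha : a' ≤ a) (hb : b ≤ b') : x ∈ L.localAlgebra (Set.Ico a' b') :=
  L.mono (Set.Ico_subset_Ico ha hb) hx

theorem disjoint_Ico_of_le {a b c d : ℤ} (h : b ≤ c) : Disjoint (Set.Ico a b) (Set.Ico c d) :=
  Set.Ico_disjoint_Ico.mpr ((min_le_left _ _).trans (h.trans (le_max_right _ _)))

theorem Ω_star_mul_mul_of_adjacent {p q r s : ℤ} (hqr : q ≤ r) {x h z a : T}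
    (hx : x ∈ L.localAlgebra (Set.Ico p q)) (hh : h ∈ L.localAlgebra (Set.Ico q r))
    (hz : z ∈ L.localAlgebra (Set.Ico r s)) (ha : a ∈ L.localAlgebra (Set.Ico q r)) :
    L.Ω (star (x * (h * z)) * (a * (x * (h * z)))) =
      gnsNormSq L.Ω x * (L.Ω (star h * (a * h)) * gnsNormSq L.Ω z) := by
  set g := star h * (a * h) with hg
  have hgm : g ∈ L.localAlgebra (Set.Ico q r) := mul_mem (star_mem hh) (mul_mem ha hh)
  have hxx := mul_mem (star_mem hx) hx
  have hzz := mul_mem (star_mem hz) hz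
  have hfactor : star (x * (h * z)) * (a * (x * (h * z))) = star x * x * (g * (star z * z)) := by
    have hax : a * x = x * a := L.commute (disjoint_Ico_of_le le_rfl).symm ha hx
    have hhx : star h * (star x * x) = star x * x * star h :=
      L.commute (disjoint_Ico_of_le le_rfl).symm (star_mem hh) hxx
    have hzx : star z * (star x * x) = star x * x * star z :=
      L.commute (disjoint_Ico_of_le hqr).symm (star_mem hz) hxx
    have hzg : star z * g = g * star z :=
      L.commute (disjoint_Ico_of_le le_rfl).symm (star_mem hz) hgm
    calc star (x * (h * z)) * (a * (x * (h * z)))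
        = star z * (star h * (star x * (a * x) * (h * z))) := by simp only [star_mul, mul_assoc]
      _ = star z * (star h * (star x * x) * a * (h * z)) := by rw [hax]; simp only [mul_assoc]
      _ = star z * (star x * x) * (star h * (a * h) * z) := by rw [hhx]; simp only [mul_assoc]
      _ = star x * x * (star z * g * z) := by rw [hzx]; simp only [mul_assoc, hg]
      _ = star x * x * (g * (star z * z)) := by rw [hzg]; simp only [mul_assoc]
  have hdisj : Disjoint (Set.Ico p q) (Set.Ici q) := Set.disjoint_left.mpr fun i hi hi' =>
    (Set.mem_Ico.mp hi).2.not_ge hi'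
  have hright : g * (star z * z) ∈ L.localAlgebra (Set.Ici q) :=
    mul_mem (L.mono Set.Ico_subset_Ici_self hgm)
      (L.mono (Set.Ico_subset_Ici_self.trans (Set.Ici_subset_Ici.mpr hqr)) hzz)
  rw [hfactor, L.Ω_mul hdisj hxx hright, L.Ω_mul (disjoint_Ico_of_le le_rfl) hgm hzz,
    L.isState.isPositiveFunctional.coe_gnsNormSq, L.isState.isPositiveFunctional.coe_gnsNormSq]

section ListProd

variable {f : ℕ → T} {S : ℕ → Set ℤ}

theorem prod_range_mem (hf : ∀ j, f j ∈ L.localAlgebra (S j)) (N : ℕ) :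
    ((List.range N).map f).prod ∈ L.localAlgebra (⋃ j < N, S j) := by
  refine list_prod_mem fun y hy => ?_
  obtain ⟨j, hj, rfl⟩ := List.mem_map.mp hy
  have hsub : S j ⊆ ⋃ j < N, S j :=
    Set.subset_iUnion₂ (s := fun j _ => S j) j (List.mem_range.mp hj)
  exact L.mono hsub (hf j)

theorem disjoint_biUnion_lt (hS : Pairwise (Function.onFun Disjoint S)) (N : ℕ) :
    Disjoint (⋃ j < N, S j) (S N) :=
  Set.disjoint_iUnion₂_left.mpr fun _ hj => hS hj.ne

theorem exists_prod_range_eq_mul (hf : ∀ j, f j ∈ L.localAlgebra (S j))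
    (hS : Pairwise (Function.onFun Disjoint S)) {N j : ℕ} (hj : j < N) :
    ∃ z ∈ L.localAlgebra (S j)ᶜ, ((List.range N).map f).prod = f j * z := by
  induction N with
  | zero => exact absurd hj (Nat.not_lt_zero j)
  | succ N ih =>
    rcases Nat.lt_succ_iff_lt_or_eq.mp hj with h | rfl
    · obtain ⟨z, hz, hprod⟩ := ih h
      refine ⟨z * f N, mul_mem hz (L.mono ?_ (hf N)), ?_⟩
      · exact (hS h.ne).symm.subset_compl_right
      · rw [List.prod_range_succ, hprod, mul_assoc]
    · have hdisj := disjoint_biUnion_lt hS j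
      exact ⟨_, L.mono hdisj.subset_compl_right (prod_range_mem hf j),
        (List.prod_range_succ f j).trans (L.commute hdisj (prod_range_mem hf j) (hf j)).eq⟩

theorem gnsNormSq_prod_range (hf : ∀ j, f j ∈ L.localAlgebra (S j))
    (hS : Pairwise (Function.onFun Disjoint S)) (h1 : ∀ j, gnsNormSq L.Ω (f j) = 1) (N : ℕ) :
    gnsNormSq L.Ω ((List.range N).map f).prod = 1 := by
  induction N with
  | zero => exact L.isState.gnsNormSq_one
  | succ N ih =>
    rw [List.prod_range_succ, gnsNormSq_mul (disjoint_biUnion_lt hS N) (prod_range_mem hf N) (hf N),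
      ih, h1, one_mul]

end ListProd

/-! ### Markers and separated elements -/

namespace Marker

/-- An element is marked at a site if it is the marker at this site times an element supported
elsewhere. -/
def IsMarked (mk : L.Marker) (u : ℤ) (x : T) : Prop :=
  ∃ z ∈ L.localAlgebra {u}ᶜ, x = mk.v u * z

/-- Two elements are separated at a site if one of them is marked there and the other one is
supported elsewhere. -/
def IsSeparated (mk : L.Marker) (u : ℤ) (x y : T) : Prop :=
  (x ∈ L.localAlgebra {u}ᶜ ∧ mk.IsMarked u y) ∨ (mk.IsMarked u x ∧ y ∈ L.localAlgebra {u}ᶜ)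

variable {mk : L.Marker} {u : ℤ} {x y : T}

theorem IsMarked.mul_right (hx : mk.IsMarked u x) (hy : y ∈ L.localAlgebra {u}ᶜ) :
    mk.IsMarked u (x * y) := by
  obtain ⟨z, hz, rfl⟩ := hx
  exact ⟨z * y, mul_mem hz hy, mul_assoc _ _ _⟩

theorem IsMarked.mul_left (hx : mk.IsMarked u x) (hy : y ∈ L.localAlgebra {u}ᶜ) :
    mk.IsMarked u (y * x) := by
  obtain ⟨z, hz, rfl⟩ := hx
  exact ⟨y * z, mul_mem hy hz, (L.commute disjoint_compl_left hy (mk.v_mem u)).left_comm z⟩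

namespace IsSeparated

theorem symm (h : mk.IsSeparated u x y) : mk.IsSeparated u y x :=
  h.elim (fun h => .inr h.symm) fun h => .inl h.symm

variable {x' y' a : T}

theorem mul_left (h : mk.IsSeparated u x y) (hx : x' ∈ L.localAlgebra {u}ᶜ)
    (hy : y' ∈ L.localAlgebra {u}ᶜ) : mk.IsSeparated u (x' * x) (y' * y) :=
  h.imp (fun h => ⟨mul_mem hx h.1, h.2.mul_left hy⟩) fun h => ⟨h.1.mul_left hx, mul_mem hy h.2⟩

theorem mul_right (h : mk.IsSeparated u x y) (hx : x' ∈ L.localAlgebra {u}ᶜ)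
    (hy : y' ∈ L.localAlgebra {u}ᶜ) : mk.IsSeparated u (x * x') (y * y') :=
  h.imp (fun h => ⟨mul_mem h.1 hx, h.2.mul_right hy⟩) fun h => ⟨h.1.mul_right hx, mul_mem h.2 hy⟩

theorem exists_eq_mul (h : mk.IsSeparated u x y) (ha : a ∈ L.localAlgebra {u}ᶜ) :
    ∃ w z : T, (w = mk.v u ∨ w = star (mk.v u)) ∧ z ∈ L.localAlgebra {u}ᶜ ∧
      star x * (a * y) = w * z := by
  rcases h with ⟨hx, hy⟩ | ⟨⟨z, hz, rfl⟩, hy⟩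
  · obtain ⟨z, hz, hmul⟩ := (hy.mul_left ha).mul_left (star_mem hx)
    exact ⟨_, z, .inl rfl, hz, hmul⟩
  · refine ⟨_, star z * (a * y), .inr rfl, mul_mem (star_mem hz) (mul_mem ha hy), ?_⟩
    rw [star_mul, (L.commute disjoint_compl_left (star_mem hz) (star_mem (mk.v_mem u))).eq,
      mul_assoc]

theorem Ω_eq_zero (h : mk.IsSeparated u x y) (ha : a ∈ L.localAlgebra {u}ᶜ) :
    L.Ω (star x * (a * y)) = 0 := by
  obtain ⟨_, z, rfl | rfl, hz, hmul⟩ := h.exists_eq_mul ha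
  · rw [hmul, L.Ω_mul disjoint_compl_right (mk.v_mem u) hz, mk.Ω_v, zero_mul]
  · rw [hmul, L.Ω_mul disjoint_compl_right (star_mem (mk.v_mem u)) hz,
      L.isState.isPositiveFunctional.map_star, mk.Ω_v, star_zero, zero_mul]

theorem excisor_mul_mul_excisor_eq_zero (h : mk.IsSeparated u x y) (ha : a ∈ L.localAlgebra {u}ᶜ)
    {m : ℕ} (hm : L.excisor {u} m * mk.v u * L.excisor {u} m = 0) {J J' : Finset ℤ} (hJ : u ∈ J)
    (hJ' : u ∈ J') : L.excisor J m * (star x * (a * y)) * L.excisor J' m = 0 := by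
  set q := L.excisor {u} m
  have hqu : q ∈ L.localAlgebra {u} := by simpa using L.excisor_mem {u} m
  have hqsa : star q = q := L.isSelfAdjoint_excisor {u} m
  have hJq : L.excisor J m * q = L.excisor J m := by
    simpa only [star_mul, (L.isSelfAdjoint_excisor _ m).star_eq] using
      congrArg star (L.excisor_mul (Finset.singleton_subset_iff.mpr hJ) m)
  have hqJ' : q * L.excisor J' m = L.excisor J' m :=
    L.excisor_mul (Finset.singleton_subset_iff.mpr hJ') m
  obtain ⟨w, z, hw, hz, hmul⟩ := h.exists_eq_mul ha
  have hwq : q * w * q = 0 := by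
    rcases hw with rfl | rfl
    · exact hm
    · simpa only [star_mul, hqsa, star_zero, mul_assoc] using congrArg star hm
  have hzq : z * q = q * z := L.commute disjoint_compl_left hz hqu
  calc L.excisor J m * (star x * (a * y)) * L.excisor J' m
      = L.excisor J m * q * (w * z) * (q * L.excisor J' m) := by rw [hJq, hqJ', hmul]
    _ = L.excisor J m * (q * w * (z * q)) * L.excisor J' m := by simp only [mul_assoc]
    _ = L.excisor J m * (q * w * q * z) * L.excisor J' m := by simp only [hzq, mul_assoc]
    _ = 0 := by rw [hwq, zero_mul, mul_zero, zero_mul]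

end IsSeparated

end Marker

/-! ### Tiles -/

/-- A translation covariant family of tiles of length `R`, each starting with `n + 1` marked sites,
such that every shorter translation of these `n + 1` sites either leaves the tile or meets an
empty site. The tiles are normalized to have squared norm `1 / 2`. -/
structure Tile (mk : L.Marker) (n R : ℕ) where
  τ : ℤ → T
  lt : n < R
  mem : ∀ i, τ i ∈ L.localAlgebra (Set.Ico i (i + R))
  gnsNormSq_τ : ∀ i, gnsNormSq L.Ω (τ i) = 1 / 2
  translate_τ : ∀ c i, L.translate c (τ i) = τ (i + c)
  isMarked : ∀ i u : ℤ, i ≤ u → u ≤ i + n → mk.IsMarked u (τ i)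
  exists_empty_site : ∀ i i' : ℤ, i < i' → i' < i + R →
    ∃ u, i' ≤ u ∧ u ≤ i' + n ∧ u < i + R ∧ τ i ∈ L.localAlgebra {u}ᶜ

/-- The sites occupied by the `j`-th factor of the tile at the origin: single sites for the `n + 1`
markers, then blocks of `n` sites which leave the positive multiples of `n + 1` empty. -/
def tileSites (n j : ℕ) : Set ℤ :=
  if j ≤ n then {(j : ℤ)} else Set.Ico (((j - n) * (n + 1) + 1 : ℕ) : ℤ) ((j - n + 1) * (n + 1) : ℕ)

theorem pairwise_disjoint_tileSites (n : ℕ) : Pairwise (Function.onFun Disjoint (tileSites n)) := by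
  have hlt {j j' : ℕ} (h : j < j') : Disjoint (tileSites n j) (tileSites n j') := by
    refine Set.disjoint_left.mpr fun x hx hx' => ?_
    simp only [tileSites] at hx hx'
    split_ifs at hx hx' with hj hj' hj' <;>
      simp only [Set.mem_singleton_iff, Set.mem_Ico] at hx hx'
    · lia
    · have : n + 1 ≤ (j' - n) * (n + 1) := Nat.le_mul_of_pos_left _ (by lia)
      lia
    · lia
    · have : (j - n + 1) * (n + 1) ≤ (j' - n) * (n + 1) := Nat.mul_le_mul_right _ (by lia)
      lia
  exact fun j j' hne => hne.lt_or_gt.elim hlt fun h => (hlt h).symm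

theorem tileSites_subset {n K j : ℕ} (hj : j < n + 1 + K) :
    tileSites n j ⊆ Set.Ico 0 ((K + 1) * (n + 1)) := by
  intro x hx
  simp only [tileSites] at hx
  split_ifs at hx with h
  · rw [Set.mem_singleton_iff] at hx
    constructor <;> nlinarith
  · rw [Set.mem_Ico] at hx
    have hle : (j - n + 1) * (n + 1) ≤ (K + 1) * (n + 1) := Nat.mul_le_mul_right _ (by lia)
    exact ⟨by lia, hx.2.trans_le (by exact_mod_cast hle)⟩

theorem mul_notMem_tileSites (n j : ℕ) {k : ℕ} (hk : 0 < k) :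
    ((k * (n + 1) : ℕ) : ℤ) ∉ tileSites n j := by
  intro hx
  simp only [tileSites] at hx
  split_ifs at hx with h
  · have : n + 1 ≤ k * (n + 1) := Nat.le_mul_of_pos_left _ hk
    rw [Set.mem_singleton_iff] at hx
    lia
  · rw [Set.mem_Ico, Nat.cast_le, Nat.cast_lt, Nat.succ_le_iff] at hx
    have hleft := Nat.lt_of_mul_lt_mul_right hx.1
    have hright := Nat.lt_of_mul_lt_mul_right hx.2
    lia

theorem exists_multiple_near {m M d : ℕ} (hd0 : 0 < d) (hd : d ≤ M * m) :
    ∃ k, 0 < k ∧ d ≤ k * m ∧ k * m < d + m ∧ k * m ≤ M * m := by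
  have hm : 0 < m := Nat.pos_of_mul_pos_left (hd0.trans_le hd)
  have hdiv := Nat.div_add_mod (d - 1) m
  have hmod := Nat.mod_lt (d - 1) hm
  have hle : (d - 1) / m + 1 ≤ M := Nat.div_lt_of_lt_mul (by rw [mul_comm]; lia)
  exact ⟨(d - 1) / m + 1, Nat.succ_pos _, by rw [add_one_mul, mul_comm]; lia,
    by rw [add_one_mul, mul_comm]; lia, Nat.mul_le_mul_right _ hle⟩

namespace Marker

variable (mk : L.Marker) (n K : ℕ) {ξ : ℕ → T}

/-- The `j`-th factor of the tile at the origin: a marker if `j ≤ n`, and otherwise a translate of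
one of the vectors `ξ`. -/
def tileFactor (ξ : ℕ → T) (j : ℕ) : T :=
  if j ≤ n then mk.v j else L.translate (((j - n) * (n + 1) + 1 : ℕ) : ℤ) (ξ (j - n - 1))

/-- The tile at the origin with contents `ξ 0, …, ξ (K - 1)`. -/
noncomputable def tileVector (ξ : ℕ → T) : T :=
  ((√(1 / 2) : ℝ) : ℂ) • ((List.range (n + 1 + K)).map (mk.tileFactor n ξ)).prod

variable {n} (hξ : ∀ k, ξ k ∈ L.localAlgebra (Set.Ico 0 n))
  (hξ1 : ∀ k, gnsNormSq L.Ω (ξ k) = 1)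

include hξ

theorem tileFactor_mem (j : ℕ) : mk.tileFactor n ξ j ∈ L.localAlgebra (tileSites n j) := by
  rw [tileFactor, tileSites]
  split_ifs with h
  · exact mk.v_mem j
  · refine L.translate_mem _ (fun x hx => ?_) (hξ _)
    rw [Set.mem_Ico] at hx ⊢
    have : (j - n + 1) * (n + 1) = (j - n) * (n + 1) + (n + 1) := by ring
    lia

theorem tileVector_mem :
    mk.tileVector n K ξ ∈ L.localAlgebra (⋃ j < n + 1 + K, tileSites n j) :=
  (L.localAlgebra _).smul_mem (prod_range_mem (mk.tileFactor_mem hξ) _) _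

theorem translate_tileVector_mem_compl {k : ℕ} (hk : 0 < k) (i : ℤ) :
    L.translate i (mk.tileVector n K ξ) ∈ L.localAlgebra {i + (k * (n + 1) : ℕ)}ᶜ := by
  refine L.translate_mem i (fun x hx => ?_) (mk.tileVector_mem K hξ)
  obtain ⟨j, -, hxj⟩ := Set.mem_iUnion₂.mp hx
  rw [Set.mem_compl_singleton_iff, add_comm i, Ne, add_left_inj]
  rintro rfl
  exact mul_notMem_tileSites n j hk hxj

theorem exists_translate_tileVector_eq_mul {j : ℕ} (hj : j < n + 1 + K) (i : ℤ) :
    ∃ z ∈ L.localAlgebra {x | x - i ∉ tileSites n j},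
      L.translate i (mk.tileVector n K ξ) = L.translate i (mk.tileFactor n ξ j) * z := by
  obtain ⟨z, hz, hprod⟩ :=
    exists_prod_range_eq_mul (mk.tileFactor_mem hξ) (pairwise_disjoint_tileSites n) hj
  refine ⟨((√(1 / 2) : ℝ) : ℂ) • L.translate i z,
    (L.localAlgebra _).smul_mem (L.translate_mem i (fun x hx => ?_) hz) _, ?_⟩
  · simpa only [Set.mem_ofPred_eq, add_sub_cancel_right, Set.mem_compl_iff] using hx
  · rw [tileVector, hprod, map_smul, map_mul, mul_smul_comm]

theorem isMarked_translate_tileVector {i u : ℤ} (hiu : i ≤ u) (hui : u ≤ i + n) :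
    mk.IsMarked u (L.translate i (mk.tileVector n K ξ)) := by
  obtain ⟨j, rfl⟩ := Int.le.dest hiu
  have hj : j ≤ n := by lia
  obtain ⟨z, hz, hmul⟩ := mk.exists_translate_tileVector_eq_mul K hξ (j := j) (by lia) i
  refine ⟨z, L.mono (fun x hx => ?_) hz, ?_⟩
  · rw [Set.mem_ofPred_eq, tileSites, if_pos hj, Set.mem_singleton_iff] at hx
    rw [Set.mem_compl_singleton_iff]
    lia
  · rw [hmul, tileFactor, if_pos hj, mk.translate_v, add_comm i]

include hξ1

theorem gnsNormSq_tileVector : gnsNormSq L.Ω (mk.tileVector n K ξ) = 1 / 2 := by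
  have hfactor (j : ℕ) : gnsNormSq L.Ω (mk.tileFactor n ξ j) = 1 := by
    rw [tileFactor]
    split_ifs
    · exact mk.gnsNormSq_v j
    · rw [gnsNormSq_translate, hξ1]
  rw [tileVector, gnsNormSq_smul, gnsNormSq_prod_range (mk.tileFactor_mem hξ)
    (pairwise_disjoint_tileSites n) hfactor, mul_one, Complex.norm_real, Real.norm_eq_abs, sq_abs,
    Real.sq_sqrt (by norm_num)]

/-- The tiles that carry the vectors `ξ 0, …, ξ (K - 1)` behind their marked sites. -/
noncomputable def tile : Tile mk n ((K + 1) * (n + 1) + 1) where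
  τ i := L.translate i (mk.tileVector n K ξ)
  lt := by nlinarith
  mem i := by
    refine L.translate_mem i (fun x hx => ?_) (mk.tileVector_mem K hξ)
    obtain ⟨j, hj, hxj⟩ := Set.mem_iUnion₂.mp hx
    have hxI := tileSites_subset hj hxj
    rw [Set.mem_Ico] at hxI ⊢
    push_cast
    constructor <;> linarith
  gnsNormSq_τ i := (gnsNormSq_translate i _).trans (mk.gnsNormSq_tileVector K hξ hξ1)
  translate_τ c i := by rw [add_comm, L.translate_add]
  isMarked i u := mk.isMarked_translate_tileVector K hξ
  exists_empty_site i i' hi hi' := by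
    obtain ⟨d, rfl⟩ := Int.le.dest hi.le
    obtain ⟨k, hk0, hdk, hkd, hkK⟩ := exists_multiple_near (m := n + 1) (M := K + 1) (d := d)
      (by lia) (by zify; push_cast at hi'; linarith)
    exact ⟨i + (k * (n + 1) : ℕ), by lia, by lia, by lia,
      mk.translate_tileVector_mem_compl K hξ hk0 i⟩

theorem exists_tile_eq_mul {k : ℕ} (hk : k < K) (i : ℤ) :
    ∃ z ∈ L.localAlgebra
        (Set.Ico (i + ((k + 1) * (n + 1) + 1)) (i + ((k + 1) * (n + 1) + 1) + n))ᶜ,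
      (mk.tile K hξ hξ1).τ i = L.translate (i + ((k + 1) * (n + 1) + 1)) (ξ k) * z := by
  obtain ⟨z, hz, hmul⟩ :=
    mk.exists_translate_tileVector_eq_mul K hξ (j := n + 1 + k) (by lia) i
  have hnot : ¬ n + 1 + k ≤ n := by lia
  have hsub : n + 1 + k - n = k + 1 := by lia
  refine ⟨z, L.mono (fun x hx => ?_) hz, hmul.trans ?_⟩
  · rw [Set.mem_ofPred_eq, tileSites, if_neg hnot, hsub] at hx
    refine fun hxI => hx ?_
    rw [Set.mem_Ico] at hxI ⊢
    have hblock : ((k : ℤ) + 1 + 1) * (n + 1) = (k + 1) * (n + 1) + (n + 1) := by ring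
    push_cast
    rw [hblock]
    constructor <;> linarith
  · rw [tileFactor, if_neg hnot, hsub, Nat.add_sub_cancel, ← L.translate_add]
    push_cast
    rfl

end Marker

end LocalSystem

/-! ### Sums over tilings -/

namespace LocalSystem.Tile

variable {T : Type*} [CStarAlgebra T] {L : LocalSystem T} {mk : L.Marker} {n R : ℕ}
  (t : Tile mk n R)

theorem length_pos (t : Tile mk n R) : 0 < R :=
  n.zero_le.trans_lt t.lt

/-- The sum over all tilings of `[a, b)` by tiles of lengths `R` and `R + 1`, where the last site of
the long tiles is empty. -/
noncomputable def tilingSum (a b : ℤ) : T :=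
  have := t.length_pos
  if a < b then t.τ a * (tilingSum (a + R) b + tilingSum (a + R + 1) b)
  else if a = b then 1 else 0
termination_by (b - a).toNat
decreasing_by all_goals lia

theorem tilingSum_of_gt {a b : ℤ} (h : b < a) : t.tilingSum a b = 0 := by
  rw [tilingSum, if_neg (by lia), if_neg (by lia)]

@[simp]
theorem tilingSum_self (a : ℤ) : t.tilingSum a a = 1 := by
  rw [tilingSum, if_neg (by lia), if_pos rfl]

theorem tilingSum_of_lt {a b : ℤ} (h : a < b) :
    t.tilingSum a b = t.τ a * (t.tilingSum (a + R) b + t.tilingSum (a + R + 1) b) := by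
  rw [tilingSum, if_pos h]

theorem tilingSum_eq_left (a b : ℤ) :
    t.tilingSum a b =
      (if a = b then 1 else 0) +
        t.τ a * (t.tilingSum (a + R) b + t.tilingSum (a + R + 1) b) := by
  have hR := t.length_pos
  rcases lt_trichotomy a b with h | rfl | h
  · rw [tilingSum_of_lt _ h, if_neg h.ne, zero_add]
  · rw [tilingSum_self, if_pos rfl, tilingSum_of_gt _ (by lia), tilingSum_of_gt _ (by lia),
      add_zero, mul_zero, add_zero]
  · rw [tilingSum_of_gt _ h, if_neg h.ne', tilingSum_of_gt _ (by lia), tilingSum_of_gt _ (by lia),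
      add_zero, mul_zero, add_zero]

theorem induction_left (t : Tile mk n R) (b : ℤ) {P : ℤ → Prop} (of_gt : ∀ a, b < a → P a)
    (step : ∀ a ≤ b, P (a + R) → P (a + R + 1) → P a) (a : ℤ) : P a := by
  have hR := t.length_pos
  induction hN : (b + 1 - a).toNat using Nat.strong_induction_on generalizing a with
  | _ N ih =>
    rcases lt_or_ge b a with h | h
    · exact of_gt a h
    · exact step a h (ih _ (by lia) _ rfl) (ih _ (by lia) _ rfl)

theorem tilingSum_eq_right (a b : ℤ) :
    t.tilingSum a b =
      (if a = b then 1 else 0) +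
        (t.tilingSum a (b - R) * t.τ (b - R) + t.tilingSum a (b - R - 1) * t.τ (b - R - 1)) := by
  have hR := t.length_pos
  induction a using t.induction_left b with
  | of_gt a ha =>
    rw [tilingSum_of_gt _ ha, if_neg ha.ne', tilingSum_of_gt _ (by lia),
      tilingSum_of_gt _ (by lia), zero_mul, zero_mul, add_zero, add_zero]
  | step a _ ihshort ihlong =>
    have hmove (c : ℤ) : t.τ a * (if a + c = b then 1 else 0) =
        (if a = b - c then 1 else 0) * t.τ (b - c) := by
      by_cases h : a = b - c
      · rw [if_pos (by lia), if_pos h, mul_one, one_mul, h]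
      · rw [if_neg (by lia), if_neg h, mul_zero, zero_mul]
    have hshort := hmove R
    have hlong := hmove (R + 1)
    rw [← add_assoc, ← sub_sub] at hlong
    rw [tilingSum_eq_left t a b, ihshort, ihlong, tilingSum_eq_left t a (b - R),
      tilingSum_eq_left t a (b - R - 1), add_mul, add_mul, ← hshort, ← hlong]
    noncomm_ring

theorem tilingSum_mem (a b : ℤ) : t.tilingSum a b ∈ L.localAlgebra (Set.Ico a b) := by
  induction a using t.induction_left b with
  | of_gt a ha => exact tilingSum_of_gt t ha ▸ zero_mem _
  | step a ha ihshort ihlong =>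
    rcases ha.eq_or_lt with rfl | h
    · exact tilingSum_self t a ▸ one_mem _
    rw [tilingSum_of_lt t h]
    rcases lt_or_ge b (a + R) with hR | hR
    · rw [tilingSum_of_gt _ hR, tilingSum_of_gt _ (by lia), add_zero, mul_zero]
      exact zero_mem _
    · exact mul_mem (mem_localAlgebra_Ico_of_le (t.mem a) le_rfl hR)
        (add_mem (mem_localAlgebra_Ico_of_le ihshort (by lia) le_rfl)
          (mem_localAlgebra_Ico_of_le ihlong (by lia) le_rfl))

theorem translate_tilingSum (c a b : ℤ) :
    L.translate c (t.tilingSum a b) = t.tilingSum (a + c) (b + c) := by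
  induction a using t.induction_left b with
  | of_gt a ha => rw [tilingSum_of_gt _ ha, map_zero, tilingSum_of_gt _ (by lia)]
  | step a ha ihshort ihlong =>
    rcases ha.eq_or_lt with rfl | h
    · rw [tilingSum_self, tilingSum_self, map_one]
    · rw [tilingSum_of_lt t h, tilingSum_of_lt t (show a + c < b + c by lia), map_mul, map_add,
        ihshort, ihlong, t.translate_τ, add_right_comm a c, add_right_comm (a + R) c]

/-- The squared norm of the sum over the tilings of an interval of length `k`. -/
noncomputable def weight (k : ℤ) : ℝ :=
  gnsNormSq L.Ω (t.tilingSum 0 k)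

theorem gnsNormSq_tilingSum (a b : ℤ) : gnsNormSq L.Ω (t.tilingSum a b) = t.weight (b - a) := by
  rw [weight, ← gnsNormSq_translate a (t.tilingSum 0 _), translate_tilingSum, zero_add,
    sub_add_cancel]

theorem isMarked_tilingSum {a b : ℤ} (h : a < b) : mk.IsMarked a (t.tilingSum a b) := by
  have hR := t.length_pos
  rw [tilingSum_of_lt t h]
  exact (t.isMarked a a le_rfl (by lia)).mul_right (add_mem
    (mem_localAlgebra_compl (t.tilingSum_mem _ _) (by lia))
    (mem_localAlgebra_compl (t.tilingSum_mem _ _) (by lia)))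

theorem gnsNormSq_tilingSum_add (a b : ℤ) :
    gnsNormSq L.Ω (t.tilingSum a b + t.tilingSum (a + 1) b) =
      t.weight (b - a) + t.weight (b - a - 1) := by
  have horth : L.Ω (star (t.tilingSum a b) * t.tilingSum (a + 1) b) = 0 := by
    rcases lt_or_ge a b with h | h
    · rw [← one_mul (t.tilingSum (a + 1) b)]
      exact Marker.IsSeparated.Ω_eq_zero (u := a) (mk := mk) (.inr ⟨t.isMarked_tilingSum h,
        mem_localAlgebra_compl (t.tilingSum_mem _ _) (by lia)⟩) (one_mem _)
    · rw [tilingSum_of_gt t (Int.lt_add_one_of_le h), mul_zero, map_zero]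
  rw [L.isState.isPositiveFunctional.gnsNormSq_add horth, gnsNormSq_tilingSum, gnsNormSq_tilingSum,
    sub_sub]

theorem weight_of_neg {k : ℤ} (hk : k < 0) : t.weight k = 0 := by
  rw [weight, tilingSum_of_gt t hk, gnsNormSq, mul_zero, map_zero, Complex.zero_re]

theorem isRenewal_weight : IsRenewal R t.weight where
  neg _ := t.weight_of_neg
  zero := by rw [weight, tilingSum_self, L.isState.gnsNormSq_one]
  step k hk := by
    have hsum : t.tilingSum R k + t.tilingSum (R + 1) k ∈ L.localAlgebra (Set.Ico R k) :=
      add_mem (t.tilingSum_mem _ _)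
        (mem_localAlgebra_Ico_of_le (t.tilingSum_mem _ _) (by lia) le_rfl)
    have hτ := t.mem 0
    rw [zero_add] at hτ
    rw [weight, tilingSum_of_lt t hk, zero_add, gnsNormSq_mul (disjoint_Ico_of_le le_rfl) hτ hsum,
      t.gnsNormSq_τ, gnsNormSq_tilingSum_add]
    ring

/-- The sum over the tilings of the sites of `[q, b)` to the right of the tile covering `q`, when
that tile starts at `q - o`. The offset `o = R` forces a long tile. -/
noncomputable def tail (o : ℕ) (q b : ℤ) : T :=
  if o < R then t.tilingSum (q - o + R) b + t.tilingSum (q - o + R + 1) b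
  else t.tilingSum (q + 1) b

/-- The left end of the support of a tail. -/
def tailStart (R o : ℕ) (q : ℤ) : ℤ :=
  max (q - o + R) (q + 1)

theorem lt_tailStart (R o : ℕ) (q : ℤ) : q < tailStart R o q :=
  Int.add_one_le_iff.mp (le_max_right _ _)

theorem add_le_tailStart (R o : ℕ) (q : ℤ) : q - o + R ≤ tailStart R o q :=
  le_max_left _ _

theorem tailStart_le (hR : 0 < R) (o : ℕ) (q : ℤ) : tailStart R o q ≤ q + R := by
  rw [tailStart]
  lia

theorem tail_mem {o : ℕ} (ho : o ≤ R) (q b : ℤ) :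
    t.tail o q b ∈ L.localAlgebra (Set.Ico (tailStart R o q) b) := by
  rw [tail, tailStart]
  split_ifs with h
  · exact add_mem (mem_localAlgebra_Ico_of_le (t.tilingSum_mem _ _) (by lia) le_rfl)
      (mem_localAlgebra_Ico_of_le (t.tilingSum_mem _ _) (by lia) le_rfl)
  · exact mem_localAlgebra_Ico_of_le (t.tilingSum_mem _ _) (by lia) le_rfl

theorem gnsNormSq_tail_of_lt {o : ℕ} (ho : o < R) {q b : ℤ} (hb : q - o < b) :
    gnsNormSq L.Ω (t.tail o q b) = 2 * t.weight (b - (q - o)) := by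
  rw [tail, if_pos ho, gnsNormSq_tilingSum_add, t.isRenewal_weight.step (b - (q - o)) (by lia),
    sub_add_eq_sub_sub b]
  ring

theorem gnsNormSq_tail_self (q b : ℤ) : gnsNormSq L.Ω (t.tail R q b) = t.weight (b - q - 1) := by
  rw [tail, if_neg (lt_irrefl _), gnsNormSq_tilingSum, sub_sub]

theorem tilingSum_eq_sum {a q b : ℤ} (ha : a ≤ q) (hb : q < b) :
    t.tilingSum a b =
      ∑ o ∈ Finset.range (R + 1), t.tilingSum a (q - o) * (t.τ (q - o) * t.tail o q b) := by
  obtain ⟨r, rfl⟩ := Nat.exists_eq_add_one.mpr t.length_pos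
  have htail_zero {q : ℤ} (hb : q < b) : t.τ q * t.tail 0 q b = t.tilingSum q b := by
    rw [tilingSum_of_lt t hb, tail, if_pos t.length_pos, Nat.cast_zero, sub_zero]
  induction q, ha using Int.leInduction with
  | base =>
    rw [Finset.sum_range_succ', Finset.sum_eq_zero, zero_add, Nat.cast_zero, sub_zero,
      tilingSum_self, one_mul, htail_zero hb]
    intro o _
    rw [tilingSum_of_gt t (by lia), zero_mul]
  | succ q ha ih =>
    have hcast (o : ℕ) : q + 1 - ((o + 1 : ℕ) : ℤ) = q - o := by push_cast; ring
    have htail_succ {o : ℕ} (ho : o < r) : t.tail (o + 1) (q + 1) b = t.tail o q b := by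
      rw [tail, tail, if_pos (by lia), if_pos (by lia), hcast]
    have htail_r : t.tail r q b = t.tilingSum (q + 1) b + t.tail (r + 1) (q + 1) b := by
      rw [tail, tail, if_pos (by lia), if_neg (lt_irrefl _),
        show q - (r : ℤ) + (r + 1 : ℕ) = q + 1 by push_cast; ring]
    have htail_top : t.tail (r + 1) q b = t.tilingSum (q + 1) b := by
      rw [tail, if_neg (lt_irrefl _)]
    have hlast : t.tilingSum a (q + 1) = t.tilingSum a (q - r) * t.τ (q - r) +
        t.tilingSum a (q - (r + 1 : ℕ)) * t.τ (q - (r + 1 : ℕ)) := by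
      rw [tilingSum_eq_right t a (q + 1), if_neg (by lia), zero_add, hcast]
      simp only [show q - (r : ℤ) - 1 = q - (r + 1 : ℕ) by push_cast; ring]
    have hsum : ∑ o ∈ Finset.range r,
          t.tilingSum a (q - o) * (t.τ (q - o) * t.tail o q b) =
        ∑ o ∈ Finset.range r, t.tilingSum a (q + 1 - (o + 1 : ℕ)) *
          (t.τ (q + 1 - (o + 1 : ℕ)) * t.tail (o + 1) (q + 1) b) :=
      Finset.sum_congr rfl fun o ho => by rw [hcast, htail_succ (Finset.mem_range.mp ho)]
    rw [ih (by lia), Finset.sum_range_succ, Finset.sum_range_succ,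
      Finset.sum_range_succ' _ (r + 1), Finset.sum_range_succ _ r, hsum, htail_r, htail_top,
      Nat.cast_zero, sub_zero, htail_zero hb, hlast, hcast]
    noncomm_ring

theorem exists_empty_site_of_offset_lt {o o' : ℕ} (h : o' < o) (ho : o ≤ R) (q : ℤ) :
    ∃ u, q - o' ≤ u ∧ u ≤ q - o' + n ∧ u < tailStart R o q ∧
      t.τ (q - o) ∈ L.localAlgebra {u}ᶜ := by
  rw [tailStart]
  rcases lt_or_ge (q - o' : ℤ) (q - o + R) with hlt | hge
  · obtain ⟨u, hu, hun, huR, hmem⟩ := t.exists_empty_site (q - o) (q - o') (by lia) hlt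
    exact ⟨u, hu, hun, huR.trans_le (le_max_left _ _), hmem⟩
  · exact ⟨q, by lia, by lia, by lia, mem_localAlgebra_compl (t.mem _) (by lia)⟩

end LocalSystem.Tile

/-! ### Bridges between two tiles -/

namespace LocalSystem.Tile

section Bridge

variable {T : Type*} [CStarAlgebra T] {L : LocalSystem T} {mk : L.Marker} {n R : ℕ}
  (t : Tile mk n R)

/-- The possible offsets of two sites in the tiles that cover them. -/
abbrev Offsets (R : ℕ) : Type :=
  Fin (R + 1) × Fin (R + 1)

/-- The sum over the tilings from the tile covering `q₁` up to and including the tile covering `q₂`,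
when these tiles start at `q₁ - s.1` and `q₂ - s.2`. -/
noncomputable def bridge (q₁ q₂ : ℤ) (s : Offsets R) : T :=
  t.τ (q₁ - (s.1 : ℕ)) * (t.tail s.1 q₁ (q₂ - (s.2 : ℕ)) * t.τ (q₂ - (s.2 : ℕ)))

/-- The sites occupied by a bridge. -/
noncomputable def bridgeSites (q₁ q₂ : ℤ) (s : Offsets R) : Finset ℤ :=
  Finset.Ico (q₁ - (s.1 : ℕ)) (tailStart R s.2 q₂)

variable {a b q₁ q₂ : ℤ} {s s' : Offsets R}

theorem mem_localAlgebra_bridgeSites {x : T} :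
    x ∈ L.localAlgebra (bridgeSites q₁ q₂ s) ↔
      x ∈ L.localAlgebra (Set.Ico (q₁ - (s.1 : ℕ)) (tailStart R s.2 q₂)) := by
  rw [bridgeSites, Finset.coe_Ico]

theorem mem_bridgeSites_of_mem_Ico {x : T} (hx : x ∈ L.localAlgebra (Set.Ico (q₁ + R) (q₂ - R)))
    (s : Offsets R) : x ∈ L.localAlgebra (bridgeSites q₁ q₂ s) := by
  have hend := lt_tailStart R s.2 q₂
  exact mem_localAlgebra_bridgeSites.mpr (mem_localAlgebra_Ico_of_le hx (by lia) (by lia))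

theorem tilingSum_eq_sum_bridge (ha : a ≤ q₁) (hq : q₁ + 2 * R + n + 2 ≤ q₂) (hb : q₂ < b) :
    t.tilingSum a b =
      ∑ s : Offsets R, t.tilingSum a (q₁ - (s.1 : ℕ)) * (t.bridge q₁ q₂ s * t.tail s.2 q₂ b) := by
  rw [t.tilingSum_eq_sum (show a ≤ q₂ by lia) hb, Finset.sum_range, Fintype.sum_prod_type_right]
  refine Finset.sum_congr rfl fun o' _ => ?_
  have ho' := o'.is_le
  rw [t.tilingSum_eq_sum ha (show q₁ < q₂ - (o' : ℕ) by lia), Finset.sum_range, Finset.sum_mul]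
  simp only [bridge, mul_assoc]

theorem bridge_mem (hq : q₁ + 2 * R + n + 2 ≤ q₂) (s : Offsets R) :
    t.bridge q₁ q₂ s ∈ L.localAlgebra (bridgeSites q₁ q₂ s) := by
  have hlt := lt_tailStart R s.1 q₁
  have hle := tailStart_le t.length_pos s.1 q₁
  have hadd' := add_le_tailStart R s.2 q₂
  rw [mem_localAlgebra_bridgeSites]
  exact mul_mem (mem_localAlgebra_Ico_of_le (t.mem _) le_rfl (by lia)) (mul_mem
    (mem_localAlgebra_Ico_of_le (t.tail_mem (by lia) _ _) (by lia) (by lia))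
    (mem_localAlgebra_Ico_of_le (t.mem _) (by lia) hadd'))

-- The bridge whose tile starts further left has an empty site among the marked sites of the other.
theorem exists_isSeparated_bridge_of_lt (hq : q₁ + 2 * R + n + 2 ≤ q₂)
    (h : toLex s' < toLex s) :
    ∃ u ∈ bridgeSites q₁ q₂ s, u ∈ bridgeSites q₁ q₂ s' ∧ u ∉ Set.Ico (q₁ + R) (q₂ - R) ∧
      mk.IsSeparated u (t.bridge q₁ q₂ s) (t.bridge q₁ q₂ s') := by
  obtain ⟨o, p⟩ := s
  obtain ⟨o', p'⟩ := s'
  have hnR := t.lt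
  have hp := lt_tailStart R p q₂
  have hp' := lt_tailStart R p' q₂
  have ho := tailStart_le t.length_pos o q₁
  have hadd' := add_le_tailStart R p' q₂
  simp only [Prod.Lex.toLex_lt_toLex, Fin.lt_def] at h
  simp only [bridge, bridgeSites, Finset.mem_Ico, Set.mem_Ico]
  rcases h with h | ⟨rfl, h⟩
  · obtain ⟨u, hu, hun, hustart, hmem⟩ := t.exists_empty_site_of_offset_lt h (by lia) q₁
    have hadd := add_le_tailStart R o' q₁
    refine ⟨u, by lia, by lia, by lia, .inl ⟨mul_mem hmem (mul_mem ?_ ?_),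
      (t.isMarked _ u hu hun).mul_right (mul_mem ?_ ?_)⟩⟩
    · exact mem_localAlgebra_compl (t.tail_mem (by lia) _ _) (by lia)
    · exact mem_localAlgebra_compl (t.mem _) (by lia)
    · exact mem_localAlgebra_compl (t.tail_mem (by lia) _ _) (by lia)
    · exact mem_localAlgebra_compl (t.mem _) (by lia)
  · obtain ⟨u, hu, hun, hustart, hmem⟩ := t.exists_empty_site_of_offset_lt h (by lia) q₂
    refine ⟨u, by lia, by lia, by lia, .inl ⟨mul_mem ?_ (mul_mem ?_ hmem),
      ((t.isMarked _ u hu hun).mul_left ?_).mul_left ?_⟩⟩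
    · exact mem_localAlgebra_compl (t.mem _) (by lia)
    · exact mem_localAlgebra_compl (t.tail_mem (by lia) _ _) (by lia)
    · exact mem_localAlgebra_compl (t.tail_mem (by lia) _ _) (by lia)
    · exact mem_localAlgebra_compl (t.mem _) (by lia)

theorem exists_isSeparated_bridge (hq : q₁ + 2 * R + n + 2 ≤ q₂) (h : s ≠ s') :
    ∃ u ∈ bridgeSites q₁ q₂ s, u ∈ bridgeSites q₁ q₂ s' ∧ u ∉ Set.Ico (q₁ + R) (q₂ - R) ∧
      mk.IsSeparated u (t.bridge q₁ q₂ s) (t.bridge q₁ q₂ s') := by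
  rcases (toLex.injective.ne h).lt_or_gt with hlt | hgt
  · obtain ⟨u, hu', hu, hnot, hsep⟩ := t.exists_isSeparated_bridge_of_lt hq hlt
    exact ⟨u, hu, hu', hnot, hsep.symm⟩
  · exact t.exists_isSeparated_bridge_of_lt hq hgt

theorem Ω_tilingSum_eq_sum {x : T} (hx : x ∈ L.localAlgebra (Set.Ico (q₁ + R) (q₂ - R)))
    (ha : a ≤ q₁) (hq : q₁ + 2 * R + n + 2 ≤ q₂) (hb : q₂ < b) :
    L.Ω (star (t.tilingSum a b) * (x * t.tilingSum a b)) =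
      ∑ s : Offsets R, (t.weight (q₁ - (s.1 : ℕ) - a) : ℂ) *
        (L.Ω (star (t.bridge q₁ q₂ s) * (x * t.bridge q₁ q₂ s)) *
          (gnsNormSq L.Ω (t.tail s.2 q₂ b) : ℂ)) := by
  have hend (s : Offsets R) : q₁ ≤ tailStart R s.2 q₂ := by
    have hlt := lt_tailStart R s.2 q₂
    lia
  rw [t.tilingSum_eq_sum_bridge ha hq hb, apply_star_sum_mul_sum]
  · refine Finset.sum_congr rfl fun s _ => ?_
    rw [Ω_star_mul_mul_of_adjacent ((hend s).trans' (by lia)) (t.tilingSum_mem _ _)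
      (mem_localAlgebra_bridgeSites.mp (t.bridge_mem hq s)) (t.tail_mem (by lia) _ _)
      (mem_localAlgebra_bridgeSites.mp (mem_bridgeSites_of_mem_Ico hx s)), gnsNormSq_tilingSum]
  · intro s _ s' _ hs
    obtain ⟨u, hu, hu', hnot, hsep⟩ := t.exists_isSeparated_bridge hq hs
    rw [bridgeSites, Finset.mem_Ico] at hu hu'
    rw [Set.mem_Ico] at hnot
    exact ((hsep.mul_right (mem_localAlgebra_compl (t.tail_mem (by lia) _ _) (by lia))
      (mem_localAlgebra_compl (t.tail_mem (by lia) _ _) (by lia))).mul_left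
      (mem_localAlgebra_compl (t.tilingSum_mem _ _) (by lia))
      (mem_localAlgebra_compl (t.tilingSum_mem _ _) (by lia))).Ω_eq_zero
      (mem_localAlgebra_compl hx (by lia))

end Bridge

/-! ### The limit state of a tile -/

section LimitState

open Filter Topology

variable {T : Type*} [CStarAlgebra T] {L : LocalSystem T} {mk : L.Marker} {n R : ℕ}
  (t : Tile mk n R)

/-- The limit of the weights, which is the density of tiles in a long tiling. -/
noncomputable def density (R : ℕ) : ℝ :=
  1 / (R + 1 / 2)

theorem density_pos (R : ℕ) : 0 < density R := by
  rw [density]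
  positivity

theorem tendsto_weight : Tendsto t.weight atTop (𝓝 (density R)) :=
  t.isRenewal_weight.tendsto t.length_pos

theorem tendsto_weight_left (c : ℤ) :
    Tendsto (fun p : ℤ × ℤ => t.weight (c - p.1)) (atBot ×ˢ atTop) (𝓝 (density R)) :=
  t.tendsto_weight.comp
    (tendsto_atTop_add_const_left _ c (tendsto_neg_atBot_atTop.comp tendsto_fst))

theorem tendsto_weight_right (c : ℤ) :
    Tendsto (fun p : ℤ × ℤ => t.weight (p.2 + c)) (atBot ×ˢ atTop) (𝓝 (density R)) :=
  t.tendsto_weight.comp (tendsto_atTop_add_const_right _ c tendsto_snd)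

theorem tendsto_weight_length :
    Tendsto (fun p : ℤ × ℤ => t.weight (p.2 - p.1)) (atBot ×ˢ atTop) (𝓝 (density R)) :=
  t.tendsto_weight.comp
    (tendsto_snd.atTop_add_atTop (tendsto_neg_atBot_atTop.comp tendsto_fst))

theorem eventually_weight_pos :
    ∀ᶠ p : ℤ × ℤ in atBot ×ˢ atTop, 0 < t.weight (p.2 - p.1) :=
  t.tendsto_weight_length.eventually_const_lt (density_pos R)

theorem exists_tendsto_gnsNormSq_tail {o : ℕ} (ho : o ≤ R) (q : ℤ) :
    ∃ κ, Tendsto (fun p : ℤ × ℤ => gnsNormSq L.Ω (t.tail o q p.2)) (atBot ×ˢ atTop) (𝓝 κ) := by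
  rcases ho.lt_or_eq with ho | rfl
  · refine ⟨2 * density R, ((t.tendsto_weight_right (-(q - o))).const_mul 2).congr' ?_⟩
    filter_upwards [tendsto_snd.eventually (eventually_gt_atTop (q - o))] with p hp
    rw [t.gnsNormSq_tail_of_lt ho hp, ← sub_eq_add_neg]
  · refine ⟨density o, (t.tendsto_weight_right (-q - 1)).congr fun p => ?_⟩
    rw [gnsNormSq_tail_self, ← add_sub_assoc, ← sub_eq_add_neg]

/-- The normalized vector functional of the sum over the tilings of `[a, b)`. -/
noncomputable def vectorFunctional (a b : ℤ) : T →L[ℂ] ℂ :=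
  ((t.weight (b - a) : ℂ))⁻¹ • L.Ω.comp
    (ContinuousLinearMap.mulLeftRight ℂ T (star (t.tilingSum a b)) (t.tilingSum a b))

theorem vectorFunctional_apply (a b : ℤ) (x : T) :
    t.vectorFunctional a b x =
      L.Ω (star (t.tilingSum a b) * (x * t.tilingSum a b)) / t.weight (b - a) := by
  simp only [vectorFunctional, FunLike.coe_smul, Pi.smul_apply, ContinuousLinearMap.comp_apply,
    ContinuousLinearMap.mulLeftRight_apply, smul_eq_mul, mul_assoc]
  rw [div_eq_inv_mul]

theorem isState_vectorFunctional {a b : ℤ} (h : 0 < t.weight (b - a)) :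
    IsState (t.vectorFunctional a b) := by
  have hpos := L.isState.isPositiveFunctional
  refine isState_iff.mpr ⟨fun x => ?_, ?_⟩
  · have hmul : star (t.tilingSum a b) * (star x * x * t.tilingSum a b) =
        star (x * t.tilingSum a b) * (x * t.tilingSum a b) := by
      simp only [star_mul, mul_assoc]
    rw [vectorFunctional_apply, hmul, ← hpos.coe_gnsNormSq, ← Complex.ofReal_div]
    exact_mod_cast div_nonneg (hpos.gnsNormSq_nonneg _) h.le
  · rw [vectorFunctional_apply, one_mul, ← hpos.coe_gnsNormSq, gnsNormSq_tilingSum]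
    exact div_self (by exact_mod_cast h.ne')

theorem vectorFunctional_translate (c a b : ℤ) (x : T) :
    t.vectorFunctional a b (L.translate c x) = t.vectorFunctional (a - c) (b - c) x := by
  have htranslate := t.translate_tilingSum c (a - c) (b - c)
  rw [sub_add_cancel, sub_add_cancel] at htranslate
  rw [vectorFunctional_apply, vectorFunctional_apply, ← htranslate, ← map_star, ← map_mul,
    ← map_mul, L.Ω_translate, sub_sub_sub_cancel_right]

theorem exists_tendsto_vectorFunctional {x : T} (hx : x ∈ L.localAlgebra Set.univ) :
    ∃ z, Tendsto (fun p : ℤ × ℤ => t.vectorFunctional p.1 p.2 x) (atBot ×ˢ atTop) (𝓝 z) := by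
  obtain ⟨N, hN⟩ := L.exists_mem_Ico hx
  set q₁ : ℤ := -N - R
  set q₂ : ℤ := max (N + R) (q₁ + 2 * R + n + 2)
  have hxq : x ∈ L.localAlgebra (Set.Ico (q₁ + R) (q₂ - R)) :=
    mem_localAlgebra_Ico_of_le hN (by lia) (by lia)
  choose κ hκ using fun s : Offsets R => t.exists_tendsto_gnsNormSq_tail s.2.is_le q₂
  have hweight (s : Offsets R) := t.tendsto_weight_left (q₁ - (s.1 : ℕ))
  refine ⟨_, ((tendsto_finsetSum Finset.univ fun s _ => ((hweight s).ofReal).mul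
    (((hκ s).ofReal).const_mul
      (L.Ω (star (t.bridge q₁ q₂ s) * (x * t.bridge q₁ q₂ s))))).div
    (t.tendsto_weight_length.ofReal)
    (Complex.ofReal_ne_zero.mpr (density_pos R).ne')).congr' ?_⟩
  filter_upwards [tendsto_fst.eventually (eventually_le_atBot q₁),
    tendsto_snd.eventually (eventually_gt_atTop q₂)] with p hp₁ hp₂
  rw [vectorFunctional_apply, t.Ω_tilingSum_eq_sum hxq hp₁ (le_max_right _ _) hp₂]
  rfl

/-- A state which agrees with the limit of the vector functionals over growing intervals wherever
that limit exists. -/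
structure IsLimitState (ψ : T →L[ℂ] ℂ) : Prop where
  isState : IsState ψ
  eq_of_tendsto : ∀ x z, Tendsto (fun p : ℤ × ℤ => t.vectorFunctional p.1 p.2 x)
    (atBot ×ˢ atTop) (𝓝 z) → ψ x = z

theorem exists_isLimitState : ∃ ψ, t.IsLimitState ψ := by
  obtain ⟨ψ, hψ, hlim⟩ := exists_isState_of_eventually_isState
    (t.eventually_weight_pos.mono fun _ => t.isState_vectorFunctional)
  exact ⟨ψ, hψ, hlim⟩

namespace IsLimitState

variable {t} {ψ : T →L[ℂ] ℂ}

theorem tendsto (h : t.IsLimitState ψ) {x : T} (hx : x ∈ L.localAlgebra Set.univ) :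
    Tendsto (fun p : ℤ × ℤ => t.vectorFunctional p.1 p.2 x) (atBot ×ˢ atTop) (𝓝 (ψ x)) := by
  obtain ⟨z, hz⟩ := t.exists_tendsto_vectorFunctional hx
  rwa [h.eq_of_tendsto x z hz]

theorem apply_translate (h : t.IsLimitState ψ) (c : ℤ) (x : T) : ψ (L.translate c x) = ψ x := by
  have hlocal : ∀ y ∈ L.localAlgebra Set.univ, ψ (L.translate c y) = ψ y := by
    intro y hy
    have hshift : Tendsto (fun p : ℤ × ℤ => (p.1 - c, p.2 - c)) (atBot ×ˢ atTop)
        (atBot ×ˢ atTop) :=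
      (tendsto_atBot_add_const_right _ (-c) tendsto_id).prodMap
        (tendsto_atTop_add_const_right _ (-c) tendsto_id)
    refine h.eq_of_tendsto _ _ (((h.tendsto hy).comp hshift).congr fun p => ?_)
    rw [t.vectorFunctional_translate]
    rfl
  have hcont : Continuous fun y => ψ (L.translate c y) :=
    ψ.continuous.comp (StarAlgEquiv.isometry (L.translate c)).continuous
  exact congrFun (hcont.ext_on L.dense ψ.continuous hlocal) x

end IsLimitState

end LimitState

end LocalSystem.Tile

/-! ### Purity of the limit state -/

namespace LocalSystem.Tile

section Purity

open Filter Topology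

variable {T : Type*} [CStarAlgebra T] {L : LocalSystem T} {mk : L.Marker} {n R : ℕ}
  (t : Tile mk n R) {q₁ q₂ : ℤ}

-- The outer tiles of a bridge factor out, and what remains is a sum over tilings.
theorem exists_Ω_bridge_eq (hq : q₁ + 2 * R + n + 2 ≤ q₂) (s : Offsets R) :
    ∃ p ≤ q₁ + 1, ∃ κ : ℝ, κ ≠ 0 ∧ ∀ x ∈ L.localAlgebra (Set.Ico (q₁ + R) (q₂ - R)),
      L.Ω (star (t.bridge q₁ q₂ s) * (x * t.bridge q₁ q₂ s)) =
        κ * L.Ω (star (t.tilingSum p (q₂ - (s.2 : ℕ))) *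
          (x * t.tilingSum p (q₂ - (s.2 : ℕ)))) := by
  have hs₁ := s.1.is_le
  have hs₂ := s.2.is_le
  have hend := tailStart_le t.length_pos s.1 q₁
  have hadd := add_le_tailStart R s.1 q₁
  have htail := t.tail_mem hs₁ q₁ (q₂ - (s.2 : ℕ))
  have hbridge {x : T} (hx : x ∈ L.localAlgebra (Set.Ico (q₁ + R) (q₂ - R))) :
      L.Ω (star (t.bridge q₁ q₂ s) * (x * t.bridge q₁ q₂ s)) = (1 / 4 : ℝ) *
        L.Ω (star (t.tail s.1 q₁ (q₂ - (s.2 : ℕ))) * (x * t.tail s.1 q₁ (q₂ - (s.2 : ℕ)))) := by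
    rw [bridge, Ω_star_mul_mul_of_adjacent (by lia)
      (mem_localAlgebra_Ico_of_le (t.mem _) le_rfl hadd) htail (t.mem _)
      (mem_localAlgebra_Ico_of_le hx (by lia) (by lia)), t.gnsNormSq_τ,
      t.gnsNormSq_τ]
    push_cast
    ring
  rcases hs₁.lt_or_eq with ho | ho
  · refine ⟨q₁ - (s.1 : ℕ), by lia, 1 / 2, by norm_num, fun x hx => ?_⟩
    have hsum : t.tilingSum (q₁ - (s.1 : ℕ)) (q₂ - (s.2 : ℕ)) =
        t.τ (q₁ - (s.1 : ℕ)) * (t.tail s.1 q₁ (q₂ - (s.2 : ℕ)) * 1) := by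
      rw [tilingSum_of_lt t (by lia), tail, if_pos ho, mul_one]
    rw [hbridge hx, hsum, Ω_star_mul_mul_of_adjacent (s := q₂) (by lia)
      (mem_localAlgebra_Ico_of_le (t.mem _) le_rfl hadd) htail (one_mem _)
      (mem_localAlgebra_Ico_of_le hx (by lia) (by lia)), t.gnsNormSq_τ, L.isState.gnsNormSq_one]
    push_cast
    ring
  · refine ⟨q₁ + 1, le_rfl, 1 / 4, by norm_num, fun x hx => ?_⟩
    rw [hbridge hx, tail, if_neg ho.not_lt]

theorem exists_vectorFunctional_eq_bridge (hq : q₁ + 2 * R + n + 2 ≤ q₂) (s : Offsets R) :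
    ∃ p ≤ q₁ + 1, 0 < t.weight (q₂ - (s.2 : ℕ) - p) →
      gnsNormSq L.Ω (t.bridge q₁ q₂ s) ≠ 0 ∧
        ∀ x ∈ L.localAlgebra (Set.Ico (q₁ + R) (q₂ - R)),
          L.Ω (star (t.bridge q₁ q₂ s) * (x * t.bridge q₁ q₂ s)) /
            gnsNormSq L.Ω (t.bridge q₁ q₂ s) = t.vectorFunctional p (q₂ - (s.2 : ℕ)) x := by
  obtain ⟨p, hp, κ, hκ, hbridge⟩ := t.exists_Ω_bridge_eq hq s
  have hnorm : gnsNormSq L.Ω (t.bridge q₁ q₂ s) = κ * t.weight (q₂ - (s.2 : ℕ) - p) := by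
    have hone := hbridge 1 (one_mem _)
    rw [one_mul, one_mul, ← L.isState.isPositiveFunctional.coe_gnsNormSq,
      ← L.isState.isPositiveFunctional.coe_gnsNormSq, gnsNormSq_tilingSum] at hone
    exact_mod_cast hone
  refine ⟨p, hp, fun hw => ⟨hnorm ▸ mul_ne_zero hκ hw.ne', fun x hx => ?_⟩⟩
  rw [hbridge x hx, hnorm, Complex.ofReal_mul, mul_div_mul_left _ _ (Complex.ofReal_ne_zero.mpr hκ),
    vectorFunctional_apply]

/-- The projection onto the tilings with offsets `s` over `q₁` and `q₂`, obtained by excising the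
range of the bridge. -/
noncomputable def bridgeProj (q₁ q₂ : ℤ) (m : ℕ) (s : Offsets R) : T :=
  ((gnsNormSq L.Ω (t.bridge q₁ q₂ s))⁻¹ : ℂ) •
    (t.bridge q₁ q₂ s * L.excisor (bridgeSites q₁ q₂ s) m * star (t.bridge q₁ q₂ s))

theorem isSelfAdjoint_bridgeProj (m : ℕ) (s : Offsets R) :
    IsSelfAdjoint (t.bridgeProj q₁ q₂ m s) := by
  rw [bridgeProj, ← Complex.ofReal_inv]
  exact IsSelfAdjoint.smul (Complex.conj_ofReal _) ((L.isSelfAdjoint_excisor _ m).conjugate _)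

theorem bridgeProj_mul_mul_bridgeProj (m : ℕ) (s s' : Offsets R) (y : T) :
    t.bridgeProj q₁ q₂ m s * (y * t.bridgeProj q₁ q₂ m s') =
      ((gnsNormSq L.Ω (t.bridge q₁ q₂ s') : ℂ)⁻¹ * (gnsNormSq L.Ω (t.bridge q₁ q₂ s) : ℂ)⁻¹) •
        (t.bridge q₁ q₂ s * (L.excisor (bridgeSites q₁ q₂ s) m *
          (star (t.bridge q₁ q₂ s) * (y * t.bridge q₁ q₂ s')) *
            L.excisor (bridgeSites q₁ q₂ s') m) * star (t.bridge q₁ q₂ s')) := by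
  simp only [bridgeProj, smul_mul_assoc, mul_smul_comm, smul_smul, mul_assoc]

/-- The conditions on `m` which ensure that `bridgeProj` is a family of orthogonal projections that
diagonalizes `x`. -/
structure Excises (q₁ q₂ : ℤ) (m : ℕ) (x : T) : Prop where
  one : ∀ s, L.excisor (bridgeSites q₁ q₂ s) m * (star (t.bridge q₁ q₂ s) * t.bridge q₁ q₂ s) *
    L.excisor (bridgeSites q₁ q₂ s) m =
      (gnsNormSq L.Ω (t.bridge q₁ q₂ s) : ℂ) • L.excisor (bridgeSites q₁ q₂ s) m
  apply : ∀ s, L.excisor (bridgeSites q₁ q₂ s) m *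
    (star (t.bridge q₁ q₂ s) * (x * t.bridge q₁ q₂ s)) * L.excisor (bridgeSites q₁ q₂ s) m =
      L.Ω (star (t.bridge q₁ q₂ s) * (x * t.bridge q₁ q₂ s)) • L.excisor (bridgeSites q₁ q₂ s) m
  marker : ∀ s : Offsets R, ∀ u ∈ bridgeSites q₁ q₂ s,
    L.excisor {u} m * mk.v u * L.excisor {u} m = 0

variable {t} {m : ℕ} {x : T}

theorem exists_excises (hq : q₁ + 2 * R + n + 2 ≤ q₂)
    (hx : x ∈ L.localAlgebra (Set.Ico (q₁ + R) (q₂ - R))) : ∃ m, t.Excises q₁ q₂ m x := by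
  have hbridge := t.bridge_mem hq
  have hone := eventually_all.mpr fun s => L.excises (mul_mem (star_mem (hbridge s)) (hbridge s))
  have happly := eventually_all.mpr fun s => L.excises
    (mul_mem (star_mem (hbridge s)) (mul_mem (mem_bridgeSites_of_mem_Ico hx s) (hbridge s)))
  have hmarker := eventually_all.mpr fun s : Offsets R =>
    (eventually_all_finset (bridgeSites q₁ q₂ s)).mpr fun u _ =>
      L.excises (J := {u}) (x := mk.v u) (by simpa using mk.v_mem u)
  obtain ⟨m, hone, happly, hmarker⟩ := (hone.and (happly.and hmarker)).exists
  refine ⟨m, fun s => ?_, happly, fun s u hu => ?_⟩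
  · rw [L.isState.isPositiveFunctional.coe_gnsNormSq, hone s]
  · rw [hmarker s u hu, mk.Ω_v, zero_smul]

namespace Excises

theorem excisor_mul_mul_excisor_eq_zero (h : t.Excises q₁ q₂ m x)
    (hq : q₁ + 2 * R + n + 2 ≤ q₂) {s s' : Offsets R} (hs : s ≠ s') {a b : ℤ} {y y' z : T}
    (hy : y ∈ L.localAlgebra (Set.Ico (q₁ + R) (q₂ - R)))
    (hy' : y' ∈ L.localAlgebra (Set.Ico a (q₁ - (s'.1 : ℕ))))
    (hz : z ∈ L.localAlgebra (Set.Ico (tailStart R s'.2 q₂) b)) {J : Finset ℤ}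
    (hJ : bridgeSites q₁ q₂ s' ⊆ J) :
    L.excisor (bridgeSites q₁ q₂ s) m *
      (star (t.bridge q₁ q₂ s) * (y * (y' * (t.bridge q₁ q₂ s' * z)))) * L.excisor J m = 0 := by
  obtain ⟨u, hu, hu', hnot, hsep⟩ := t.exists_isSeparated_bridge hq hs
  have hmem' := hu'
  rw [bridgeSites, Finset.mem_Ico] at hmem'
  rw [Set.mem_Ico] at hnot
  have hsep' := (hsep.mul_right (one_mem _) (mem_localAlgebra_compl hz (by lia))).mul_left
    (one_mem _) (mem_localAlgebra_compl hy' (by lia))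
  rw [mul_one, one_mul] at hsep'
  exact hsep'.excisor_mul_mul_excisor_eq_zero (mem_localAlgebra_compl hy (by lia))
    (h.marker s u hu) hu (hJ hu')

theorem bridgeProj_mul_mul_eq_zero (h : t.Excises q₁ q₂ m x) (hq : q₁ + 2 * R + n + 2 ≤ q₂)
    {s s' : Offsets R} (hs : s ≠ s') {y : T}
    (hy : y ∈ L.localAlgebra (Set.Ico (q₁ + R) (q₂ - R))) :
    t.bridgeProj q₁ q₂ m s * (y * t.bridgeProj q₁ q₂ m s') = 0 := by
  have hzero := h.excisor_mul_mul_excisor_eq_zero hq hs (a := 0) (b := 0) hy (one_mem _)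
    (one_mem _) subset_rfl
  rw [one_mul, mul_one] at hzero
  rw [bridgeProj_mul_mul_bridgeProj, hzero, mul_zero, zero_mul, smul_zero]

theorem bridgeProj_mul_mul_self (h : t.Excises q₁ q₂ m x) (s : Offsets R) :
    t.bridgeProj q₁ q₂ m s * (x * t.bridgeProj q₁ q₂ m s) =
      (L.Ω (star (t.bridge q₁ q₂ s) * (x * t.bridge q₁ q₂ s)) /
        gnsNormSq L.Ω (t.bridge q₁ q₂ s)) • t.bridgeProj q₁ q₂ m s := by
  rw [bridgeProj_mul_mul_bridgeProj, h.apply s, mul_smul_comm, smul_mul_assoc, smul_smul,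
    bridgeProj, smul_smul]
  congr 1
  ring

theorem isStarProjection_bridgeProj (h : t.Excises q₁ q₂ m x) {s : Offsets R}
    (hs : gnsNormSq L.Ω (t.bridge q₁ q₂ s) ≠ 0) : IsStarProjection (t.bridgeProj q₁ q₂ m s) where
  isSelfAdjoint := t.isSelfAdjoint_bridgeProj m s
  isIdempotentElem := by
    have hone : t.Excises q₁ q₂ m 1 :=
      ⟨h.one, fun s => by rw [one_mul, h.one s, L.isState.isPositiveFunctional.coe_gnsNormSq],
        h.marker⟩
    have hself := hone.bridgeProj_mul_mul_self s
    rwa [one_mul, one_mul, ← L.isState.isPositiveFunctional.coe_gnsNormSq,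
      div_self (Complex.ofReal_ne_zero.mpr hs), one_smul] at hself

theorem bridgeProj_mul_mul_excisor (h : t.Excises q₁ q₂ m x) (hq : q₁ + 2 * R + n + 2 ≤ q₂)
    {s : Offsets R} (hs : gnsNormSq L.Ω (t.bridge q₁ q₂ s) ≠ 0) {a b : ℤ} {y z : T}
    (hy : y ∈ L.localAlgebra (Set.Ico a (q₁ - (s.1 : ℕ))))
    (hz : z ∈ L.localAlgebra (Set.Ico (tailStart R s.2 q₂) b)) {J : Finset ℤ}
    (hJ : bridgeSites q₁ q₂ s ⊆ J) :
    t.bridgeProj q₁ q₂ m s * (y * (t.bridge q₁ q₂ s * z) * L.excisor J m) =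
      y * (t.bridge q₁ q₂ s * z) * L.excisor J m := by
  set h₀ := t.bridge q₁ q₂ s with hh₀
  set q := L.excisor (bridgeSites q₁ q₂ s) m
  set q' := L.excisor J m
  have hbridge := mem_localAlgebra_bridgeSites.mp (t.bridge_mem hq s)
  have hexcisor := mem_localAlgebra_bridgeSites.mp (L.excisor_mem (bridgeSites q₁ q₂ s) m)
  have hyh : y * h₀ = h₀ * y := (L.commute (disjoint_Ico_of_le le_rfl) hy hbridge).eq
  have hyh' : star h₀ * y = y * star h₀ :=
    (L.commute (disjoint_Ico_of_le le_rfl) hy (star_mem hbridge)).eq.symm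
  have hyq : q * y = y * q := (L.commute (disjoint_Ico_of_le le_rfl) hy hexcisor).eq.symm
  have hzq : z * q = q * z := (L.commute (disjoint_Ico_of_le le_rfl) hexcisor hz).eq.symm
  have hqq' : q * q' = q' := L.excisor_mul hJ m
  have hmul : h₀ * q * star h₀ * (y * (h₀ * z) * q') =
      (gnsNormSq L.Ω h₀ : ℂ) • (y * (h₀ * z) * q') :=
    calc _ = h₀ * q * (star h₀ * y) * h₀ * z * q' := by simp only [mul_assoc]
      _ = h₀ * (q * y) * (star h₀ * h₀) * z * (q * q') := by rw [hyh', hqq']; simp only [mul_assoc]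
      _ = h₀ * y * (q * (star h₀ * h₀) * (z * q)) * q' := by rw [hyq]; simp only [mul_assoc]
      _ = h₀ * y * (q * (star h₀ * h₀) * q) * z * q' := by rw [hzq]; simp only [mul_assoc]
      _ = (gnsNormSq L.Ω h₀ : ℂ) • (h₀ * y * (q * z) * q') := by
        rw [h.one s]; simp only [mul_smul_comm, smul_mul_assoc, mul_assoc]; rfl
      _ = _ := by rw [← hzq, ← hyh]; simp only [mul_assoc, hqq']
  rw [bridgeProj, smul_mul_assoc, ← hh₀, hmul, smul_smul,
    inv_mul_cancel₀ (Complex.ofReal_ne_zero.mpr hs), one_smul]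

theorem sum_bridgeProj_mul_tilingSum (h : t.Excises q₁ q₂ m x) (hq : q₁ + 2 * R + n + 2 ≤ q₂)
    (hs : ∀ s, gnsNormSq L.Ω (t.bridge q₁ q₂ s) ≠ 0) {a b : ℤ} (ha : a ≤ q₁ - R)
    (hb : q₂ + R < b) :
    (∑ s, t.bridgeProj q₁ q₂ m s) * (t.tilingSum a b * L.excisor (Finset.Ico a b) m) =
      t.tilingSum a b * L.excisor (Finset.Ico a b) m := by
  have hJ (s : Offsets R) : bridgeSites q₁ q₂ s ⊆ Finset.Ico a b := by
    have hs₁ := s.1.is_le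
    have hend := tailStart_le t.length_pos s.2 q₂
    exact Finset.Ico_subset_Ico (by lia) (by lia)
  have htail (s : Offsets R) := t.tail_mem s.2.is_le q₂ b
  rw [t.tilingSum_eq_sum_bridge (by lia) hq (by lia), Finset.sum_mul, Finset.sum_mul]
  refine Finset.sum_congr rfl fun s _ => ?_
  rw [Finset.mul_sum, Finset.sum_eq_single s]
  · exact h.bridgeProj_mul_mul_excisor hq (hs s) (t.tilingSum_mem a _) (htail s) (hJ s)
  · intro s' _ hss
    have hzero := h.excisor_mul_mul_excisor_eq_zero hq hss.symm (one_mem _)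
      (t.tilingSum_mem a _) (htail s') (hJ s')
    rw [one_mul, mul_assoc, mul_assoc] at hzero
    rw [bridgeProj, smul_mul_assoc, mul_assoc, mul_assoc, hzero, mul_zero, smul_zero]
  · exact fun hs => absurd (Finset.mem_univ s) hs

theorem vectorFunctional_sum_bridgeProj (h : t.Excises q₁ q₂ m x)
    (hq : q₁ + 2 * R + n + 2 ≤ q₂) (hs : ∀ s, gnsNormSq L.Ω (t.bridge q₁ q₂ s) ≠ 0) {a b : ℤ}
    (ha : a ≤ q₁ - R) (hb : q₂ + R < b) (hw : 0 < t.weight (b - a)) :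
    t.vectorFunctional a b (∑ s, t.bridgeProj q₁ q₂ m s) = 1 := by
  have hexcisor : IsStarProjection (L.excisor (Finset.Ico a b) m) :=
    ⟨L.excisor_mul subset_rfl m, L.isSelfAdjoint_excisor _ m⟩
  have hΩ := L.isState.apply_mul_of_apply_eq_one hexcisor (L.Ω_excisor _ m)
  rw [vectorFunctional_apply, ← hΩ, mul_assoc, mul_assoc,
    h.sum_bridgeProj_mul_tilingSum hq hs ha hb, ← mul_assoc, hΩ,
    ← L.isState.isPositiveFunctional.coe_gnsNormSq, gnsNormSq_tilingSum]
  exact div_self (Complex.ofReal_ne_zero.mpr hw.ne')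

theorem diagonalizes (h : t.Excises q₁ q₂ m x) {ψ : T →L[ℂ] ℂ} (hψ : t.IsLimitState ψ)
    (hq : q₁ + 2 * R + n + 2 ≤ q₂) (hx : x ∈ L.localAlgebra (Set.Ico (q₁ + R) (q₂ - R)))
    (hs : ∀ s, gnsNormSq L.Ω (t.bridge q₁ q₂ s) ≠ 0) {ε : ℝ}
    (hε : ∀ s, ‖L.Ω (star (t.bridge q₁ q₂ s) * (x * t.bridge q₁ q₂ s)) /
      gnsNormSq L.Ω (t.bridge q₁ q₂ s) - ψ x‖ ≤ ε) :
    Diagonalizes (t.bridgeProj q₁ q₂ m) ψ x ε where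
  isStarProjection s := h.isStarProjection_bridgeProj (hs s)
  mul_ne s s' hss := by
    simpa only [one_mul] using h.bridgeProj_mul_mul_eq_zero hq hss (one_mem _)
  total := by
    refine hψ.eq_of_tendsto _ _ (tendsto_const_nhds.congr' ?_)
    filter_upwards [tendsto_fst.eventually (eventually_le_atBot (q₁ - R)),
      tendsto_snd.eventually (eventually_gt_atTop (q₂ + R)), t.eventually_weight_pos]
      with p hp₁ hp₂ hw
    exact (h.vectorFunctional_sum_bridgeProj hq hs hp₁ hp₂ hw).symm
  off_diag s s' hss := h.bridgeProj_mul_mul_eq_zero hq hss hx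
  diag s := ⟨_, h.bridgeProj_mul_mul_self s, hε s⟩

end Excises

theorem IsLimitState.isPureState {ψ : T →L[ℂ] ℂ} (h : t.IsLimitState ψ) : IsPureState ψ := by
  refine isPureState_of_diagonalizes (ι := Offsets R) h.isState L.dense fun x hx ε hε => ?_
  obtain ⟨N, hN⟩ := L.exists_mem_Ico hx
  have hclose := ((h.tendsto hx).eventually (Metric.closedBall_mem_nhds (ψ x) hε)).and
    t.eventually_weight_pos
  obtain ⟨A, B, hAB⟩ : ∃ A B : ℤ, ∀ a ≤ A, ∀ b ≥ B,
      t.vectorFunctional a b x ∈ Metric.closedBall (ψ x) ε ∧ 0 < t.weight (b - a) := by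
    obtain ⟨p, hp, q, hq, hpq⟩ := eventually_prod_iff.mp hclose
    obtain ⟨A, hA⟩ := eventually_atBot.mp hp
    obtain ⟨B, hB⟩ := eventually_atTop.mp hq
    exact ⟨A, B, fun a ha b hb => hpq (hA a ha) (hB b hb)⟩
  set q₁ : ℤ := min (A - 1) (-N - R)
  set q₂ : ℤ := max (max (N + R) (B + R)) (q₁ + 2 * R + n + 2)
  have hq : q₁ + 2 * R + n + 2 ≤ q₂ := le_max_right _ _
  have hxq : x ∈ L.localAlgebra (Set.Ico (q₁ + R) (q₂ - R)) :=
    mem_localAlgebra_Ico_of_le hN (by lia) (by lia)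
  obtain ⟨m, hm⟩ := t.exists_excises hq hxq
  choose p hp hbridge using t.exists_vectorFunctional_eq_bridge hq
  have hclose' (s : Offsets R) := hAB (p s) ((hp s).trans (by lia)) (q₂ - (s.2 : ℕ))
    (by have hs₂ := s.2.is_le; lia)
  refine ⟨t.bridgeProj q₁ q₂ m, hm.diagonalizes h hq hxq
    (fun s => (hbridge s (hclose' s).2).1) fun s => ?_⟩
  rw [(hbridge s (hclose' s).2).2 x hxq]
  exact mem_closedBall_iff_norm.mp (hclose' s).1

end Purity

end LocalSystem.Tile

/-! ### The tile covering the origin -/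

namespace LocalSystem.Tile

variable {T : Type*} [CStarAlgebra T] {L : LocalSystem T} {mk : L.Marker} {n R : ℕ}
  (t : Tile mk n R)

section OriginPart

variable {a b : ℤ} {o o' : ℕ} {x : T}

/-- The sum over the tilings of `[a, b)` whose tile covering the origin starts at `-o`. -/
noncomputable def originPart (a b : ℤ) (o : ℕ) : T :=
  t.tilingSum a (-o) * (t.τ (-o) * t.tail o 0 b)

theorem tilingSum_eq_sum_originPart (ha : a ≤ 0) (hb : 0 < b) :
    t.tilingSum a b = ∑ o ∈ Finset.range (R + 1), t.originPart a b o := by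
  simp only [t.tilingSum_eq_sum ha hb, zero_sub, originPart]

theorem exists_isSeparated_originPart_of_lt (h : o' < o) (ho : o ≤ R) (a b : ℤ) :
    ∃ u : ℤ, u ≤ -o' + n ∧ mk.IsSeparated u (t.originPart a b o) (t.originPart a b o') := by
  have hn := t.lt
  obtain ⟨u, hu, hun, hustart, hmem⟩ := t.exists_empty_site_of_offset_lt h ho 0
  have hstart' : u < tailStart R o' 0 := (add_le_tailStart R o' 0).trans_lt' (by lia)
  rw [zero_sub] at hu hun hmem
  have hsep : mk.IsSeparated u (t.τ (-o) * t.tail o 0 b) (t.τ (-o') * t.tail o' 0 b) :=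
    .inl ⟨mul_mem hmem (mem_localAlgebra_compl (t.tail_mem ho 0 b) (.inl hustart)),
      (t.isMarked _ u hu hun).mul_right
        (mem_localAlgebra_compl (t.tail_mem (h.le.trans ho) 0 b) (.inl hstart'))⟩
  exact ⟨u, hun, hsep.mul_left (mem_localAlgebra_compl (t.tilingSum_mem _ _) (by lia))
    (mem_localAlgebra_compl (t.tilingSum_mem _ _) (by lia))⟩

theorem Ω_originPart_eq_zero (h : o ≠ o') (ho : o ≤ R) (ho' : o' ≤ R)
    (hx : ∀ u : ℤ, u ≤ -o + n ∨ u ≤ -o' + n → x ∈ L.localAlgebra {u}ᶜ) :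
    L.Ω (star (t.originPart a b o) * (x * t.originPart a b o')) = 0 := by
  rcases h.lt_or_gt with hlt | hgt
  · obtain ⟨u, hu, hsep⟩ := t.exists_isSeparated_originPart_of_lt hlt ho' a b
    exact hsep.symm.Ω_eq_zero (hx u (.inl hu))
  · obtain ⟨u, hu, hsep⟩ := t.exists_isSeparated_originPart_of_lt hgt ho a b
    exact hsep.Ω_eq_zero (hx u (.inr hu))

theorem Ω_originPart_self (ho : o < R) (hb : 0 < b)
    (hx : x ∈ L.localAlgebra (Set.Ico (-o : ℤ) (-o + R))) :
    L.Ω (star (t.originPart a b o) * (x * t.originPart a b o)) =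
      (t.weight (-o - a) * t.weight (b + o) : ℝ) *
        (2 * L.Ω (star (t.τ (-o)) * (x * t.τ (-o)))) := by
  have hadd := add_le_tailStart R o 0
  have htail := t.gnsNormSq_tail_of_lt ho (q := 0) (b := b) (by lia)
  rw [zero_sub] at hadd htail
  rw [originPart, Ω_star_mul_mul_of_adjacent (by lia) (t.tilingSum_mem _ _)
    (mem_localAlgebra_Ico_of_le (t.mem _) le_rfl hadd) (t.tail_mem ho.le 0 b)
    (mem_localAlgebra_Ico_of_le hx le_rfl hadd), gnsNormSq_tilingSum, htail, sub_neg_eq_add]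
  push_cast
  ring

theorem gnsNormSq_originPart (ho : o < R) (hb : 0 < b) :
    gnsNormSq L.Ω (t.originPart a b o) = t.weight (-o - a) * t.weight (b + o) := by
  have hself := t.Ω_originPart_self (a := a) ho hb (one_mem _)
  have hpos := L.isState.isPositiveFunctional
  rw [one_mul, one_mul, ← hpos.coe_gnsNormSq, ← hpos.coe_gnsNormSq, t.gnsNormSq_τ] at hself
  refine Complex.ofReal_injective (hself.trans ?_)
  push_cast
  ring

end OriginPart

section Offsets

variable {a b : ℤ} {l : ℕ} {x : T} {O : Finset ℕ}

theorem Ω_sum_originPart (hb : 0 < b) (hx : x ∈ L.localAlgebra (Set.Ico 0 l))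
    (hO : ∀ o ∈ O, n < o ∧ o < R ∧ o + l ≤ R) :
    L.Ω (star (∑ o ∈ O, t.originPart a b o) * (x * ∑ o ∈ O, t.originPart a b o)) =
      ∑ o ∈ O, (t.weight (-o - a) * t.weight (b + o) : ℝ) *
        (2 * L.Ω (star (t.τ (-o)) * (x * t.τ (-o)))) := by
  rw [apply_star_sum_mul_sum]
  · refine Finset.sum_congr rfl fun o ho => ?_
    obtain ⟨hno, hoR, hol⟩ := hO o ho
    exact t.Ω_originPart_self hoR hb (mem_localAlgebra_Ico_of_le hx (by lia) (by lia))
  · intro o ho o' ho' h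
    obtain ⟨hno, hoR, -⟩ := hO o ho
    obtain ⟨hno', hoR', -⟩ := hO o' ho'
    exact t.Ω_originPart_eq_zero h hoR.le hoR'.le fun u hu => mem_localAlgebra_compl hx (by lia)

theorem gnsNormSq_sum_originPart (hb : 0 < b) (hO : ∀ o ∈ O, o < R) :
    gnsNormSq L.Ω (∑ o ∈ O, t.originPart a b o) =
      ∑ o ∈ O, t.weight (-o - a) * t.weight (b + o) := by
  have hsum := apply_star_sum_mul_sum O L.Ω 1 (t.originPart a b) fun o ho o' ho' h =>
    t.Ω_originPart_eq_zero h (hO o ho).le (hO o' ho').le fun _ _ => one_mem _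
  simp only [one_mul, ← L.isState.isPositiveFunctional.coe_gnsNormSq] at hsum
  rw [← Finset.sum_congr rfl fun o ho => t.gnsNormSq_originPart (hO o ho) hb]
  exact_mod_cast hsum

theorem Ω_star_sum_originPart_mul_sum_eq_zero {O' : Finset ℕ} (h : Disjoint O O')
    (hO : ∀ o ∈ O, o ≤ R) (hO' : ∀ o ∈ O', o ≤ R) :
    L.Ω (star (∑ o ∈ O, t.originPart a b o) * ∑ o ∈ O', t.originPart a b o) = 0 := by
  rw [star_sum, Finset.sum_mul_sum, map_sum]
  refine Finset.sum_eq_zero fun o ho => ?_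
  rw [map_sum]
  refine Finset.sum_eq_zero fun o' ho' => ?_
  rw [← one_mul (t.originPart a b o')]
  exact t.Ω_originPart_eq_zero (h.forall_ne_finset ho ho') (hO o ho)
    (hO' o' ho') fun _ _ => one_mem _

theorem norm_Ω_tilingSum_sub_sum_le (ha : a ≤ 0) (hb : 0 < b)
    (hx : x ∈ L.localAlgebra (Set.Ico 0 l)) (hO : ∀ o ∈ O, n < o ∧ o < R ∧ o + l ≤ R) :
    ‖L.Ω (star (t.tilingSum a b) * (x * t.tilingSum a b)) -
        ∑ o ∈ O, (t.weight (-o - a) * t.weight (b + o) : ℝ) *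
          (2 * L.Ω (star (t.τ (-o)) * (x * t.τ (-o))))‖ ≤
      2 * ‖x‖ * (√(t.weight (b - a) - ∑ o ∈ O, t.weight (-o - a) * t.weight (b + o)) *
        √(t.weight (b - a))) := by
  have hOR : ∀ o ∈ O, o < R := fun o ho => (hO o ho).2.1
  set good := ∑ o ∈ O, t.originPart a b o
  set bad := ∑ o ∈ Finset.range (R + 1) \ O, t.originPart a b o
  have hsum : good + bad = t.tilingSum a b := by
    rw [t.tilingSum_eq_sum_originPart ha hb, add_comm, Finset.sum_sdiff fun o ho =>
      Finset.mem_range.mpr ((hOR o ho).trans R.lt_succ_self)]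
  have horth : L.Ω (star good * bad) = 0 :=
    t.Ω_star_sum_originPart_mul_sum_eq_zero Finset.disjoint_sdiff (fun o ho => (hOR o ho).le)
      fun o ho => Finset.mem_range_succ_iff.mp (Finset.mem_sdiff.mp ho).1
  have hbad : gnsNormSq L.Ω bad =
      t.weight (b - a) - ∑ o ∈ O, t.weight (-o - a) * t.weight (b + o) := by
    rw [← t.gnsNormSq_sum_originPart hb hOR, ← gnsNormSq_tilingSum, ← hsum,
      L.isState.isPositiveFunctional.gnsNormSq_add horth, add_sub_cancel_left]
  have hle := L.isState.isPositiveFunctional.norm_apply_star_add_mul_add_sub_le horth x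
  rwa [t.Ω_sum_originPart hb hx hO, hbad, hsum, gnsNormSq_tilingSum] at hle

end Offsets

section LimitState

open Filter Topology

variable {t} {l : ℕ} {x : T} {O : Finset ℕ}

theorem tendsto_weight_mul_weight (t : Tile mk n R) (o : ℕ) :
    Tendsto (fun p : ℤ × ℤ => t.weight (-o - p.1) * t.weight (p.2 + o)) (atBot ×ˢ atTop)
      (𝓝 (density R * density R)) :=
  (t.tendsto_weight_left (-o)).mul (t.tendsto_weight_right o)

theorem IsLimitState.tendsto_sub_sum {ψ : T →L[ℂ] ℂ} (h : t.IsLimitState ψ)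
    (hx : x ∈ L.localAlgebra Set.univ) (c : ℕ → ℂ) :
    Tendsto (fun p : ℤ × ℤ => t.vectorFunctional p.1 p.2 x -
        (∑ o ∈ O, (t.weight (-o - p.1) * t.weight (p.2 + o) : ℝ) * c o) / t.weight (p.2 - p.1))
      (atBot ×ˢ atTop) (𝓝 (ψ x - density R * ∑ o ∈ O, c o)) := by
  have hdensity : (density R : ℂ) ≠ 0 := Complex.ofReal_ne_zero.mpr (density_pos R).ne'
  have hlim : density R * ∑ o ∈ O, c o =
      (∑ o ∈ O, ((density R * density R : ℝ) : ℂ) * c o) / density R := by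
    rw [← Finset.mul_sum, Complex.ofReal_mul, mul_assoc, mul_div_cancel_left₀ _ hdensity]
  rw [hlim]
  exact (h.tendsto hx).sub ((tendsto_finsetSum O fun o _ =>
    (t.tendsto_weight_mul_weight o).ofReal.mul_const (c o)).div
      t.tendsto_weight_length.ofReal hdensity)

theorem tendsto_sqrt_weight_sub_sum_mul_div (t : Tile mk n R) (O : Finset ℕ) :
    Tendsto (fun p : ℤ × ℤ =>
        √(t.weight (p.2 - p.1) - ∑ o ∈ O, t.weight (-o - p.1) * t.weight (p.2 + o)) *
          √(t.weight (p.2 - p.1)) / t.weight (p.2 - p.1))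
      (atBot ×ˢ atTop) (𝓝 √(1 - O.card * density R)) := by
  have hdensity := density_pos R
  have hlim : √(1 - O.card * density R) =
      √(density R - ∑ _o ∈ O, density R * density R) * √(density R) / density R := by
    rw [Finset.sum_const, nsmul_eq_mul, ← mul_assoc, ← one_sub_mul, Real.sqrt_mul' _ hdensity.le,
      mul_assoc, Real.mul_self_sqrt hdensity.le, mul_div_cancel_right₀ _ hdensity.ne']
  rw [hlim]
  have hweight := t.tendsto_weight_length
  exact ((hweight.sub (tendsto_finsetSum O fun o _ => t.tendsto_weight_mul_weight o)).sqrt.mul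
    hweight.sqrt).div hweight hdensity.ne'

theorem IsLimitState.norm_sub_sum_le {ψ : T →L[ℂ] ℂ} (h : t.IsLimitState ψ)
    (hx : x ∈ L.localAlgebra (Set.Ico 0 l)) (hO : ∀ o ∈ O, n < o ∧ o < R ∧ o + l ≤ R) :
    ‖ψ x - density R * ∑ o ∈ O, 2 * L.Ω (star (t.τ (-o)) * (x * t.τ (-o)))‖ ≤
      2 * ‖x‖ * √(1 - O.card * density R) := by
  refine le_of_tendsto_of_tendsto (h.tendsto_sub_sum (L.mono (Set.subset_univ _) hx) _).norm
    ((t.tendsto_sqrt_weight_sub_sum_mul_div O).const_mul (2 * ‖x‖)) ?_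
  filter_upwards [tendsto_fst.eventually (eventually_le_atBot 0),
    tendsto_snd.eventually (eventually_gt_atTop 0), t.eventually_weight_pos] with p hp₁ hp₂ hpos
  rw [vectorFunctional_apply, ← sub_div, norm_div, Complex.norm_real, Real.norm_of_nonneg hpos.le,
    ← mul_div_assoc]
  gcongr
  exact t.norm_Ω_tilingSum_sub_sum_le hp₁ hp₂ hx hO

end LimitState

end LocalSystem.Tile

/-! ### Approximation of invariant states -/

section BlockOffsets

/-- The positions of the origin in `Marker.tile` for which the sites `0, …, l - 1` lie in one of the
`K` blocks of length `n`: the origin is the site `j` of the block that starts at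
`(k + 1) * (n + 1) + 1`. -/
def blockOffsets (n K l : ℕ) : Finset ℕ :=
  (Finset.range K ×ˢ Finset.range (n - l + 1)).image fun p => (p.1 + 1) * (n + 1) + 1 + p.2

theorem injOn_blockOffsets (n K l : ℕ) :
    Set.InjOn (fun p : ℕ × ℕ => (p.1 + 1) * (n + 1) + 1 + p.2)
      (Finset.range K ×ˢ Finset.range (n - l + 1) : Finset (ℕ × ℕ)) := by
  have hlt {k k' : ℕ} (h : k < k') : (k + 1) * (n + 1) + (n + 1) ≤ (k' + 1) * (n + 1) := by
    rw [← add_one_mul]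
    exact Nat.mul_le_mul_right _ (by lia)
  rintro ⟨k, j⟩ hkj ⟨k', j'⟩ hkj' heq
  simp only [Finset.coe_product, Set.mem_prod, Finset.mem_coe, Finset.mem_range] at hkj hkj' heq
  obtain rfl : k = k' := by
    by_contra hne
    rcases lt_or_gt_of_ne hne with h | h <;> have := hlt h <;> lia
  exact Prod.ext rfl (by lia)

theorem card_blockOffsets (n K l : ℕ) : (blockOffsets n K l).card = K * (n - l + 1) := by
  rw [blockOffsets, Finset.card_image_of_injOn (injOn_blockOffsets n K l), Finset.card_product,
    Finset.card_range, Finset.card_range]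

theorem sum_blockOffsets {E : Type*} [AddCommMonoid E] (n K l : ℕ) (f : ℕ → E) :
    ∑ o ∈ blockOffsets n K l, f o =
      ∑ j ∈ Finset.range (n - l + 1), ∑ k ∈ Finset.range K, f ((k + 1) * (n + 1) + 1 + j) := by
  rw [blockOffsets, Finset.sum_image (injOn_blockOffsets n K l), Finset.sum_product_right]

theorem bounds_of_mem_blockOffsets {n K l o : ℕ} (hl : l ≤ n) (ho : o ∈ blockOffsets n K l) :
    n < o ∧ o < (K + 1) * (n + 1) + 1 ∧ o + l ≤ (K + 1) * (n + 1) + 1 := by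
  simp only [blockOffsets, Finset.mem_image, Finset.mem_product, Finset.mem_range,
    Prod.exists] at ho
  obtain ⟨k, j, ⟨hk, hj⟩, rfl⟩ := ho
  have hlast : (k + 1) * (n + 1) ≤ K * (n + 1) := Nat.mul_le_mul_right _ hk
  rw [add_one_mul K]
  lia

end BlockOffsets

section Estimates

open Filter Topology

theorem norm_sum_sub_card_mul_le {K m : ℕ} {f : ℕ → ℂ} {w : ℂ} {ε : ℝ}
    (h : ∀ j < m, ‖f j - K * w‖ ≤ K * ε) :
    ‖∑ j ∈ Finset.range m, f j - (K * m : ℕ) * w‖ ≤ (K * m : ℕ) * ε := by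
  calc ‖∑ j ∈ Finset.range m, f j - (K * m : ℕ) * w‖
      = ‖∑ j ∈ Finset.range m, (f j - K * w)‖ := by
        rw [Finset.sum_sub_distrib, Finset.sum_const, Finset.card_range, nsmul_eq_mul]
        push_cast
        ring_nf
    _ ≤ ∑ _j ∈ Finset.range m, K * ε :=
        norm_sum_le_of_le _ fun j hj => h j (Finset.mem_range.mp hj)
    _ = (K * m : ℕ) * ε := by
        rw [Finset.sum_const, Finset.card_range, nsmul_eq_mul]
        push_cast
        ring

theorem norm_sub_le_of_norm_sub_mul_le {z w S : ℂ} {N d C ε : ℝ} (hN : 0 ≤ N) (hd : 0 ≤ d)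
    (hNd : 0 ≤ 1 - N * d) (hε : 0 ≤ ε) (hz : ‖z - d * S‖ ≤ 2 * C * √(1 - N * d))
    (hS : ‖S - N * w‖ ≤ N * ε) (hw : ‖w‖ ≤ C) : ‖z - w‖ ≤ 3 * C * √(1 - N * d) + ε := by
  set β := 1 - N * d with hβ
  have hβ1 : β ≤ 1 := sub_le_self _ (mul_nonneg hN hd)
  have hmean : ‖(d : ℂ) * (S - N * w)‖ ≤ ε := by
    rw [norm_mul, Complex.norm_real, Real.norm_of_nonneg hd]
    calc d * ‖S - N * w‖ ≤ d * (N * ε) := by gcongr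
      _ = (1 - β) * ε := by rw [hβ]; ring
      _ ≤ ε := mul_le_of_le_one_left hε (sub_le_self _ hNd)
  have hrest : ‖(β : ℂ) * w‖ ≤ C * √β := by
    rw [norm_mul, Complex.norm_real, Real.norm_of_nonneg hNd, mul_comm]
    have hβs : β ≤ √β := Real.le_sqrt_of_sq_le (by nlinarith)
    gcongr
    exact (norm_nonneg w).trans hw
  calc ‖z - w‖ = ‖(z - d * S) + d * (S - N * w) - β * w‖ := by
        rw [hβ]
        push_cast
        ring_nf
    _ ≤ ‖z - d * S‖ + ‖(d : ℂ) * (S - N * w)‖ + ‖(β : ℂ) * w‖ :=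
        (norm_sub_le _ _).trans (by gcongr; exact norm_add_le _ _)
    _ ≤ 2 * C * √β + ε + C * √β := by gcongr
    _ = 3 * C * √β + ε := by ring

theorem exists_forall_mul_sqrt_le {ι : Type*} [Finite ι] (C : ι → ℝ) (l : ℕ) {ε : ℝ}
    (hε : 0 < ε) : ∃ n : ℕ, l ≤ n ∧ ∃ K₀ : ℕ, ∀ K ≥ K₀, ∀ i,
      C i * √(3 / (K : ℝ) + (l : ℝ) / (n + 1)) ≤ ε := by
  have hlim (i : ι) : Tendsto (fun p : ℕ × ℕ => C i * √(3 / (p.2 : ℝ) + (l : ℝ) / (p.1 + 1)))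
      atTop (𝓝 0) := by
    have hl : Tendsto (fun n : ℕ => (l : ℝ) / (n + 1)) atTop (𝓝 0) :=
      tendsto_const_nhds.div_atTop (tendsto_natCast_atTop_atTop.atTop_add tendsto_const_nhds)
    rw [← prod_atTop_atTop_eq]
    simpa using (((tendsto_const_div_atTop_nhds_zero_nat 3).comp tendsto_snd).add
      (hl.comp tendsto_fst)).sqrt.const_mul (C i)
  obtain ⟨⟨n, K₀⟩, hnK⟩ := eventually_atTop.mp
    (eventually_all.mpr fun i => (hlim i).eventually_le_const hε)
  exact ⟨max n l, le_max_right _ _, K₀, fun K hK => hnK (max n l, K) ⟨le_max_left _ _, hK⟩⟩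

end Estimates

namespace LocalSystem

variable {T : Type*} [CStarAlgebra T] {L : LocalSystem T} {mk : L.Marker} {n K l : ℕ}

theorem one_sub_card_blockOffsets_mul_density_eq (hl : l ≤ n) :
    1 - (blockOffsets n K l).card * Tile.density ((K + 1) * (n + 1) + 1) =
      (K * l + (n + 1) + 3 / 2) / ((K + 1) * (n + 1) + 1 + 1 / 2) := by
  rw [card_blockOffsets, Tile.density]
  push_cast [Nat.cast_sub hl]
  field_simp
  ring

theorem one_sub_card_blockOffsets_mul_density_nonneg (hl : l ≤ n) :
    0 ≤ 1 - (blockOffsets n K l).card * Tile.density ((K + 1) * (n + 1) + 1) := by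
  rw [one_sub_card_blockOffsets_mul_density_eq hl]
  positivity

theorem one_sub_card_blockOffsets_mul_density_le (hl : l ≤ n) (hK : 0 < K) :
    1 - (blockOffsets n K l).card * Tile.density ((K + 1) * (n + 1) + 1) ≤
      3 / K + l / (n + 1) := by
  have hK' : (0 : ℝ) < K := Nat.cast_pos.mpr hK
  have hKl : (0 : ℝ) ≤ K * l := by positivity
  calc 1 - (blockOffsets n K l).card * Tile.density ((K + 1) * (n + 1) + 1)
      = (K * l + (n + 1) + 3 / 2) / (((K : ℝ) + 1) * (n + 1) + 1 + 1 / 2) :=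
        one_sub_card_blockOffsets_mul_density_eq hl
    _ ≤ (3 * (n + 1) + K * l) / (K * (n + 1)) :=
        div_le_div₀ (by positivity) (by linarith [hKl]) (mul_pos hK' (by positivity)) (by linarith)
    _ = 3 / K + l / (n + 1) := by
        field_simp

theorem Tile.two_mul_Ω_τ {R j : ℕ} (t : Tile mk n R) {i : ℤ} (hj : j + l ≤ n) {x y z : T}
    (hx : x ∈ L.localAlgebra (Set.Ico 0 l)) (hy : y ∈ L.localAlgebra (Set.Ico 0 n))
    (hy1 : gnsNormSq L.Ω y = 1) (hz : z ∈ L.localAlgebra (Set.Ico (-j : ℤ) (-j + n))ᶜ)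
    (hτ : t.τ i = L.translate (-j) y * z) :
    2 * L.Ω (star (t.τ i) * (x * t.τ i)) = L.Ω (star y * (L.translate j x * y)) := by
  set y' := L.translate (-j) y with hy'_def
  have hy' : y' ∈ L.localAlgebra (Set.Ico (-j : ℤ) (-j + n)) := by
    refine L.translate_mem _ (fun i hi => ?_) hy
    rw [Set.mem_Ico] at hi ⊢
    lia
  have hyxy : star y' * (x * y') ∈ L.localAlgebra (Set.Ico (-j : ℤ) (-j + n)) :=
    mul_mem (star_mem hy') (mul_mem (mem_localAlgebra_Ico_of_le hx (by lia) (by lia)) hy')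
  have hz_norm : gnsNormSq L.Ω z = 1 / 2 := by
    have := t.gnsNormSq_τ i
    rwa [hτ, gnsNormSq_mul disjoint_compl_right hy' hz, gnsNormSq_translate, hy1, one_mul] at this
  have hfactor : star (y' * z) * (x * (y' * z)) = star y' * (x * y') * (star z * z) := by
    calc _ = star z * (star y' * (x * y')) * z := by simp only [star_mul, mul_assoc]
      _ = _ := by
        rw [L.commute disjoint_compl_left (star_mem hz) hyxy]
        simp only [mul_assoc]
  have htranslate : L.translate j (star y' * (x * y')) = star y * (L.translate j x * y) := by
    rw [map_mul, map_mul, map_star, hy'_def, ← L.translate_add, add_neg_cancel, L.translate_zero]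
  rw [hτ, hfactor, L.Ω_mul disjoint_compl_right hyxy (mul_mem (star_mem hz) hz),
    ← L.isState.isPositiveFunctional.coe_gnsNormSq z, hz_norm, ← htranslate, L.Ω_translate]
  push_cast
  ring

section LimitState

variable {ξ : ℕ → T} {hξ : ∀ k, ξ k ∈ L.localAlgebra (Set.Ico 0 n)}
  {hξ1 : ∀ k, gnsNormSq L.Ω (ξ k) = 1} {x : T}

theorem Marker.sum_blockOffsets_Ω_tile (hl : l ≤ n) (hx : x ∈ L.localAlgebra (Set.Ico 0 l)) :
    ∑ o ∈ blockOffsets n K l, 2 * L.Ω (star ((mk.tile K hξ hξ1).τ (-o)) *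
        (x * (mk.tile K hξ hξ1).τ (-o))) =
      ∑ j ∈ Finset.range (n - l + 1), ∑ k ∈ Finset.range K,
        L.Ω (star (ξ k) * (L.translate j x * ξ k)) := by
  rw [sum_blockOffsets n K l fun o : ℕ => 2 * L.Ω (star ((mk.tile K hξ hξ1).τ (-o)) *
    (x * (mk.tile K hξ hξ1).τ (-o)))]
  refine Finset.sum_congr rfl fun j hj => Finset.sum_congr rfl fun k hk => ?_
  rw [Finset.mem_range] at hj hk
  obtain ⟨z, hz, hτ⟩ :=
    mk.exists_tile_eq_mul K hξ hξ1 hk (-(((k + 1) * (n + 1) + 1 + j : ℕ) : ℤ))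
  have hstart : -(((k + 1) * (n + 1) + 1 + j : ℕ) : ℤ) + ((k + 1) * (n + 1) + 1) = -j := by
    push_cast
    ring
  rw [hstart] at hz hτ
  exact Tile.two_mul_Ω_τ _ (by lia) hx (hξ k) (hξ1 k) hz hτ

theorem Tile.IsLimitState.norm_sub_le {φ ψ : T →L[ℂ] ℂ} (h : (mk.tile K hξ hξ1).IsLimitState ψ)
    (hφ : IsState φ) (hx : x ∈ L.localAlgebra (Set.Ico 0 l)) (hl : l ≤ n) (hK : 0 < K) {ε : ℝ}
    (hε : 0 ≤ ε) (hmean : ∀ j < n - l + 1, ‖∑ k ∈ Finset.range K,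
      L.Ω (star (ξ k) * (L.translate j x * ξ k)) - K * φ x‖ ≤ K * ε) :
    ‖ψ x - φ x‖ ≤ 3 * ‖x‖ * √(3 / K + l / (n + 1)) + ε := by
  have hψ := h.norm_sub_sum_le hx fun o ho => bounds_of_mem_blockOffsets (K := K) hl ho
  rw [Marker.sum_blockOffsets_Ω_tile hl hx] at hψ
  have hsum := norm_sum_sub_card_mul_le hmean
  rw [← card_blockOffsets] at hsum
  refine (norm_sub_le_of_norm_sub_mul_le (Nat.cast_nonneg _) (Tile.density_pos _).le
    (one_sub_card_blockOffsets_mul_density_nonneg hl) hε hψ (by exact_mod_cast hsum)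
    (hφ.norm_apply_le x)).trans ?_
  gcongr
  exact one_sub_card_blockOffsets_mul_density_le hl hK

end LimitState

theorem exists_isPureState_near_of_mem_localAlgebra (mk : L.Marker) {φ : T →L[ℂ] ℂ}
    (hφ : IsState φ) (hinv : ∀ (c : ℤ) x, φ (L.translate c x) = φ x) {ι : Type*} [Finite ι]
    {x : ι → T} (hx : ∀ i, x i ∈ L.localAlgebra (Set.Ico 0 l)) {ε : ℝ} (hε : 0 < ε) :
    ∃ ψ : T →L[ℂ] ℂ, IsPureState ψ ∧ (∀ (c : ℤ) y, ψ (L.translate c y) = ψ y) ∧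
      ∀ i, ‖ψ (x i) - φ (x i)‖ ≤ ε := by
  obtain ⟨n, hln, K₀, hnK⟩ := exists_forall_mul_sqrt_le (fun i => 3 * ‖x i‖) l (half_pos hε)
  have htranslate (p : ι × Fin (n - l + 1)) : L.translate (p.2 : ℕ) (x p.1) ∈
      L.localAlgebra ((Finset.Ico (0 : ℤ) n : Finset ℤ) : Set ℤ) := by
    have hj := p.2.is_le
    refine L.translate_mem _ (fun i hi => ?_) (hx p.1)
    rw [Finset.coe_Ico, Set.mem_Ico]
    rw [Set.mem_Ico] at hi
    lia
  obtain ⟨K, hK₀, hK, ξ, hξ, hmean⟩ := L.exists_average htranslate hφ (half_pos hε) K₀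
  simp only [hinv] at hmean
  obtain ⟨ψ, hψ⟩ := (mk.tile K (n := n) (fun k => by simpa using (hξ k).1)
    fun k => (hξ k).2).exists_isLimitState
  refine ⟨ψ, hψ.isPureState, hψ.apply_translate, fun i => ?_⟩
  have hle := hψ.norm_sub_le hφ (hx i) hln hK (half_pos hε).le
    fun j hj => hmean (i, ⟨j, hj⟩)
  linarith [hnK K hK₀ i]

theorem apply_translate_of_apply_translate_one {φ : T →L[ℂ] ℂ}
    (h : ∀ x, φ (L.translate 1 x) = φ x) (c : ℤ) (x : T) : φ (L.translate c x) = φ x := by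
  induction c using Int.induction_on generalizing x with
  | zero => rw [L.translate_zero]
  | succ c ih => rw [L.translate_add, ih, h]
  | pred c ih =>
    rw [sub_eq_add_neg, L.translate_add, ih, ← h, ← L.translate_add, add_neg_cancel,
      L.translate_zero]

theorem exists_isPureState_near_of_finset (mk : L.Marker) {φ : T →L[ℂ] ℂ} (hφ : IsState φ)
    (hinv : ∀ (c : ℤ) x, φ (L.translate c x) = φ x) (F : Finset T) {ε : ℝ} (hε : 0 < ε) :
    ∃ ψ : T →L[ℂ] ℂ, IsPureState ψ ∧ (∀ (c : ℤ) y, ψ (L.translate c y) = ψ y) ∧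
      ∀ x ∈ F, ‖ψ x - φ x‖ ≤ ε := by
  have hε3 : 0 < ε / 3 := by positivity
  choose y hy hxy using fun x : T => L.dense.exists_dist_lt x hε3
  choose N hN using fun x => L.exists_mem_Ico (hy x)
  set B : ℕ := F.sup N
  have hmem (x : F) : L.translate B (y x) ∈ L.localAlgebra (Set.Ico 0 (2 * B : ℕ)) := by
    have hNB : N x ≤ B := Finset.le_sup x.2
    refine L.translate_mem _ (fun i hi => ?_) (hN x)
    rw [Set.mem_Ico] at hi ⊢
    lia
  obtain ⟨ψ, hψ, hψinv, hle⟩ := exists_isPureState_near_of_mem_localAlgebra mk hφ hinv hmem hε3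
  refine ⟨ψ, hψ, hψinv, fun x hx => ?_⟩
  have hnear {ρ : T →L[ℂ] ℂ} (hρ : IsState ρ) : ‖ρ x - ρ (y x)‖ ≤ ε / 3 := by
    rw [← map_sub]
    exact (hρ.norm_apply_le _).trans (dist_eq_norm x (y x) ▸ (hxy x).le)
  have hy_near : ‖ψ (y x) - φ (y x)‖ ≤ ε / 3 := by
    simpa only [hinv, hψinv] using hle ⟨x, hx⟩
  calc ‖ψ x - φ x‖ = ‖(ψ x - ψ (y x)) + (ψ (y x) - φ (y x)) - (φ x - φ (y x))‖ := by
        ring_nf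
    _ ≤ ‖ψ x - ψ (y x)‖ + ‖ψ (y x) - φ (y x)‖ + ‖φ x - φ (y x)‖ :=
        (norm_sub_le _ _).trans (by gcongr; exact norm_add_le _ _)
    _ ≤ ε / 3 + ε / 3 + ε / 3 := by
        gcongr
        exacts [hnear hψ.1, hnear hφ]
    _ = ε := by ring

end LocalSystem

section Density

open Filter Topology

theorem mem_closure_of_forall_finset {X E : Type*} [SeminormedAddCommGroup E] {P : Set (X → E)}
    {f : X → E}
    (h : ∀ (F : Finset X) (ε : ℝ), 0 < ε → ∃ g ∈ P, ∀ x ∈ F, ‖g x - f x‖ ≤ ε) :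
    f ∈ closure P := by
  rw [mem_closure_iff_nhds]
  intro U hU
  rw [nhds_pi, mem_pi'] at hU
  obtain ⟨F, V, hV, hsub⟩ := hU
  have hball : ∀ᶠ ε in 𝓝 (0 : ℝ), ∀ x ∈ F, Metric.closedBall (f x) ε ⊆ V x :=
    (eventually_all_finset F).mpr fun x _ => eventually_closedBall_subset (hV x)
  obtain ⟨ε, hεV, hε⟩ := ((hball.filter_mono nhdsWithin_le_nhds).and
    (self_mem_nhdsWithin (s := Set.Ioi 0))).exists
  obtain ⟨g, hg, hgF⟩ := h F ε hε
  exact ⟨g, hsub fun x hx => hεV x hx (mem_closedBall_iff_norm.mpr (hgF x hx)), hg⟩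

end Density

/-- **Proposition 4.2**: for the shift automorphism on the two-sided infinite (minimal) tensor
product of a unital prime AF-algebra, the invariant pure states are weak*-dense in the
invariant states. -/
theorem shift_invariant_pure_states_dense_of_prime_AF
    {A : Type*} [CStarAlgebra A] (hprime : IsPrimeCStar A) (hAF : IsAF A)
    {T : Type*} [CStarAlgebra T] (M : ShiftTensorModel A T) :
    {f : T → ℂ | ∃ φ : T →L[ℂ] ℂ, IsState φ ∧ (∀ x, φ (M.shift x) = φ x) ∧ f = ⇑φ} ⊆
      closure {f : T → ℂ | ∃ φ : T →L[ℂ] ℂ, IsPureState φ ∧ (∀ x, φ (M.shift x) = φ x) ∧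
        f = ⇑φ} := by
  rintro _ ⟨φ, hφ, hinv, rfl⟩
  have hT : Nontrivial T := hφ.nontrivial
  have hA : Nontrivial A := (M.e 0 : A →+* T).domain_nontrivial
  obtain ⟨E⟩ := exists_excisedState hprime hAF
  by_cases h : ∀ v ∈ E.D, E.ω v = 0 → gnsNormSq E.ω v ≠ 1
  · exact subset_closure ⟨φ, isPureState_of_trivial M h hφ, hinv, rfl⟩
  · push Not at h
    obtain ⟨v, hv, hv0, hv1⟩ := h
    obtain ⟨Ω, hΩ⟩ := M.exists_isProductState fun _ => E.isState
    refine mem_closure_of_forall_finset fun F ε hε => ?_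
    obtain ⟨ψ, hψ, hψinv, hle⟩ := LocalSystem.exists_isPureState_near_of_finset
      (M.marker hΩ hv hv0 hv1) hφ (LocalSystem.apply_translate_of_apply_translate_one
        fun x => (congrArg φ (M.translate_one x)).trans (hinv x)) F hε
    exact ⟨ψ, ⟨ψ, hψ, fun x => (congrArg ψ (M.translate_one x)).symm.trans (hψinv 1 x), rfl⟩, hle⟩
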